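/- Let μ ∈ (0,1] and let 2 < q ≤ ∞ and 2 ≤ r ≤ ∞ satisfy 2/q = 2(1/2 − 1/r). There is a constant C = C(q,r), independent of μ and λ, such that for every λ > 0 and every Schwartz function f on ℝ², (∫_ℝ ‖S_{μ,2}(t) P_λ f‖_{L^r(ℝ²)}^q dt)^{1/q} ≤ C ( μ^{-1/2} ⟨√μ λ⟩^{3/2} )^{1/2 − 1/r} ‖P_λ f‖_{L^2(ℝ²)} (with the usual modification of the time norm when q = ∞). -/

import Mathlib

noncomputable section

open MeasureTheory SchwartzMap
open scoped FourierTransform ENNReal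

/-- The plane `ℝ²` as a Euclidean space. -/
abbrev E2 := EuclideanSpace ℝ (Fin 2)

/-- The Japanese bracket `⟨x⟩ = (1 + x²)^{1/2}`. -/
def jap (x : ℝ) : ℝ := (1 + x ^ 2) ^ ((1 : ℝ) / 2)

/-- The symbol `m₂(ξ) = |ξ| (tanh|ξ|/|ξ|)^{1/2}`, with `m₂(0) = 0`. -/
def m2 (ξ : E2) : ℝ :=
  if ‖ξ‖ = 0 then 0 else ‖ξ‖ * Real.sqrt (Real.tanh ‖ξ‖ / ‖ξ‖)

/-- The propagator `S_{μ,2}(t) f = (e^{i(t/√μ) m₂(√μ ξ)} f̂(ξ))^∨`. -/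
def prop2 (μ t : ℝ) (f : E2 → ℂ) : E2 → ℂ :=
  𝓕⁻ (fun ξ : E2 =>
    Complex.exp (Complex.I * ((t / Real.sqrt μ) * m2 (Real.sqrt μ • ξ) : ℝ)) * 𝓕 f ξ)

/-- Littlewood–Paley projection `P_λ` on `ℝ²`, `(P_λ f)^(ξ) = β(|ξ|/λ) f̂(ξ)`,
`β(s)=χ(s)-χ(2s)`. -/
def proj2 (χ : ℝ → ℝ) (lam : ℝ) (f : E2 → ℂ) : E2 → ℂ :=
  𝓕⁻ (fun ξ : E2 => ((χ (‖ξ‖ / lam) - χ (2 * ‖ξ‖ / lam) : ℝ) : ℂ) * 𝓕 f ξ)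

/-- The `L^q(ℝ)`-norm in time of an `ℝ≥0∞`-valued quantity, with the usual modification
(essential supremum) when `q = ∞`. -/
def timeNorm (q : ℝ≥0∞) (g : ℝ → ℝ≥0∞) : ℝ≥0∞ :=
  if q = ∞ then essSup g volume
  else (∫⁻ t : ℝ, g t ^ q.toReal) ^ (1 / q.toReal)

/-!
Localised to frequencies `λ/2 ≤ |ξ| ≤ 2λ`, the propagator has the kernel
`∫ e^{i(2π x·ξ + τ φ(ξ))} dξ` with radial phase `φ(ξ) = m₂(√μ ξ)/√μ`. In polar coordinates its
angular integral is the Bessel function `J₀(2π|x||ξ|)`, and van der Corput estimates for the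
remaining radial integral, based on the sizes of the first two derivatives of
`s ↦ (s tanh s)^{1/2}`, give the dispersive bound `|kernel| ≲ μ^{-1/2} ⟨√μ λ⟩^{3/2} / |τ|`.
Interpolation with conservation of the `L²` norm turns it into an `L^{r'} → L^r` bound with decay
`|τ|^{-2/q}`, so the operator `T T^*` of the localised evolution `T` is controlled by the
Hardy–Littlewood–Sobolev inequality in time. This bounds `T^*` from the dual mixed norm to `L²`,
and testing against truncated dual functions gives the bound for `T`.
-/

/-! ### Van der Corput estimates -/

section VanDerCorput

open Set

variable {φ φ' φ'' : ℝ → ℝ} {a b : ℝ}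

lemma norm_intervalIntegral_mul_le {𝕜 : Type*} [NormedRing 𝕜] [NormedAlgebra ℝ 𝕜] [CompleteSpace 𝕜]
    {g A A' : ℝ → 𝕜} {K M M' : ℝ} (hab : a ≤ b) (hg : ContinuousOn g (Icc a b))
    (hK : ∀ x ∈ Icc a b, ‖∫ t in a..x, g t‖ ≤ K)
    (hA : ∀ x ∈ Icc a b, HasDerivAt A (A' x) x) (hA' : ContinuousOn A' (Icc a b))
    (hM : ‖A b‖ ≤ M) (hM' : ∀ x ∈ Icc a b, ‖A' x‖ ≤ M') :
    ‖∫ x in a..b, g x * A x‖ ≤ K * (M + M' * (b - a)) := by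
  rw [← uIcc_of_le hab] at hg hA'
  have hK₀ : 0 ≤ K := (norm_nonneg _).trans (hK a (left_mem_Icc.2 hab))
  have hgi : IntervalIntegrable g volume a b := hg.intervalIntegrable
  set G : ℝ → 𝕜 := fun x => ∫ t in a..x, g t
  have hGc : ContinuousOn G (uIcc a b) :=
    intervalIntegral.continuousOn_primitive_interval' hgi left_mem_uIcc
  have hGd : ∀ x ∈ Ioo (min a b) (max a b), HasDerivAt G (g x) x := fun x hx => by
    have hmem : uIcc a b ∈ nhds x := Icc_mem_nhds hx.1 hx.2
    exact intervalIntegral.integral_hasDerivAt_right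
      (hgi.mono_set (uIcc_subset_uIcc_left (mem_of_mem_nhds hmem)))
      (hg.stronglyMeasurableAtFilter_nhdsWithin measurableSet_uIcc x |>.filter_mono
        (nhdsWithin_eq_nhds.2 hmem).ge) (hg.continuousAt hmem)
  have hparts := intervalIntegral.integral_deriv_mul_eq_sub_of_hasDerivAt hGc
    (fun x hx => (hA x (uIcc_of_le hab ▸ hx)).continuousAt.continuousWithinAt) hGd
    (fun x hx => hA x (uIcc_of_le hab ▸ Ioo_subset_Icc_self hx)) hgi hA'.intervalIntegrable
  have hAc : ContinuousOn A (uIcc a b) := fun x hx =>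
    (hA x (uIcc_of_le hab ▸ hx)).continuousAt.continuousWithinAt
  rw [intervalIntegral.integral_add (hg.fun_mul hAc).intervalIntegrable
    (hGc.fun_mul hA').intervalIntegrable, show G a = 0 from intervalIntegral.integral_same,
    zero_mul, sub_zero] at hparts
  rw [eq_sub_of_add_eq hparts]
  have hrem : ‖∫ x in a..b, G x * A' x‖ ≤ K * M' * |b - a| :=
    intervalIntegral.norm_integral_le_of_norm_le_const fun x hx => by
      have hx' : x ∈ Icc a b := Ioc_subset_Icc_self (uIoc_of_le hab ▸ hx)
      exact (norm_mul_le _ _).trans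
        (mul_le_mul (hK x hx') (hM' x hx') (norm_nonneg _) hK₀)
  rw [abs_of_nonneg (sub_nonneg.2 hab)] at hrem
  calc ‖G b * A b - ∫ x in a..b, G x * A' x‖
      ≤ ‖G b * A b‖ + ‖∫ x in a..b, G x * A' x‖ := norm_sub_le _ _
    _ ≤ K * M + K * M' * (b - a) := add_le_add ((norm_mul_le _ _).trans
        (mul_le_mul (hK b (right_mem_Icc.2 hab)) hM (norm_nonneg _) hK₀)) hrem
    _ = K * (M + M' * (b - a)) := by ring

lemma norm_intervalIntegral_cexp_neg (φ : ℝ → ℝ) (a b : ℝ) :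
    ‖∫ x in a..b, Complex.exp ((-φ x : ℝ) * Complex.I)‖ =
      ‖∫ x in a..b, Complex.exp (φ x * Complex.I)‖ := by
  rw [← RCLike.norm_conj, ← intervalIntegral.intervalIntegral_conj]
  simp [← Complex.exp_conj]

lemma hasDerivAt_cexp_mul_inv_deriv {φ₂ x : ℝ} (hφ : HasDerivAt φ (φ' x) x)
    (hφ' : HasDerivAt φ' φ₂ x) (hne : φ' x ≠ 0) :
    HasDerivAt (fun y => Complex.exp (φ y * Complex.I) * (((φ' y)⁻¹ : ℝ) * -Complex.I))
      (Complex.exp (φ x * Complex.I) +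
        Complex.exp (φ x * Complex.I) * ((-φ₂ / φ' x ^ 2 : ℝ) * -Complex.I)) x := by
  refine ((hφ.ofReal_comp.mul_const Complex.I).cexp.mul
    ((hφ'.fun_inv hne).ofReal_comp.mul_const (-Complex.I))).congr_deriv ?_
  have hcancel : (φ' x : ℂ) * (φ' x : ℂ)⁻¹ = 1 := mul_inv_cancel₀ (mod_cast hne)
  push_cast
  linear_combination Complex.exp (φ x * Complex.I) * hcancel -
    Complex.exp (φ x * Complex.I) * φ' x * (φ' x : ℂ)⁻¹ * Complex.I_sq

lemma norm_intervalIntegral_cexp_mul_deriv_inv_le (hab : a ≤ b)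
    (hφ' : ∀ x ∈ Icc a b, HasDerivAt φ' (φ'' x) x) (hcont : ContinuousOn φ'' (Icc a b))
    (hnonneg : ∀ x ∈ Icc a b, 0 ≤ φ'' x) (hne : ∀ x ∈ Icc a b, φ' x ≠ 0) :
    ‖∫ x in a..b, Complex.exp (φ x * Complex.I) * ((-φ'' x / φ' x ^ 2 : ℝ) * -Complex.I)‖ ≤
      (φ' a)⁻¹ - (φ' b)⁻¹ := by
  have hφ'c : ContinuousOn φ' (Icc a b) := HasDerivAt.continuousOn hφ'
  have hderiv : ∀ x ∈ uIcc a b, HasDerivAt (fun y => (φ' y)⁻¹) (-φ'' x / φ' x ^ 2) x := by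
    rw [uIcc_of_le hab]
    exact fun x hx => (hφ' x hx).fun_inv (hne x hx)
  have hint : IntervalIntegrable (fun x => -φ'' x / φ' x ^ 2) volume a b :=
    ContinuousOn.intervalIntegrable_of_Icc hab
      (hcont.neg.div (hφ'c.pow 2) fun x hx => pow_ne_zero 2 (hne x hx))
  calc _ ≤ ∫ x in a..b, -(-φ'' x / φ' x ^ 2) :=
        intervalIntegral.norm_integral_le_of_norm_le hab
          (Filter.Eventually.of_forall fun x hx => by
            rw [norm_mul, Complex.norm_exp_ofReal_mul_I, one_mul, norm_mul, norm_neg,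
              Complex.norm_I, mul_one, Complex.norm_real, Real.norm_eq_abs, abs_of_nonpos]
            exact div_nonpos_of_nonpos_of_nonneg
              (neg_nonpos.2 (hnonneg x (Ioc_subset_Icc_self hx))) (sq_nonneg _))
          hint.neg
    _ = (φ' a)⁻¹ - (φ' b)⁻¹ := by
        rw [intervalIntegral.integral_neg,
          intervalIntegral.integral_eq_sub_of_hasDerivAt hderiv hint, neg_sub]

lemma norm_intervalIntegral_cexp_le_of_deriv_nonneg {κ : ℝ} (hab : a ≤ b) (hκ : 0 < κ)
    (hφ : ∀ x ∈ Icc a b, HasDerivAt φ (φ' x) x) (hφ' : ∀ x ∈ Icc a b, HasDerivAt φ' (φ'' x) x)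
    (hcont : ContinuousOn φ'' (Icc a b)) (hnonneg : ∀ x ∈ Icc a b, 0 ≤ φ'' x)
    (hlow : ∀ x ∈ Icc a b, κ ≤ |φ' x|) :
    ‖∫ x in a..b, Complex.exp (φ x * Complex.I)‖ ≤ 4 / κ := by
  have hφc : ContinuousOn φ (Icc a b) := HasDerivAt.continuousOn hφ
  have hφ'c : ContinuousOn φ' (Icc a b) := HasDerivAt.continuousOn hφ'
  have hne : ∀ x ∈ Icc a b, φ' x ≠ 0 := fun x hx => abs_pos.1 (hκ.trans_le (hlow x hx))
  have hinv : ∀ x ∈ Icc a b, |(φ' x)⁻¹| ≤ κ⁻¹ := fun x hx => by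
    rw [abs_inv]; exact inv_anti₀ hκ (hlow x hx)
  set e : ℝ → ℂ := fun x => Complex.exp (φ x * Complex.I)
  have hec : ContinuousOn e (Icc a b) := by fun_prop
  have hderiv : ∀ x ∈ Icc a b, HasDerivAt (fun y => e y * (((φ' y)⁻¹ : ℝ) * -Complex.I))
      (e x + e x * ((-φ'' x / φ' x ^ 2 : ℝ) * -Complex.I)) x := fun x hx =>
    hasDerivAt_cexp_mul_inv_deriv (hφ x hx) (hφ' x hx) (hne x hx)
  have hrem_cont : ContinuousOn (fun x => e x * ((-φ'' x / φ' x ^ 2 : ℝ) * -Complex.I)) (Icc a b) :=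
    hec.mul ((Complex.continuous_ofReal.comp_continuousOn
      (hcont.neg.div (hφ'c.pow 2) fun x hx => pow_ne_zero 2 (hne x hx))).mul continuousOn_const)
  rw [← uIcc_of_le hab] at hderiv hrem_cont hec
  have hparts := intervalIntegral.integral_eq_sub_of_hasDerivAt hderiv
    (hec.add hrem_cont).intervalIntegrable
  rw [intervalIntegral.integral_add hec.intervalIntegrable hrem_cont.intervalIntegrable] at hparts
  have hend : ∀ x ∈ Icc a b, ‖e x * (((φ' x)⁻¹ : ℝ) * -Complex.I)‖ ≤ κ⁻¹ := fun x hx => by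
    simpa [e, Complex.norm_exp_ofReal_mul_I] using hinv x hx
  have ha := left_mem_Icc.2 hab
  have hb := right_mem_Icc.2 hab
  rw [eq_sub_of_add_eq hparts, div_eq_mul_inv]
  linarith [norm_sub_le (e b * (((φ' b)⁻¹ : ℝ) * -Complex.I) - e a * (((φ' a)⁻¹ : ℝ) * -Complex.I))
      (∫ x in a..b, e x * ((-φ'' x / φ' x ^ 2 : ℝ) * -Complex.I)),
    norm_sub_le (e b * (((φ' b)⁻¹ : ℝ) * -Complex.I)) (e a * (((φ' a)⁻¹ : ℝ) * -Complex.I)),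
    norm_intervalIntegral_cexp_mul_deriv_inv_le (φ := φ) hab hφ' hcont hnonneg hne,
    hend a ha, hend b hb, le_abs_self (φ' a)⁻¹, neg_abs_le (φ' b)⁻¹, hinv a ha, hinv b hb]

lemma exists_mul_abs_sub_le_two_mul_abs {f f' : ℝ → ℝ} {ρ : ℝ} (hab : a ≤ b)
    (hf : ∀ x ∈ Icc a b, HasDerivAt f (f' x) x) (hlow : ∀ x ∈ Icc a b, ρ ≤ f' x) :
    ∃ c ∈ Icc a b, ∀ x ∈ Icc a b, ρ * |x - c| ≤ 2 * |f x| := by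
  have hfc : ContinuousOn f (Icc a b) := HasDerivAt.continuousOn hf
  have hgrowth : ∀ x ∈ Icc a b, ∀ y ∈ Icc a b, x ≤ y → ρ * (y - x) ≤ f y - f x :=
    (convex_Icc a b).mul_sub_le_image_sub_of_le_deriv hfc
      (fun x hx => (hf x (interior_subset hx)).differentiableAt.differentiableWithinAt)
      (fun x hx => (hf x (interior_subset hx)).deriv ▸ hlow x (interior_subset hx))
  obtain ⟨c, hc, hmin⟩ := isCompact_Icc.exists_isMinOn (nonempty_Icc.2 hab) hfc.abs
  refine ⟨c, hc, fun x hx => ?_⟩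
  have hcx : |f c| ≤ |f x| := hmin hx
  rcases le_total c x with h | h
  · rw [abs_of_nonneg (sub_nonneg.2 h)]
    linarith [hgrowth c hc x hx h, le_abs_self (f x), neg_abs_le (f c)]
  · rw [abs_of_nonpos (sub_nonpos.2 h)]
    linarith [hgrowth x hx c hc h, neg_abs_le (f x), le_abs_self (f c)]

lemma norm_intervalIntegral_le_of_far {E : Type*} [NormedAddCommGroup E] [NormedSpace ℝ E]
    {e : ℝ → E} {c δ K M : ℝ} (hc : c ∈ Icc a b) (hδ : 0 ≤ δ) (hK : 0 ≤ K)
    (he : ContinuousOn e (Icc a b)) (hM : ∀ x ∈ Icc a b, ‖e x‖ ≤ M)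
    (hfar : ∀ u v, a ≤ u → u ≤ v → v ≤ b → (∀ x ∈ Icc u v, δ ≤ |x - c|) →
      ‖∫ x in u..v, e x‖ ≤ K) :
    ‖∫ x in a..b, e x‖ ≤ 2 * K + 2 * δ * M := by
  set u := max a (c - δ) with hu
  set v := min b (c + δ) with hv
  have hau : a ≤ u := le_max_left _ _
  have huc : u ≤ c := max_le hc.1 (by linarith)
  have hcv : c ≤ v := le_min hc.2 (by linarith)
  have hvb : v ≤ b := min_le_left _ _
  have hleft : ‖∫ x in a..u, e x‖ ≤ K := by
    rcases le_total (c - δ) a with h | h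
    · rwa [hu, max_eq_left h, intervalIntegral.integral_same, norm_zero]
    · refine hfar a u le_rfl hau (huc.trans hc.2) fun x hx => ?_
      rw [abs_sub_comm]
      exact le_abs.2 (Or.inl (by linarith [hx.2, hu.trans (max_eq_right h)]))
  have hright : ‖∫ x in v..b, e x‖ ≤ K := by
    rcases le_total b (c + δ) with h | h
    · rwa [hv, min_eq_left h, intervalIntegral.integral_same, norm_zero]
    · refine hfar v b (hc.1.trans hcv) hvb le_rfl fun x hx => ?_
      exact le_abs.2 (Or.inl (by linarith [hx.1, hv.trans (min_eq_right h)]))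
  have hmiddle : ‖∫ x in u..v, e x‖ ≤ 2 * δ * M := by
    refine (intervalIntegral.norm_integral_le_of_norm_le_const fun x hx => ?_).trans
      ((mul_le_mul_of_nonneg_left ?_ ((norm_nonneg _).trans (hM c hc))).trans_eq (mul_comm M _))
    · rw [uIoc_of_le (huc.trans hcv)] at hx
      exact hM x ⟨hau.trans hx.1.le, hx.2.trans hvb⟩
    · rw [abs_of_nonneg (by linarith)]
      linarith [min_le_right b (c + δ), le_max_right a (c - δ)]
  have hint : ∀ s t, a ≤ s → s ≤ t → t ≤ b → IntervalIntegrable e volume s t :=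
    fun s t hs hst ht => (he.mono (Icc_subset_Icc hs ht)).intervalIntegrable_of_Icc hst
  rw [← intervalIntegral.integral_add_adjacent_intervals
      (hint a u le_rfl hau (huc.trans hc.2)) (hint u b hau (huc.trans hc.2) le_rfl),
    ← intervalIntegral.integral_add_adjacent_intervals
      (hint u v hau (huc.trans hcv) hvb) (hint v b (hc.1.trans hcv) hvb le_rfl), ← add_assoc]
  exact norm_add₃_le.trans ((add_le_add_three hleft hmiddle hright).trans_eq (by ring))

lemma norm_intervalIntegral_cexp_le_of_le_deriv {ρ : ℝ} (hab : a ≤ b) (hρ : 0 < ρ)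
    (hφ : ∀ x ∈ Icc a b, HasDerivAt φ (φ' x) x) (hφ' : ∀ x ∈ Icc a b, HasDerivAt φ' (φ'' x) x)
    (hcont : ContinuousOn φ'' (Icc a b)) (hlow : ∀ x ∈ Icc a b, ρ ≤ φ'' x) :
    ‖∫ x in a..b, Complex.exp (φ x * Complex.I)‖ ≤ 18 / √ρ := by
  obtain ⟨c, hc, hgrowth⟩ := exists_mul_abs_sub_le_two_mul_abs hab hφ' hlow
  have hs : 0 < √ρ := Real.sqrt_pos.2 hρ
  have hρs : ρ * (√ρ)⁻¹ = √ρ := by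
    rw [mul_inv_eq_iff_eq_mul₀ hs.ne', Real.mul_self_sqrt hρ.le]
  have hcexp : ContinuousOn (fun x => Complex.exp (φ x * Complex.I)) (Icc a b) := by
    have := HasDerivAt.continuousOn hφ
    fun_prop
  refine (norm_intervalIntegral_le_of_far (δ := (√ρ)⁻¹) (K := 8 / √ρ) hc (by positivity)
    (by positivity) hcexp (fun x _ => (Complex.norm_exp_ofReal_mul_I _).le)
    fun u v hu huv hv hd => ?_).trans_eq (by ring)
  have hsub : Icc u v ⊆ Icc a b := Icc_subset_Icc hu hv
  refine (norm_intervalIntegral_cexp_le_of_deriv_nonneg huv (half_pos hs)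
    (fun x hx => hφ x (hsub hx)) (fun x hx => hφ' x (hsub hx)) (hcont.mono hsub)
    (fun x hx => hρ.le.trans (hlow x (hsub hx))) fun x hx => ?_).trans_eq (by ring)
  linarith [hgrowth x (hsub hx), mul_le_mul_of_nonneg_left (hd x hx) hρ.le]

lemma norm_intervalIntegral_cexp_le_of_le_abs_deriv {κ : ℝ} (hab : a ≤ b) (hκ : 0 < κ)
    (hφ : ∀ x ∈ Icc a b, HasDerivAt φ (φ' x) x) (hφ' : ∀ x ∈ Icc a b, HasDerivAt φ' (φ'' x) x)
    (hcont : ContinuousOn φ'' (Icc a b)) (hne : ∀ x ∈ Icc a b, φ'' x ≠ 0)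
    (hlow : ∀ x ∈ Icc a b, κ ≤ |φ' x|) :
    ‖∫ x in a..b, Complex.exp (φ x * Complex.I)‖ ≤ 4 / κ := by
  rcases isPreconnected_Icc.mapsTo_Ioi_or_Iio hcont hne with h | h
  · exact norm_intervalIntegral_cexp_le_of_deriv_nonneg hab hκ hφ hφ' hcont
      (fun x hx => (h hx).le) hlow
  · rw [← norm_intervalIntegral_cexp_neg]
    exact norm_intervalIntegral_cexp_le_of_deriv_nonneg hab hκ (fun x hx => (hφ x hx).neg)
      (fun x hx => (hφ' x hx).neg) hcont.neg (fun x hx => neg_nonneg.2 (h hx).le)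
      fun x hx => (hlow x hx).trans_eq (abs_neg _).symm

lemma norm_intervalIntegral_cexp_le_of_le_abs_deriv2 {ρ : ℝ} (hab : a ≤ b) (hρ : 0 < ρ)
    (hφ : ∀ x ∈ Icc a b, HasDerivAt φ (φ' x) x) (hφ' : ∀ x ∈ Icc a b, HasDerivAt φ' (φ'' x) x)
    (hcont : ContinuousOn φ'' (Icc a b)) (hlow : ∀ x ∈ Icc a b, ρ ≤ |φ'' x|) :
    ‖∫ x in a..b, Complex.exp (φ x * Complex.I)‖ ≤ 18 / √ρ := by
  have hne : ∀ x ∈ Icc a b, φ'' x ≠ 0 := fun x hx => abs_pos.1 (hρ.trans_le (hlow x hx))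
  rcases isPreconnected_Icc.mapsTo_Ioi_or_Iio hcont hne with h | h
  · exact norm_intervalIntegral_cexp_le_of_le_deriv hab hρ hφ hφ' hcont
      fun x hx => (hlow x hx).trans_eq (abs_of_pos (h hx))
  · rw [← norm_intervalIntegral_cexp_neg]
    exact norm_intervalIntegral_cexp_le_of_le_deriv hab hρ (fun x hx => (hφ x hx).neg)
      (fun x hx => (hφ' x hx).neg) hcont.neg
      fun x hx => (hlow x hx).trans_eq (abs_of_neg (h hx))

end VanDerCorput

/-! ### The Bessel function `J₀` -/

section Bessel

open Set
open scoped ComplexConjugate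

/-- The `n`-th derivative at `s` of `2π J₀(s) = ∫_{-π}^{π} cos(s cos θ) dθ`. All the derivatives are
written with a cosine, the quarter-turn phase shifts accounting for the sines and the signs. -/
def besselDeriv (n : ℕ) (s : ℝ) : ℝ :=
  ∫ θ in -Real.pi..Real.pi, Real.cos (s * Real.cos θ + n * (Real.pi / 2)) * Real.cos θ ^ n

lemma norm_cos_mul_cos_pow_le_one (n : ℕ) (x θ : ℝ) : ‖Real.cos x * Real.cos θ ^ n‖ ≤ 1 := by
  rw [norm_mul, norm_pow]
  exact mul_le_one₀ (Real.abs_cos_le_one _) (by positivity)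
    (pow_le_one₀ (norm_nonneg _) (Real.abs_cos_le_one _))

lemma hasDerivAt_besselDeriv (n : ℕ) (s : ℝ) :
    HasDerivAt (besselDeriv n) (besselDeriv (n + 1) s) s := by
  refine (intervalIntegral.hasDerivAt_integral_of_dominated_loc_of_deriv_le (bound := fun _ => 1)
    (F := fun x θ => Real.cos (x * Real.cos θ + n * (Real.pi / 2)) * Real.cos θ ^ n)
    (F' := fun x θ => Real.cos (x * Real.cos θ + (n + 1 : ℕ) * (Real.pi / 2)) *
      Real.cos θ ^ (n + 1)) Filter.univ_mem (.of_forall fun x => ?_) ?_ ?_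
    (.of_forall fun θ _ x _ => norm_cos_mul_cos_pow_le_one _ _ _) intervalIntegrable_const
    (.of_forall fun θ _ x _ => ?_)).2
  · exact Continuous.aestronglyMeasurable (by fun_prop)
  · exact Continuous.intervalIntegrable (by fun_prop) _ _
  · exact Continuous.aestronglyMeasurable (by fun_prop)
  · refine ((((hasDerivAt_id x).mul_const (Real.cos θ)).add_const _).cos.mul_const _).congr_deriv ?_
    rw [show x * Real.cos θ + (n + 1 : ℕ) * (Real.pi / 2) =
      x * Real.cos θ + n * (Real.pi / 2) + Real.pi / 2 by push_cast; ring, Real.cos_add_pi_div_two]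
    simp only [id]
    ring

lemma continuous_besselDeriv (n : ℕ) : Continuous (besselDeriv n) :=
  continuous_iff_continuousAt.2 fun s => (hasDerivAt_besselDeriv n s).continuousAt

lemma abs_besselDeriv_le (n : ℕ) (s : ℝ) : |besselDeriv n s| ≤ 7 := by
  refine (intervalIntegral.norm_integral_le_of_norm_le_const fun θ _ =>
    norm_cos_mul_cos_pow_le_one n _ θ).trans ?_
  rw [abs_of_nonneg (by linarith [Real.pi_pos])]
  linarith [Real.pi_lt_d2]

lemma besselDeriv_zero (s : ℝ) :
    besselDeriv 0 s = ∫ θ in -Real.pi..Real.pi, Real.cos (s * Real.cos θ) := by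
  simp [besselDeriv]

lemma besselDeriv_ode (s : ℝ) :
    s * besselDeriv 2 s + besselDeriv 1 s + s * besselDeriv 0 s = 0 := by
  have hderiv : ∀ θ ∈ uIcc (-Real.pi) Real.pi,
      HasDerivAt (fun θ => -(Real.sin θ * Real.sin (s * Real.cos θ)))
      (s * (Real.cos (s * Real.cos θ + (2 : ℕ) * (Real.pi / 2)) * Real.cos θ ^ 2) +
        Real.cos (s * Real.cos θ + (1 : ℕ) * (Real.pi / 2)) * Real.cos θ ^ 1 +
        s * (Real.cos (s * Real.cos θ + (0 : ℕ) * (Real.pi / 2)) * Real.cos θ ^ 0)) θ := by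
    intro θ _
    refine ((Real.hasDerivAt_sin θ).mul
      ((Real.hasDerivAt_cos θ).const_mul s).sin).neg.congr_deriv ?_
    rw [show s * Real.cos θ + (2 : ℕ) * (Real.pi / 2) = s * Real.cos θ + Real.pi by
        push_cast; ring,
      Real.cos_add_pi, Nat.cast_one, one_mul, Real.cos_add_pi_div_two, Nat.cast_zero, zero_mul,
      add_zero]
    linear_combination s * Real.cos (s * Real.cos θ) * Real.sin_sq_add_cos_sq θ
  have h := intervalIntegral.integral_eq_sub_of_hasDerivAt hderiv
    (Continuous.intervalIntegrable (by fun_prop) _ _)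
  rw [intervalIntegral.integral_add, intervalIntegral.integral_add,
    intervalIntegral.integral_const_mul, intervalIntegral.integral_const_mul] at h
  · simpa [besselDeriv] using h
  all_goals exact Continuous.intervalIntegrable (by fun_prop) _ _

lemma besselDeriv_two {s : ℝ} (hs : s ≠ 0) :
    besselDeriv 2 s = -besselDeriv 0 s - besselDeriv 1 s / s := by
  field_simp
  linarith [besselDeriv_ode s]

/-- A Lyapunov functional for Bessel's equation: it is comparable to `s (J² + J'²)`, and the lower
order terms are chosen to make it nonincreasing. -/
def besselEnergy (s : ℝ) : ℝ :=
  s * (besselDeriv 0 s ^ 2 + besselDeriv 1 s ^ 2) + besselDeriv 0 s * besselDeriv 1 s +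
    besselDeriv 0 s ^ 2 * (2 * s)⁻¹

lemma hasDerivAt_besselEnergy {s : ℝ} (hs : 0 < s) :
    HasDerivAt besselEnergy (-besselDeriv 0 s ^ 2 / (2 * s ^ 2)) s := by
  have h₀ := hasDerivAt_besselDeriv 0 s
  have h₁ := hasDerivAt_besselDeriv 1 s
  have hinv : HasDerivAt (fun x : ℝ => (2 * x)⁻¹) (-(2 * 1) / (2 * s) ^ 2) s :=
    ((hasDerivAt_id s).const_mul 2).fun_inv (by positivity)
  refine ((((hasDerivAt_id s).mul ((h₀.pow 2).add (h₁.pow 2))).add (h₀.mul h₁)).add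
    ((h₀.pow 2).mul hinv)).congr_deriv ?_
  simp only [id, Pi.pow_apply, Pi.add_apply, zero_add, one_add_one_eq_two, besselDeriv_two hs.ne']
  field_simp
  push_cast
  ring

lemma antitoneOn_besselEnergy : AntitoneOn besselEnergy (Ici 1) := by
  have hderiv : ∀ x ∈ Ici (1 : ℝ), HasDerivAt besselEnergy _ x :=
    fun x hx => hasDerivAt_besselEnergy (one_pos.trans_le hx)
  refine antitoneOn_of_deriv_nonpos (convex_Ici 1) (HasDerivAt.continuousOn hderiv)
    (fun x hx => (hderiv x (interior_subset hx)).differentiableAt.differentiableWithinAt)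
    fun x hx => ?_
  rw [(hderiv x (interior_subset hx)).deriv]
  exact div_nonpos_of_nonpos_of_nonneg (neg_nonpos.2 (sq_nonneg _)) (by positivity)

lemma mul_besselDeriv_sq_add_sq_le {s : ℝ} (hs : 1 ≤ s) :
    s * (besselDeriv 0 s ^ 2 + besselDeriv 1 s ^ 2) ≤ 400 := by
  have henergy : besselEnergy s ≤ besselEnergy 1 := antitoneOn_besselEnergy self_mem_Ici hs hs
  have hsq : ∀ n, besselDeriv n 1 ^ 2 ≤ 49 := fun n =>
    (sq_le_sq' (neg_le_of_abs_le (abs_besselDeriv_le n 1)) (le_of_abs_le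
      (abs_besselDeriv_le n 1))).trans_eq (by norm_num)
  have hpos : 0 ≤ besselDeriv 0 s ^ 2 * (2 * s)⁻¹ := by positivity
  unfold besselEnergy at henergy
  nlinarith [hsq 0, hsq 1, sq_nonneg (besselDeriv 0 1 - besselDeriv 1 1),
    sq_nonneg (besselDeriv 0 s + besselDeriv 1 s),
    mul_nonneg (sub_nonneg.2 hs) (add_nonneg (sq_nonneg (besselDeriv 0 s))
      (sq_nonneg (besselDeriv 1 s)))]

lemma abs_le_div_sqrt_of_mul_sq_le {x s K : ℝ} (hs : 0 < s) (hK : 0 ≤ K) (h : s * x ^ 2 ≤ K ^ 2) :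
    |x| ≤ K / √s := by
  rw [le_div_iff₀ (Real.sqrt_pos.2 hs)]
  refine abs_le_of_sq_le_sq' ?_ hK |>.2
  rwa [mul_pow, sq_abs, Real.sq_sqrt hs.le, mul_comm]

lemma abs_besselDeriv_zero_le {s : ℝ} (hs : 1 ≤ s) : |besselDeriv 0 s| ≤ 20 / √s :=
  abs_le_div_sqrt_of_mul_sq_le (by linarith) (by norm_num)
    (by nlinarith [mul_besselDeriv_sq_add_sq_le hs, sq_nonneg (besselDeriv 1 s)])

lemma abs_besselDeriv_one_le {s : ℝ} (hs : 1 ≤ s) : |besselDeriv 1 s| ≤ 20 / √s :=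
  abs_le_div_sqrt_of_mul_sq_le (by linarith) (by norm_num)
    (by nlinarith [mul_besselDeriv_sq_add_sq_le hs, sq_nonneg (besselDeriv 0 s)])

/-- The amplitude `b` in the decomposition `J(s) = e^{is} b(s) + e^{-is} conj (b(s))` of
`J = besselDeriv 0`. The correction `J/(2s)` makes `b'` decay one power faster than `b`. -/
def besselAmplitude (s : ℝ) : ℂ :=
  Complex.exp ((-s : ℝ) * Complex.I) *
    (besselDeriv 0 s - (besselDeriv 1 s + besselDeriv 0 s * (2 * s)⁻¹ : ℝ) * Complex.I) / 2

/-- The derivative of `besselAmplitude`, simplified by means of Bessel's equation. -/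
def besselAmplitudeDeriv (s : ℝ) : ℂ :=
  Complex.exp ((-s : ℝ) * Complex.I) *
    (-besselDeriv 0 s + (besselDeriv 1 s + besselDeriv 0 s * s⁻¹ : ℝ) * Complex.I) *
      ((4 * s)⁻¹ : ℝ)

lemma hasDerivAt_besselAmplitude {s : ℝ} (hs : 0 < s) :
    HasDerivAt besselAmplitude (besselAmplitudeDeriv s) s := by
  have h₀ := hasDerivAt_besselDeriv 0 s
  have h₁ := hasDerivAt_besselDeriv 1 s
  have hinv : HasDerivAt (fun x : ℝ => (2 * x)⁻¹) (-(2 * 1) / (2 * s) ^ 2) s :=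
    ((hasDerivAt_id s).const_mul 2).fun_inv (by positivity)
  refine (((((hasDerivAt_neg s).ofReal_comp.mul_const Complex.I).cexp).mul
    (h₀.ofReal_comp.sub ((h₁.add (h₀.mul hinv)).ofReal_comp.mul_const Complex.I))).div_const
      2).congr_deriv ?_
  have hs' : (s : ℂ) ≠ 0 := mod_cast hs.ne'
  simp only [besselAmplitudeDeriv, zero_add, one_add_one_eq_two, besselDeriv_two hs.ne',
    Pi.sub_apply, Pi.add_apply, Pi.mul_apply]
  push_cast
  field_simp
  linear_combination (4 * s * besselDeriv 0 s + 8 * s ^ 2 * besselDeriv 1 s) * Complex.I_sq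

lemma continuousOn_besselAmplitudeDeriv : ContinuousOn besselAmplitudeDeriv (Ioi 0) := by
  have h₀ := continuous_besselDeriv 0
  have h₁ := continuous_besselDeriv 1
  have hinv : ContinuousOn (fun s : ℝ => s⁻¹) (Ioi 0) :=
    continuousOn_id.inv₀ fun s hs => (mem_Ioi.1 hs).ne'
  have hinv₄ : ContinuousOn (fun s : ℝ => (4 * s)⁻¹) (Ioi 0) :=
    (continuousOn_const.mul continuousOn_id).inv₀ fun s hs =>
      mul_ne_zero four_ne_zero (mem_Ioi.1 hs).ne'
  unfold besselAmplitudeDeriv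
  fun_prop

lemma norm_besselAmplitude_le {s : ℝ} (hs : 1 ≤ s) : ‖besselAmplitude s‖ ≤ 25 / √s := by
  have : 0 < s := by linarith
  have hinv : |(2 * s)⁻¹| ≤ 1 / 2 := by
    rw [abs_of_pos (by positivity), one_div]
    exact inv_anti₀ two_pos (by linarith)
  rw [besselAmplitude, norm_div, norm_mul, Complex.norm_exp_ofReal_mul_I, one_mul,
    Complex.norm_ofNat, div_le_iff₀ two_pos]
  refine (norm_sub_le _ _).trans ?_
  rw [norm_mul, Complex.norm_I, mul_one, Complex.norm_real, Complex.norm_real]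
  calc ‖besselDeriv 0 s‖ + ‖besselDeriv 1 s + besselDeriv 0 s * (2 * s)⁻¹‖
      ≤ |besselDeriv 0 s| + (|besselDeriv 1 s| + |besselDeriv 0 s| * |(2 * s)⁻¹|) :=
        add_le_add_right ((norm_add_le _ _).trans_eq (by rw [norm_mul]; rfl)) _
    _ ≤ 20 / √s + (20 / √s + 20 / √s * (1 / 2)) := by
        gcongr
        exacts [abs_besselDeriv_zero_le hs, abs_besselDeriv_one_le hs, abs_besselDeriv_zero_le hs]
    _ = 25 / √s * 2 := by ring

lemma norm_besselAmplitudeDeriv_le {s : ℝ} (hs : 1 ≤ s) :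
    ‖besselAmplitudeDeriv s‖ ≤ 15 / (s * √s) := by
  have : 0 < s := by linarith
  rw [besselAmplitudeDeriv, norm_mul, norm_mul, Complex.norm_exp_ofReal_mul_I, one_mul,
    Complex.norm_real, Real.norm_of_nonneg (by positivity : 0 ≤ (4 * s)⁻¹)]
  calc _ ≤ (|besselDeriv 0 s| + (|besselDeriv 1 s| + |besselDeriv 0 s| * |s⁻¹|)) * (4 * s)⁻¹ := by
        gcongr
        refine (norm_add_le _ _).trans ?_
        rw [norm_neg, norm_mul, Complex.norm_I, mul_one, Complex.norm_real, Complex.norm_real]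
        exact add_le_add_right ((norm_add_le _ _).trans_eq (by rw [norm_mul]; rfl)) _
    _ ≤ (20 / √s + (20 / √s + 20 / √s * 1)) * (4 * s)⁻¹ := by
        gcongr
        · exact abs_besselDeriv_zero_le hs
        · exact abs_besselDeriv_one_le hs
        · exact abs_besselDeriv_zero_le hs
        · rw [abs_of_pos (by positivity)]
          exact inv_le_one_of_one_le₀ hs
    _ = 15 / (s * √s) := by field_simp; norm_num

lemma besselDeriv_zero_eq_amplitude (s : ℝ) :
    (besselDeriv 0 s : ℂ) = Complex.exp (s * Complex.I) * besselAmplitude s +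
      Complex.exp ((-s : ℝ) * Complex.I) * conj (besselAmplitude s) := by
  have hexp : Complex.exp (s * Complex.I) * Complex.exp ((-s : ℝ) * Complex.I) = 1 := by
    rw [← Complex.exp_add]
    simp
  have hconj : conj (Complex.exp ((-s : ℝ) * Complex.I)) = Complex.exp (s * Complex.I) := by
    rw [← Complex.exp_conj]
    simp
  simp only [besselAmplitude, map_div₀, map_mul, map_sub, hconj, Complex.conj_I,
    Complex.conj_ofReal, map_ofNat]
  linear_combination (-(besselDeriv 0 s : ℂ)) * hexp

lemma intervalIntegral_cexp_mul_cos (s : ℝ) :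
    ∫ θ in -Real.pi..Real.pi, Complex.exp ((s * Real.cos θ : ℝ) * Complex.I) = besselDeriv 0 s := by
  have hsin : ∫ θ in -Real.pi..Real.pi, Real.sin (s * Real.cos θ) = 0 := by
    have hper : Function.Periodic (fun θ => Real.sin (s * Real.cos θ)) (2 * Real.pi) := fun θ => by
      simp only [Real.cos_add_two_pi]
    have hshift := intervalIntegral.integral_comp_add_right (a := -Real.pi) (b := Real.pi)
      (fun θ => Real.sin (s * Real.cos θ)) Real.pi
    have hperiod := hper.intervalIntegral_add_eq (-Real.pi) 0
    simp only [Real.cos_add_pi, mul_neg, Real.sin_neg, intervalIntegral.integral_neg] at hshift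
    rw [show -Real.pi + 2 * Real.pi = Real.pi by ring] at hperiod
    rw [neg_add_cancel, show Real.pi + Real.pi = 0 + 2 * Real.pi by ring, ← hperiod] at hshift
    linarith
  simp_rw [Complex.exp_mul_I, ← Complex.ofReal_cos, ← Complex.ofReal_sin]
  rw [intervalIntegral.integral_add, intervalIntegral.integral_mul_const,
    intervalIntegral.integral_ofReal, intervalIntegral.integral_ofReal, hsin, besselDeriv_zero]
  · simp
  all_goals exact Continuous.intervalIntegrable (by fun_prop) _ _

end Bessel

/-! ### The radial profile of the symbol -/

section WaveSymbol

lemma one_le_jap (x : ℝ) : 1 ≤ jap x := by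
  rw [jap, ← Real.sqrt_eq_rpow]
  exact Real.one_le_sqrt.2 (by linarith [sq_nonneg x])

lemma jap_pos (x : ℝ) : 0 < jap x := one_pos.trans_le (one_le_jap x)

lemma le_jap (x : ℝ) : x ≤ jap x := by
  rw [jap, ← Real.sqrt_eq_rpow]
  exact Real.le_sqrt_of_sq_le (by linarith)

lemma sqrt_one_add_le_two_mul_sqrt_jap {r N : ℝ} (h : r ≤ 2 * N) : √(1 + r) ≤ 2 * √(jap N) := by
  refine Real.sqrt_le_iff.2 ⟨by positivity, ?_⟩
  rw [mul_pow, Real.sq_sqrt (by linarith [one_le_jap N])]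
  linarith [one_le_jap N, le_jap N]

lemma hasDerivAt_tanh (r : ℝ) : HasDerivAt Real.tanh (1 - Real.tanh r ^ 2) r := by
  have hcosh := (Real.cosh_pos r).ne'
  rw [show Real.tanh = fun x => Real.sinh x / Real.cosh x from funext Real.tanh_eq_sinh_div_cosh]
  refine ((Real.hasDerivAt_sinh r).div (Real.hasDerivAt_cosh r) hcosh).congr_deriv ?_
  field_simp

lemma continuous_tanh : Continuous Real.tanh :=
  continuous_iff_continuousAt.2 fun r => (hasDerivAt_tanh r).continuousAt

lemma one_sub_tanh_sq (r : ℝ) : 1 - Real.tanh r ^ 2 = (Real.cosh r ^ 2)⁻¹ := by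
  have hcosh := (Real.cosh_pos r).ne'
  rw [Real.tanh_eq_sinh_div_cosh]
  field_simp
  linarith [Real.cosh_sq r]

lemma div_one_add_le_tanh {r : ℝ} (hr : 0 ≤ r) : r / (1 + r) ≤ Real.tanh r := by
  have hmul : Real.exp r * Real.exp (-r) = 1 := by
    rw [← Real.exp_add, add_neg_cancel, Real.exp_zero]
  have hexp : (2 * r + 1) * Real.exp (-r) ≤ Real.exp r := by
    calc (2 * r + 1) * Real.exp (-r) ≤ Real.exp (2 * r) * Real.exp (-r) := by
          gcongr
          exact Real.add_one_le_exp _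
      _ = Real.exp r := by rw [two_mul, Real.exp_add, mul_assoc, hmul, mul_one]
  rw [Real.tanh_eq_sinh_div_cosh, div_le_div_iff₀ (by linarith) (Real.cosh_pos r), Real.sinh_eq,
    Real.cosh_eq]
  linarith

lemma tanh_pos {r : ℝ} (hr : 0 < r) : 0 < Real.tanh r :=
  (by positivity : 0 < r / (1 + r)).trans_le (div_one_add_le_tanh hr.le)

/-- The radial profile `m(r) = √(r tanh r)` of the symbol `m2`. -/
def waveSymbol (r : ℝ) : ℝ := √(r * Real.tanh r)

/-- The derivative of `waveSymbol` on `(0, ∞)`. -/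
def waveSymbolDeriv (r : ℝ) : ℝ :=
  (Real.tanh r + r * (1 - Real.tanh r ^ 2)) / (2 * √(r * Real.tanh r))

/-- The second derivative of `waveSymbol` on `(0, ∞)`, arranged so as to show that it is
negative. -/
def waveSymbolDeriv2 (r : ℝ) : ℝ :=
  -(((Real.tanh r - r * (1 - Real.tanh r ^ 2)) ^ 2 +
      4 * r ^ 2 * Real.tanh r ^ 2 * (1 - Real.tanh r ^ 2)) /
    (4 * (r * Real.tanh r) * √(r * Real.tanh r)))

lemma m2_eq_waveSymbol (ξ : E2) : m2 ξ = waveSymbol ‖ξ‖ := by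
  unfold m2 waveSymbol
  split_ifs with h
  · simp [h]
  · rw [show ‖ξ‖ * Real.tanh ‖ξ‖ = ‖ξ‖ ^ 2 * (Real.tanh ‖ξ‖ / ‖ξ‖) by field_simp,
      Real.sqrt_mul (by positivity), Real.sqrt_sq (norm_nonneg ξ)]

lemma continuous_waveSymbol : Continuous waveSymbol :=
  (continuous_id.mul continuous_tanh).sqrt

lemma hasDerivAt_waveSymbol {r : ℝ} (hr : 0 < r) :
    HasDerivAt waveSymbol (waveSymbolDeriv r) r := by
  refine HasDerivAt.congr_deriv (f := waveSymbol) (((hasDerivAt_id r).mul (hasDerivAt_tanh r)).sqrt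
    (mul_pos hr (tanh_pos hr)).ne') ?_
  simp [waveSymbolDeriv]

lemma hasDerivAt_waveSymbolDeriv {r : ℝ} (hr : 0 < r) :
    HasDerivAt waveSymbolDeriv (waveSymbolDeriv2 r) r := by
  have hpos : 0 < r * Real.tanh r := mul_pos hr (tanh_pos hr)
  have hsqrt : √(r * Real.tanh r) ^ 2 = r * Real.tanh r := Real.sq_sqrt hpos.le
  have hne : √(r * Real.tanh r) ≠ 0 := (Real.sqrt_pos.2 hpos).ne'
  have hnum := (hasDerivAt_tanh r).add
    ((hasDerivAt_id r).mul (((hasDerivAt_tanh r).pow 2).const_sub 1))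
  have hden := (hasDerivAt_waveSymbol hr).const_mul 2
  refine HasDerivAt.congr_deriv (f := waveSymbolDeriv)
    (hnum.div hden (mul_ne_zero two_ne_zero hne)) ?_
  have hcube : 4 * (r * Real.tanh r) * √(r * Real.tanh r) = 4 * √(r * Real.tanh r) ^ 3 := by
    linear_combination (-4 * √(r * Real.tanh r)) * hsqrt
  simp only [waveSymbolDeriv2, waveSymbolDeriv, id, Pi.add_apply, Pi.mul_apply,
    Pi.pow_apply, hcube]
  generalize √(r * Real.tanh r) = S at hsqrt hne
  field_simp
  rw [hsqrt]
  push_cast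
  ring

lemma continuousOn_waveSymbolDeriv2 : ContinuousOn waveSymbolDeriv2 (Set.Ioi 0) := by
  have htanh := continuous_tanh
  refine (ContinuousOn.div (by fun_prop) (by fun_prop) fun r hr => ?_).neg
  have hpos : 0 < r * Real.tanh r := mul_pos hr (tanh_pos hr)
  positivity

lemma inv_two_mul_sqrt_le_waveSymbolDeriv {r : ℝ} (hr : 0 < r) :
    1 / (2 * √(1 + r)) ≤ waveSymbolDeriv r := by
  have htanh := tanh_pos hr
  have hsqrt : √(r * Real.tanh r) ≤ Real.tanh r * √(1 + r) := by
    refine Real.sqrt_le_iff.2 ⟨by positivity, ?_⟩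
    have hlow := (div_le_iff₀ (by linarith)).1 (div_one_add_le_tanh hr.le)
    rw [mul_pow, Real.sq_sqrt (by linarith)]
    nlinarith
  have hcorr : 0 ≤ r * (1 - Real.tanh r ^ 2) * √(1 + r) :=
    mul_nonneg (mul_nonneg hr.le (sub_nonneg.2 (Real.tanh_sq_lt_one r).le)) (Real.sqrt_nonneg _)
  rw [waveSymbolDeriv, div_le_div_iff₀ (by positivity) (by positivity)]
  linarith

lemma cosh_le_three {r : ℝ} (hr : 0 ≤ r) (hr₁ : r ≤ 1) : Real.cosh r ≤ 3 := by
  have hexp : Real.exp r ≤ Real.exp 1 := Real.exp_le_exp.2 hr₁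
  have hexp_neg : Real.exp (-r) ≤ 1 := Real.exp_le_one_iff.2 (by linarith)
  rw [Real.cosh_eq]
  linarith [Real.exp_one_lt_d9]

lemma one_add_sq_div_two_le_cosh {r : ℝ} (hr : 0 ≤ r) : 1 + r ^ 2 / 2 ≤ Real.cosh r := by
  have hdouble := Real.cosh_two_mul (r / 2)
  have hsinh : r / 2 ≤ Real.sinh (r / 2) := Real.self_le_sinh_iff.2 (by linarith)
  rw [mul_div_cancel₀ r two_ne_zero, Real.cosh_sq] at hdouble
  nlinarith

lemma div_eighteen_le_neg_waveSymbolDeriv2 {r : ℝ} (hr : 0 < r) (hr₁ : r ≤ 1) :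
    r / 18 ≤ -waveSymbolDeriv2 r := by
  have htanh := tanh_pos hr
  have hpos : 0 < r * Real.tanh r := mul_pos hr htanh
  have hsech : 1 / 9 ≤ 1 - Real.tanh r ^ 2 := by
    rw [one_sub_tanh_sq, one_div]
    refine inv_anti₀ (by positivity) ?_
    nlinarith [cosh_le_three hr.le hr₁, Real.cosh_pos r]
  have hsqrt : r / 2 ≤ √(r * Real.tanh r) := by
    refine Real.le_sqrt_of_sq_le ?_
    have hlow : r / 2 ≤ Real.tanh r :=
      le_trans (by gcongr; linarith) (div_one_add_le_tanh hr.le)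
    nlinarith
  calc r / 18 = r / 2 * (1 / 9) := by ring
    _ ≤ √(r * Real.tanh r) * (1 - Real.tanh r ^ 2) := by gcongr
    _ = 4 * r ^ 2 * Real.tanh r ^ 2 * (1 - Real.tanh r ^ 2) /
          (4 * (r * Real.tanh r) * √(r * Real.tanh r)) := by
        rw [eq_div_iff (by positivity)]
        linear_combination
          4 * (r * Real.tanh r) * (1 - Real.tanh r ^ 2) * Real.mul_self_sqrt hpos.le
    _ ≤ -waveSymbolDeriv2 r := by
        rw [waveSymbolDeriv2, neg_neg]
        gcongr
        exact le_add_of_nonneg_left (sq_nonneg _)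

lemma inv_mul_sqrt_le_neg_waveSymbolDeriv2 {r : ℝ} (hr : 1 ≤ r) :
    1 / (1600 * (r * √r)) ≤ -waveSymbolDeriv2 r := by
  have hr₀ : 0 < r := by linarith
  have htanh := tanh_pos hr₀
  have : 0 < √r := Real.sqrt_pos.2 hr₀
  have hgap : 1 / 20 ≤ Real.tanh r - r * (1 - Real.tanh r ^ 2) := by
    have hsech : r * (1 - Real.tanh r ^ 2) ≤ 9 / 20 := by
      have hcosh : (1 + r ^ 2 / 2) ^ 2 ≤ Real.cosh r ^ 2 := by
        gcongr
        exact one_add_sq_div_two_le_cosh hr₀.le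
      rw [one_sub_tanh_sq, ← div_eq_mul_inv, div_le_iff₀ (by positivity)]
      nlinarith [sq_nonneg (r ^ 2 - 1)]
    have hhalf : 1 / 2 ≤ r / (1 + r) := by
      rw [div_le_div_iff₀ (by norm_num) (by linarith)]
      linarith
    linarith [div_one_add_le_tanh hr₀.le]
  calc 1 / (1600 * (r * √r)) = (1 / 20) ^ 2 / (4 * (r * 1) * √(r * 1)) := by
        rw [mul_one]
        field_simp
        norm_num
    _ ≤ (Real.tanh r - r * (1 - Real.tanh r ^ 2)) ^ 2 /
          (4 * (r * Real.tanh r) * √(r * Real.tanh r)) := by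
        gcongr
        exacts [(Real.tanh_lt_one r).le, (Real.tanh_lt_one r).le]
    _ ≤ -waveSymbolDeriv2 r := by
        rw [waveSymbolDeriv2, neg_neg]
        gcongr
        have hsech : 0 ≤ 1 - Real.tanh r ^ 2 := sub_nonneg.2 (Real.tanh_sq_lt_one r).le
        exact le_add_of_nonneg_right (by positivity)

lemma div_le_neg_waveSymbolDeriv2 {r : ℝ} (hr : 0 < r) :
    r / (1600 * ((1 + r) ^ 2 * √(1 + r))) ≤ -waveSymbolDeriv2 r := by
  rcases le_total r 1 with hr₁ | hr₁
  · refine le_trans ?_ (div_eighteen_le_neg_waveSymbolDeriv2 hr hr₁)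
    have hden : 1 ≤ (1 + r) ^ 2 * √(1 + r) :=
      one_le_mul_of_one_le_of_one_le (by nlinarith) (Real.one_le_sqrt.2 (by linarith))
    gcongr
    linarith
  · refine le_trans ?_ (inv_mul_sqrt_le_neg_waveSymbolDeriv2 hr₁)
    have : 0 < √r := Real.sqrt_pos.2 hr
    calc r / (1600 * ((1 + r) ^ 2 * √(1 + r))) ≤ r / (1600 * (r ^ 2 * √r)) := by
          gcongr <;> linarith
      _ = 1 / (1600 * (r * √r)) := by field_simp

lemma inv_sqrt_jap_le_waveSymbolDeriv {r N : ℝ} (hr : 0 < r) (h : r ≤ 2 * N) :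
    1 / (4 * √(jap N)) ≤ waveSymbolDeriv r := by
  refine le_trans ?_ (inv_two_mul_sqrt_le_waveSymbolDeriv hr)
  exact one_div_le_one_div_of_le (by positivity) (by linarith [sqrt_one_add_le_two_mul_sqrt_jap h])

lemma div_jap_le_neg_waveSymbolDeriv2 {r N : ℝ} (hN : 0 < N) (h₁ : N / 2 ≤ r) (h₂ : r ≤ 2 * N) :
    N / (57600 * (jap N ^ 2 * √(jap N))) ≤ -waveSymbolDeriv2 r := by
  have hr : 0 < r := by linarith
  have hjap : 1 + r ≤ 3 * jap N := by linarith [one_le_jap N, le_jap N]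
  calc N / (57600 * (jap N ^ 2 * √(jap N)))
      = (N / 2) / (1600 * ((3 * jap N) ^ 2 * (2 * √(jap N)))) := by
        field_simp
        norm_num
    _ ≤ r / (1600 * ((1 + r) ^ 2 * √(1 + r))) := by
        gcongr
        exact sqrt_one_add_le_two_mul_sqrt_jap h₂
    _ ≤ -waveSymbolDeriv2 r := div_le_neg_waveSymbolDeriv2 hr

end WaveSymbol

/-! ### The radial oscillatory integral -/

section RadialIntegral

open Set
open scoped ComplexConjugate

variable {φ φ' φ'' : ℝ → ℝ} {a b c κ ρ lam y : ℝ}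

/-- `φ` is a phase on `[a, b]` whose first two derivatives `φ'` and `φ''` are bounded away from
zero, by `κ` and `ρ` respectively. -/
structure IsCurvedPhase (φ φ' φ'' : ℝ → ℝ) (κ ρ a b : ℝ) : Prop where
  hasDerivAt : ∀ x ∈ Icc a b, HasDerivAt φ (φ' x) x
  hasDerivAt_deriv : ∀ x ∈ Icc a b, HasDerivAt φ' (φ'' x) x
  continuousOn_deriv2 : ContinuousOn φ'' (Icc a b)
  le_abs_deriv : ∀ x ∈ Icc a b, κ ≤ |φ' x|
  le_abs_deriv2 : ∀ x ∈ Icc a b, ρ ≤ |φ'' x|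

namespace IsCurvedPhase

lemma mono_right (h : IsCurvedPhase φ φ' φ'' κ ρ a b) {b' : ℝ} (hb' : b' ≤ b) :
    IsCurvedPhase φ φ' φ'' κ ρ a b' :=
  have hsub : Icc a b' ⊆ Icc a b := Icc_subset_Icc_right hb'
  ⟨fun x hx => h.hasDerivAt x (hsub hx), fun x hx => h.hasDerivAt_deriv x (hsub hx),
    h.continuousOn_deriv2.mono hsub, fun x hx => h.le_abs_deriv x (hsub hx),
    fun x hx => h.le_abs_deriv2 x (hsub hx)⟩

lemma continuousOn_cexp_add_mul (h : IsCurvedPhase φ φ' φ'' κ ρ a b) (c : ℝ) :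
    ContinuousOn (fun x => Complex.exp ((φ x + c * x : ℝ) * Complex.I)) (Icc a b) := by
  have hφ : ContinuousOn φ (Icc a b) := HasDerivAt.continuousOn h.hasDerivAt
  fun_prop

lemma norm_integral_cexp_add_mul_le_div (h : IsCurvedPhase φ φ' φ'' κ ρ a b) (hab : a ≤ b)
    (hκ : 0 < κ) (hρ : 0 < ρ) (hc : |c| ≤ κ / 2) :
    ‖∫ x in a..b, Complex.exp ((φ x + c * x : ℝ) * Complex.I)‖ ≤ 8 / κ := by
  refine (norm_intervalIntegral_cexp_le_of_le_abs_deriv (φ := fun x => φ x + c * x) hab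
    (half_pos hκ) (fun x hx => (h.hasDerivAt x hx).add ((hasDerivAt_id x).const_mul c))
    (fun x hx => (h.hasDerivAt_deriv x hx).add_const _) h.continuousOn_deriv2
    (fun x hx => abs_pos.1 (hρ.trans_le (h.le_abs_deriv2 x hx)))
    fun x hx => ?_).trans_eq (by field_simp; norm_num)
  have htriangle := abs_sub_abs_le_abs_sub (φ' x) (-c)
  rw [abs_neg, sub_neg_eq_add] at htriangle
  rw [mul_one]
  linarith [h.le_abs_deriv x hx]

lemma norm_integral_cexp_add_mul_le_div_sqrt (h : IsCurvedPhase φ φ' φ'' κ ρ a b) (hab : a ≤ b)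
    (hρ : 0 < ρ) (c : ℝ) :
    ‖∫ x in a..b, Complex.exp ((φ x + c * x : ℝ) * Complex.I)‖ ≤ 18 / √ρ :=
  norm_intervalIntegral_cexp_le_of_le_abs_deriv2 (φ := fun x => φ x + c * x) hab hρ
    (fun x hx => (h.hasDerivAt x hx).add ((hasDerivAt_id x).const_mul c))
    (fun x hx => (h.hasDerivAt_deriv x hx).add_const _) h.continuousOn_deriv2 h.le_abs_deriv2

end IsCurvedPhase

lemma hasDerivAt_ofReal_mul_comp_mul {B : ℝ → ℂ} {B' : ℂ} {r : ℝ} (hB : HasDerivAt B B' (r * y)) :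
    HasDerivAt (fun r : ℝ => (r : ℂ) * B (r * y)) (B (r * y) + (r * y : ℝ) * B') r := by
  refine (Complex.ofRealCLM.hasDerivAt.mul
    (hB.scomp r ((hasDerivAt_id r).mul_const y))).congr_deriv ?_
  simp [mul_assoc]

lemma norm_integral_mul_amplitude_le_of_primitive {g B B' : ℝ → ℂ} {K C : ℝ} (hlam : 0 < lam)
    (hlamy : 2 < lam * y) (hg : ContinuousOn g (Icc (lam / 2) (2 * lam)))
    (hK : ∀ x ∈ Icc (lam / 2) (2 * lam), ‖∫ r in (lam / 2)..x, g r‖ ≤ K)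
    (hB : ∀ s, 0 < s → HasDerivAt B (B' s) s) (hB'cont : ContinuousOn B' (Ioi 0))
    (hBC : ∀ s, 1 ≤ s → ‖B s‖ ≤ C / √s) (hB'C : ∀ s, 1 ≤ s → ‖B' s‖ ≤ C / (s * √s)) :
    ‖∫ r in (lam / 2)..(2 * lam), g r * (r * B (r * y))‖ ≤ K * (5 * C * lam / √(lam * y / 2)) := by
  have hy : 0 < y := pos_of_mul_pos_right (two_pos.trans hlamy) hlam.le
  have hC : 0 ≤ C := by simpa using (norm_nonneg _).trans (hBC 1 le_rfl)
  have hge : ∀ r ∈ Icc (lam / 2) (2 * lam), lam * y / 2 ≤ r * y := fun r hr => by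
    nlinarith [hr.1]
  have hmaps : MapsTo (· * y) (Icc (lam / 2) (2 * lam)) (Ioi 0) := fun r hr =>
    mem_Ioi.2 (by linarith [hge r hr])
  have hBcont : ContinuousOn B (Ioi 0) := fun s hs => (hB s hs).continuousAt.continuousWithinAt
  have hBle : ∀ r ∈ Icc (lam / 2) (2 * lam), ‖B (r * y)‖ ≤ C / √(lam * y / 2) := fun r hr => by
    refine (hBC _ (by linarith [hge r hr])).trans ?_
    gcongr
    exact hge r hr
  have hB'le : ∀ r ∈ Icc (lam / 2) (2 * lam), ‖(r * y : ℝ) * B' (r * y)‖ ≤ C / √(lam * y / 2) := by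
    intro r hr
    have hry : 0 < r * y := mem_Ioi.1 (hmaps hr)
    rw [norm_mul, Complex.norm_real, Real.norm_of_nonneg hry.le]
    calc r * y * ‖B' (r * y)‖ ≤ r * y * (C / (r * y * √(r * y))) := by
          gcongr
          exact hB'C _ (by linarith [hge r hr])
      _ = C / √(r * y) := by rw [← mul_div_assoc, mul_div_mul_left _ _ hry.ne']
      _ ≤ C / √(lam * y / 2) := by
          gcongr
          exact hge r hr
  refine (norm_intervalIntegral_mul_le (M := 2 * lam * (C / √(lam * y / 2)))
    (M' := C / √(lam * y / 2) + C / √(lam * y / 2)) (by linarith) hg hK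
    (fun r hr => hasDerivAt_ofReal_mul_comp_mul (hB _ (mem_Ioi.1 (hmaps hr)))) ?_ ?_
    fun r hr => (norm_add_le _ _).trans (add_le_add (hBle r hr) (hB'le r hr))).trans_eq ?_
  · exact (hBcont.comp (by fun_prop) hmaps).add (ContinuousOn.mul
      (Complex.continuous_ofReal.comp (by fun_prop)).continuousOn
      (hB'cont.comp (by fun_prop) hmaps))
  · rw [norm_mul, Complex.norm_real, Real.norm_of_nonneg (by positivity)]
    gcongr
    exact hBle _ (right_mem_Icc.2 (by linarith))
  · ring

namespace IsCurvedPhase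

/-- Bounded `lam * y`: the Bessel factor does not oscillate and is treated as an amplitude. -/
lemma norm_integral_mul_besselDeriv_le_of_mul_le_two
    (h : IsCurvedPhase φ φ' φ'' κ ρ (lam / 2) (2 * lam)) (hlam : 0 < lam) (hκ : 0 < κ) (hρ : 0 < ρ)
    (hy : 0 ≤ y) (hlamy : lam * y ≤ 2) :
    ‖∫ r in (lam / 2)..(2 * lam),
      Complex.exp (φ r * Complex.I) * (r * (besselDeriv 0 (r * y) : ℂ))‖ ≤ 540 * (lam / κ) := by
  have hJ : ∀ n, Continuous (besselDeriv n) := continuous_besselDeriv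
  have hexp : ContinuousOn (fun r => Complex.exp (φ r * Complex.I)) (Icc (lam / 2) (2 * lam)) := by
    simpa using h.continuousOn_cexp_add_mul 0
  have hint : ∀ x ∈ Icc (lam / 2) (2 * lam),
      ‖∫ r in (lam / 2)..x, Complex.exp (φ r * Complex.I)‖ ≤ 8 / κ := fun x hx => by
    simpa using (h.mono_right hx.2).norm_integral_cexp_add_mul_le_div (c := 0) hx.1 hκ hρ
      (by rw [abs_zero]; positivity)
  refine (norm_intervalIntegral_mul_le (M := 14 * lam) (M' := 35)
    (A := fun r : ℝ => (r : ℂ) * (besselDeriv 0 (r * y) : ℂ)) (by linarith) hexp hint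
    (fun r _ => hasDerivAt_ofReal_mul_comp_mul (B := fun s => (besselDeriv 0 s : ℂ))
      (hasDerivAt_besselDeriv 0 (r * y)).ofReal_comp)
    (Continuous.continuousOn (by fun_prop)) ?_ fun r hr => ?_).trans ?_
  · rw [norm_mul, Complex.norm_real, Complex.norm_real, Real.norm_of_nonneg (by positivity)]
    nlinarith [abs_besselDeriv_le 0 (2 * lam * y), Real.norm_eq_abs (besselDeriv 0 (2 * lam * y))]
  · have hr₀ : 0 ≤ r := by linarith [hr.1]
    have hry : r * y ≤ 4 := by nlinarith [hr.2]
    refine (norm_add_le _ _).trans ?_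
    rw [norm_mul, Complex.norm_real, Complex.norm_real, Complex.norm_real,
      Real.norm_of_nonneg (mul_nonneg hr₀ hy)]
    calc _ ≤ (7 : ℝ) + 4 * 7 := by
          gcongr
          exacts [abs_besselDeriv_le _ _, abs_besselDeriv_le _ _]
      _ = 35 := by norm_num
  · calc 8 / κ * (14 * lam + 35 * (2 * lam - lam / 2)) = 532 * (lam / κ) := by ring
      _ ≤ 540 * (lam / κ) := by
        gcongr
        norm_num

/-- Large `lam * y`: either `κ` dominates the frequency `y` of the Bessel factor, or the decay
`(lam * y)^{-1/2}` of this factor is at least as good as `(lam * κ)^{-1/2}`. -/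
lemma norm_integral_mul_amplitude_le (h : IsCurvedPhase φ φ' φ'' κ ρ (lam / 2) (2 * lam))
    (hlam : 0 < lam) (hκ : 0 < κ) (hρ : 0 < ρ) (hlamy : 2 < lam * y) (hc : |c| = y)
    {B B' : ℝ → ℂ} {C : ℝ}
    (hB : ∀ s, 0 < s → HasDerivAt B (B' s) s) (hB'cont : ContinuousOn B' (Ioi 0))
    (hBC : ∀ s, 1 ≤ s → ‖B s‖ ≤ C / √s) (hB'C : ∀ s, 1 ≤ s → ‖B' s‖ ≤ C / (s * √s)) :
    ‖∫ r in (lam / 2)..(2 * lam),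
        Complex.exp ((φ r + c * r : ℝ) * Complex.I) * (r * B (r * y))‖ ≤
      180 * C * (lam / κ + √(lam / (κ * ρ))) := by
  have hC : 0 ≤ C := by simpa using (norm_nonneg _).trans (hBC 1 le_rfl)
  rcases le_total y (κ / 2) with hyκ | hyκ
  · refine (norm_integral_mul_amplitude_le_of_primitive hlam hlamy (h.continuousOn_cexp_add_mul c)
      (fun x hx => (h.mono_right hx.2).norm_integral_cexp_add_mul_le_div hx.1 hκ hρ
        (hc.trans_le hyκ)) hB hB'cont hBC hB'C).trans ?_
    have hsqrt : 1 ≤ √(lam * y / 2) := Real.one_le_sqrt.2 (by linarith)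
    calc 8 / κ * (5 * C * lam / √(lam * y / 2)) ≤ 8 / κ * (5 * C * lam / 1) := by gcongr
      _ = 40 * C * (lam / κ) := by ring
      _ ≤ 180 * C * (lam / κ + √(lam / (κ * ρ))) := by
          gcongr
          · norm_num
          · exact le_add_of_nonneg_right (Real.sqrt_nonneg _)
  · refine (norm_integral_mul_amplitude_le_of_primitive hlam hlamy (h.continuousOn_cexp_add_mul c)
      (fun x hx => (h.mono_right hx.2).norm_integral_cexp_add_mul_le_div_sqrt hx.1 hρ c)
      hB hB'cont hBC hB'C).trans ?_
    calc 18 / √ρ * (5 * C * lam / √(lam * y / 2))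
        ≤ 18 / √ρ * (5 * C * lam / √(lam * κ / 2 ^ 2)) := by
          gcongr 18 / √ρ * (5 * C * lam / √?_)
          nlinarith
      _ = 180 * C * √(lam / (κ * ρ)) := by
          rw [Real.sqrt_div (by positivity), Real.sqrt_sq two_pos.le, Real.sqrt_div hlam.le,
            Real.sqrt_mul hlam.le, Real.sqrt_mul hκ.le]
          have : 0 < √lam := Real.sqrt_pos.2 hlam
          have : 0 < √κ := Real.sqrt_pos.2 hκ
          have : 0 < √ρ := Real.sqrt_pos.2 hρ
          field_simp
          rw [Real.sq_sqrt hlam.le]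
          ring
      _ ≤ 180 * C * (lam / κ + √(lam / (κ * ρ))) := by
          gcongr
          exact le_add_of_nonneg_left (by positivity)

lemma integral_mul_besselDeriv_eq_add (h : IsCurvedPhase φ φ' φ'' κ ρ (lam / 2) (2 * lam))
    (hlam : 0 < lam) (hy : 0 < y) :
    ∫ r in (lam / 2)..(2 * lam), Complex.exp (φ r * Complex.I) * (r * (besselDeriv 0 (r * y) : ℂ)) =
      (∫ r in (lam / 2)..(2 * lam),
        Complex.exp ((φ r + y * r : ℝ) * Complex.I) * (r * besselAmplitude (r * y))) +
      ∫ r in (lam / 2)..(2 * lam),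
        Complex.exp ((φ r + -y * r : ℝ) * Complex.I) * (r * conj (besselAmplitude (r * y))) := by
  have huIcc : uIcc (lam / 2) (2 * lam) = Icc (lam / 2) (2 * lam) := uIcc_of_le (by linarith)
  have hamp : ContinuousOn (fun r => besselAmplitude (r * y)) (uIcc (lam / 2) (2 * lam)) :=
    huIcc ▸ fun r hr => ((hasDerivAt_besselAmplitude (mul_pos (by linarith [hr.1]) hy)).continuousAt
      |>.comp (f := (· * y)) (by fun_prop)).continuousWithinAt
  rw [← intervalIntegral.integral_add]
  · refine intervalIntegral.integral_congr fun r _ => ?_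
    have hadd (c : ℝ) : Complex.exp ((φ r + c * r : ℝ) * Complex.I) =
        Complex.exp (φ r * Complex.I) * Complex.exp ((c * r : ℝ) * Complex.I) := by
      rw [← Complex.exp_add]
      push_cast
      ring_nf
    simp only [besselDeriv_zero_eq_amplitude, hadd]
    rw [mul_comm y, neg_mul, mul_comm y]
    ring
  · exact ((huIcc ▸ h.continuousOn_cexp_add_mul y).mul
      (Complex.continuous_ofReal.continuousOn.mul hamp)).intervalIntegrable
  · exact ((huIcc ▸ h.continuousOn_cexp_add_mul (-y)).mul
      (Complex.continuous_ofReal.continuousOn.mul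
        (Complex.continuous_conj.comp_continuousOn hamp))).intervalIntegrable

theorem norm_integral_mul_besselDeriv_le (h : IsCurvedPhase φ φ' φ'' κ ρ (lam / 2) (2 * lam))
    (hlam : 0 < lam) (hκ : 0 < κ) (hρ : 0 < ρ) (hy : 0 ≤ y) :
    ‖∫ r in (lam / 2)..(2 * lam),
        Complex.exp (φ r * Complex.I) * (r * (besselDeriv 0 (r * y) : ℂ))‖ ≤
      9000 * (lam / κ + √(lam / (κ * ρ))) := by
  rcases le_or_gt (lam * y) 2 with hlamy | hlamy
  · refine (h.norm_integral_mul_besselDeriv_le_of_mul_le_two hlam hκ hρ hy hlamy).trans ?_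
    gcongr
    · norm_num
    · exact le_add_of_nonneg_right (Real.sqrt_nonneg _)
  · have hb' (s : ℝ) (hs : 1 ≤ s) : ‖besselAmplitudeDeriv s‖ ≤ 25 / (s * √s) :=
      (norm_besselAmplitudeDeriv_le hs).trans (by gcongr; norm_num)
    have hpos := h.norm_integral_mul_amplitude_le hlam hκ hρ hlamy (abs_of_nonneg hy)
      (fun s hs => hasDerivAt_besselAmplitude hs) continuousOn_besselAmplitudeDeriv
      (fun s hs => norm_besselAmplitude_le hs) hb'
    have hneg := h.norm_integral_mul_amplitude_le hlam hκ hρ hlamy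
      ((abs_neg y).trans (abs_of_nonneg hy))
      (fun s hs => (hasDerivAt_besselAmplitude hs).star)
      (Complex.continuous_conj.comp_continuousOn continuousOn_besselAmplitudeDeriv)
      (fun s hs => (RCLike.norm_conj _).trans_le (norm_besselAmplitude_le hs))
      (fun s hs => (RCLike.norm_conj _).trans_le (hb' s hs))
    rw [h.integral_mul_besselDeriv_eq_add hlam (pos_of_mul_pos_right (two_pos.trans hlamy) hlam.le)]
    refine (norm_add_le _ _).trans ((add_le_add hpos hneg).trans_eq ?_)
    ring

end IsCurvedPhase

end RadialIntegral

/-! ### The kernel of the propagator -/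

section Annulus

open Set

variable {a b : ℝ}

/-- The closed annulus `{a ≤ ‖ξ‖ ≤ b}` of frequencies. -/
def annulus (a b : ℝ) : Set E2 := {ξ | ‖ξ‖ ∈ Icc a b}

lemma measurableSet_annulus (a b : ℝ) : MeasurableSet (annulus a b) :=
  measurableSet_Icc.preimage measurable_norm

lemma volume_annulus_ne_top (a b : ℝ) : volume (annulus a b) ≠ ∞ :=
  measure_ne_top_of_subset (fun _ hξ => mem_closedBall_zero_iff.2 hξ.2)
    (measure_closedBall_lt_top (x := (0 : E2)) (r := b)).ne

lemma inner_complexPolarCoord_symm (p : ℝ × ℝ) (w : ℂ) :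
    inner ℝ (Complex.polarCoord.symm p) w = p.1 * ‖w‖ * Real.cos (p.2 - w.arg) := by
  have hre := Complex.norm_mul_cos_arg w
  have him := Complex.norm_mul_sin_arg w
  rw [Complex.polarCoord_symm_apply, Complex.inner, Real.cos_sub]
  simp only [map_mul, map_add, Complex.conj_ofReal, Complex.conj_I, Complex.mul_re, Complex.add_re,
    Complex.add_im, Complex.mul_im, Complex.ofReal_re, Complex.ofReal_im, Complex.neg_re,
    Complex.neg_im, Complex.I_re, Complex.I_im]
  linear_combination (-p.1 * Real.cos p.2) * hre - (p.1 * Real.sin p.2) * him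

lemma intervalIntegral_cexp_mul_cos_sub (s α : ℝ) :
    ∫ θ in -Real.pi..Real.pi, Complex.exp ((s * Real.cos (θ - α) : ℝ) * Complex.I) =
      besselDeriv 0 s := by
  have hper : Function.Periodic
      (fun θ : ℝ => Complex.exp ((s * Real.cos θ : ℝ) * Complex.I)) (2 * Real.pi) := fun θ => by
    simp only [Real.cos_add_two_pi]
  rw [← intervalIntegral_cexp_mul_cos, intervalIntegral.integral_comp_sub_right
    (fun θ => Complex.exp ((s * Real.cos θ : ℝ) * Complex.I))]
  convert hper.intervalIntegral_add_eq (-Real.pi - α) (-Real.pi) using 2 <;> ring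

lemma setIntegral_annulus_eq_polarCoord (ha : 0 < a) (F : ℂ → ℂ) :
    ∫ ξ in annulus a b, F (Complex.orthonormalBasisOneI.repr.symm ξ) =
      ∫ p in Icc a b ×ˢ Ioo (-Real.pi) Real.pi, p.1 • F (Complex.polarCoord.symm p) := by
  let e : E2 ≃ₗᵢ[ℝ] ℂ := Complex.orthonormalBasisOneI.repr.symm
  let A : Set ℂ := {w | ‖w‖ ∈ Icc a b}
  have hA : MeasurableSet A := measurableSet_Icc.preimage measurable_norm
  have hpre : annulus a b = e ⁻¹' A := by
    ext ξ
    simp [annulus, A]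
  have htarget : polarCoord.target ∩ Prod.fst ⁻¹' Icc a b = Icc a b ×ˢ Ioo (-Real.pi) Real.pi := by
    ext p
    simp only [polarCoord_target, mem_inter_iff, mem_prod, mem_Ioi, mem_preimage]
    exact ⟨fun h => ⟨h.2, h.1.2⟩, fun h => ⟨⟨ha.trans_le h.1.1, h.2⟩, h.1⟩⟩
  rw [hpre, e.measurePreserving.setIntegral_preimage_emb
      e.toHomeomorph.measurableEmbedding F A, ← integral_indicator hA,
    ← Complex.integral_comp_polarCoord_symm, ← htarget,
    ← setIntegral_indicator (measurableSet_Icc.preimage measurable_fst)]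
  refine setIntegral_congr_fun polarCoord.open_target.measurableSet fun p hp => ?_
  have hp1 : ‖Complex.polarCoord.symm p‖ = p.1 :=
    (Complex.norm_polarCoord_symm p).trans (abs_of_pos hp.1)
  simp only [indicator, A, mem_ofPred_eq, hp1, mem_preimage]
  split_ifs <;> simp

lemma setIntegral_annulus_cexp_inner_mul (ha : 0 < a) (hab : a ≤ b) {g : ℝ → ℂ}
    (hg : Continuous g) (x : E2) :
    ∫ ξ in annulus a b, Complex.exp ((2 * Real.pi * inner ℝ ξ x : ℝ) * Complex.I) * g ‖ξ‖ =
      ∫ r in a..b, g r * (r * (besselDeriv 0 (r * (2 * Real.pi * ‖x‖)) : ℂ)) := by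
  let e : E2 ≃ₗᵢ[ℝ] ℂ := Complex.orthonormalBasisOneI.repr.symm
  let F : ℂ → ℂ := fun w =>
    Complex.exp ((2 * Real.pi * inner ℝ w (e x) : ℝ) * Complex.I) * g ‖w‖
  have hF : ∀ ξ, Complex.exp ((2 * Real.pi * inner ℝ ξ x : ℝ) * Complex.I) * g ‖ξ‖ = F (e ξ) :=
    fun ξ => by simp only [F, e.inner_map_map, e.norm_map]
  have hpolar : ∀ p ∈ Icc a b ×ˢ Ioo (-Real.pi) Real.pi, p.1 • F (Complex.polarCoord.symm p) =
      p.1 * g p.1 * Complex.exp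
        ((p.1 * (2 * Real.pi * ‖x‖) * Real.cos (p.2 - (e x).arg) : ℝ) * Complex.I) := by
    intro p hp
    simp only [F, inner_complexPolarCoord_symm, e.norm_map, Complex.norm_polarCoord_symm,
      abs_of_pos (ha.trans_le hp.1.1), Complex.real_smul]
    ring_nf
  have hint : IntegrableOn (fun p : ℝ × ℝ => p.1 * g p.1 * Complex.exp
      ((p.1 * (2 * Real.pi * ‖x‖) * Real.cos (p.2 - (e x).arg) : ℝ) * Complex.I))
      (Icc a b ×ˢ Ioo (-Real.pi) Real.pi) (volume.prod volume) :=
    ((by fun_prop : Continuous _).continuousOn.integrableOn_compact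
      (isCompact_Icc.prod isCompact_Icc)).mono_set (prod_mono le_rfl Ioo_subset_Icc_self)
  simp_rw [hF]
  rw [setIntegral_annulus_eq_polarCoord ha,
    setIntegral_congr_fun (measurableSet_Icc.prod measurableSet_Ioo) hpolar,
    Measure.volume_eq_prod, setIntegral_prod _ hint, integral_Icc_eq_integral_Ioc,
    ← intervalIntegral.integral_of_le hab]
  refine intervalIntegral.integral_congr fun r _ => ?_
  simp only
  rw [← integral_Ioc_eq_integral_Ioo, ← intervalIntegral.integral_of_le (by linarith [Real.pi_pos]),
    intervalIntegral.integral_const_mul, intervalIntegral_cexp_mul_cos_sub]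
  ring

end Annulus

section WaveKernel

open Set

variable {μ lam τ : ℝ}

/-- The constant `μ^{-1/2} ⟨√μ λ⟩^{3/2}` of the dispersive estimate. -/
def dispersiveConst (μ lam : ℝ) : ℝ := μ ^ (-(1 : ℝ) / 2) * jap (√μ * lam) ^ ((3 : ℝ) / 2)

/-- The phase `m₂(√μ ξ) / √μ` of the propagator `S_{μ,2}`. -/
def wavePhase (μ : ℝ) (ξ : E2) : ℝ := waveSymbol (√μ * ‖ξ‖) / √μ

lemma continuous_wavePhase (μ : ℝ) : Continuous (wavePhase μ) :=
  (continuous_waveSymbol.comp (continuous_const.mul continuous_norm)).div_const _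

lemma dispersiveConst_eq (hμ : 0 < μ) (lam : ℝ) :
    dispersiveConst μ lam = jap (√μ * lam) * √(jap (√μ * lam)) / √μ := by
  have hj : 0 < jap (√μ * lam) := jap_pos _
  rw [dispersiveConst, show (3 : ℝ) / 2 = 1 + 1 / 2 by norm_num, Real.rpow_add hj, Real.rpow_one,
    ← Real.sqrt_eq_rpow, neg_div, Real.rpow_neg hμ.le, ← Real.sqrt_eq_rpow]
  ring

lemma dispersiveConst_pos (hμ : 0 < μ) (lam : ℝ) : 0 < dispersiveConst μ lam :=
  mul_pos (Real.rpow_pos_of_pos hμ _) (Real.rpow_pos_of_pos (jap_pos _) _)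

lemma isCurvedPhase_wavePhase (hμ : 0 < μ) (hlam : 0 < lam) (τ : ℝ) :
    IsCurvedPhase (fun r => τ * (waveSymbol (√μ * r) / √μ)) (fun r => τ * waveSymbolDeriv (√μ * r))
      (fun r => τ * (√μ * waveSymbolDeriv2 (√μ * r)))
      (|τ| * (1 / (4 * √(jap (√μ * lam)))))
      (|τ| * (√μ * (√μ * lam / (57600 * (jap (√μ * lam) ^ 2 * √(jap (√μ * lam)))))))
      (lam / 2) (2 * lam) := by
  have hs : 0 < √μ := Real.sqrt_pos.2 hμ
  have hpos : ∀ r ∈ Icc (lam / 2) (2 * lam), 0 < √μ * r := fun r hr =>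
    mul_pos hs (by linarith [hr.1])
  have hlo : ∀ r ∈ Icc (lam / 2) (2 * lam), √μ * lam / 2 ≤ √μ * r := fun r hr => by
    nlinarith [hr.1]
  have hhi : ∀ r ∈ Icc (lam / 2) (2 * lam), √μ * r ≤ 2 * (√μ * lam) := fun r hr => by
    nlinarith [hr.2]
  have hscale : ∀ r, HasDerivAt (fun r => √μ * r) (√μ) r := fun r => by
    simpa using (hasDerivAt_id r).const_mul √μ
  refine ⟨fun r hr => ?_, fun r hr => ?_, ?_, fun r hr => ?_, fun r hr => ?_⟩
  · refine (((hasDerivAt_waveSymbol (hpos r hr)).comp r (hscale r)).div_const √μ |>.const_mul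
      τ).congr_deriv ?_
    field_simp
  · refine (((hasDerivAt_waveSymbolDeriv (hpos r hr)).comp r (hscale r)).const_mul
      τ).congr_deriv ?_
    ring
  · exact ((continuousOn_waveSymbolDeriv2.comp (by fun_prop) hpos).const_mul √μ).const_mul τ
  · rw [abs_mul]
    gcongr
    exact (inv_sqrt_jap_le_waveSymbolDeriv (hpos r hr) (hhi r hr)).trans (le_abs_self _)
  · rw [abs_mul, abs_mul, abs_of_pos hs]
    gcongr
    exact (div_jap_le_neg_waveSymbolDeriv2 (mul_pos hs hlam) (hlo r hr) (hhi r hr)).trans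
      (neg_le_abs _)

lemma norm_waveKernel_le (hμ : 0 < μ) (hlam : 0 < lam) (hτ : τ ≠ 0) (x : E2) :
    ‖∫ ξ in annulus (lam / 2) (2 * lam), Complex.exp ((2 * Real.pi * inner ℝ ξ x : ℝ) * Complex.I) *
      Complex.exp ((τ * wavePhase μ ξ : ℝ) * Complex.I)‖ ≤
      4356000 * dispersiveConst μ lam / |τ| := by
  have : 0 < √μ := Real.sqrt_pos.2 hμ
  have : 0 < |τ| := abs_pos.2 hτ
  have hJ : 0 < jap (√μ * lam) := jap_pos _
  have hg : Continuous
      (fun r => Complex.exp ((τ * (waveSymbol (√μ * r) / √μ) : ℝ) * Complex.I)) := by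
    have := continuous_waveSymbol
    fun_prop
  have hbound := (isCurvedPhase_wavePhase hμ hlam τ).norm_integral_mul_besselDeriv_le hlam
    (y := 2 * Real.pi * ‖x‖) (by positivity) (by positivity) (by positivity)
  rw [← setIntegral_annulus_cexp_inner_mul (by positivity) (by linarith) hg] at hbound
  refine hbound.trans ?_
  rw [dispersiveConst_eq hμ]
  set J := jap (√μ * lam)
  have hnonstat : lam / (|τ| * (1 / (4 * √J))) ≤ 4 * (J * √J / √μ / |τ|) := by
    rw [show lam / (|τ| * (1 / (4 * √J))) = 4 * (√μ * lam * √J / √μ / |τ|) by field_simp]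
    gcongr
    exact le_jap _
  have hstat : √(lam / (|τ| * (1 / (4 * √J)) *
      (|τ| * (√μ * (√μ * lam / (57600 * (J ^ 2 * √J))))))) = 480 * (J * √J / √μ / |τ|) := by
    rw [Real.sqrt_eq_iff_mul_self_eq_of_pos (by positivity)]
    field_simp
    norm_num
  rw [hstat]
  linarith [show 4356000 * (J * √J / √μ) / |τ| = 9000 * (484 * (J * √J / √μ / |τ|)) by ring]

end WaveKernel

/-! ### The Fourier transform on `L¹ ∩ L²` -/

section Fourier

open scoped ComplexConjugate

variable {V E F : Type*} [NormedAddCommGroup V] [InnerProductSpace ℝ V] [FiniteDimensional ℝ V]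
  [MeasurableSpace V] [BorelSpace V] [NormedAddCommGroup E] [NormedSpace ℂ E]
  [NormedAddCommGroup F] [InnerProductSpace ℂ F] [CompleteSpace F]

lemma continuous_fourier_of_integrable {f : V → E} (hf : Integrable f) : Continuous (𝓕 f) :=
  VectorFourier.fourierIntegral_continuous Real.continuous_fourierChar continuous_inner hf

lemma continuous_fourierInv_of_integrable {f : V → E} (hf : Integrable f) :
    Continuous (𝓕⁻ f) :=
  VectorFourier.fourierIntegral_continuous (L := -innerₗ V) Real.continuous_fourierChar
    continuous_inner.neg hf

lemma norm_fourier_le_integral_norm (f : V → E) (ξ : V) : ‖𝓕 f ξ‖ ≤ ∫ x, ‖f x‖ :=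
  VectorFourier.norm_fourierIntegral_le_integral_norm _ _ _ _ _

lemma fourierInv_add_of_integrable {f g : V → E} (hf : Integrable f) (hg : Integrable g) :
    𝓕⁻ (f + g) = 𝓕⁻ f + 𝓕⁻ g :=
  VectorFourier.fourierIntegral_add (L := -innerₗ V) Real.continuous_fourierChar
    continuous_inner.neg hf hg

lemma integral_fourierInv_mul_conj {f g : V → ℂ} (hf : Integrable f) (hg : Integrable g) :
    ∫ x, 𝓕⁻ f x * conj (g x) = ∫ ξ, f ξ * conj (𝓕 g ξ) := by
  have h := VectorFourier.integral_sesq_fourierIntegral_eq_neg_flip (innerSL ℂ) (L := innerₗ V)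
    Real.continuous_fourierChar continuous_inner hg hf
  simp only [innerSL_apply_apply, RCLike.inner_apply, flip_innerₗ] at h
  exact h.symm

lemma fourier_ae_eq_coeFn_fourier_toLp {f : V → F} (h₁ : Integrable f) (h₂ : MemLp f 2) :
    𝓕 f =ᵐ[volume] (𝓕 (h₂.toLp f) : Lp F 2 (volume : Measure V)) := by
  refine ae_eq_of_integral_contDiff_smul_eq (continuous_fourier_of_integrable h₁).locallyIntegrable
    ((Lp.memLp (𝓕 (h₂.toLp f))).locallyIntegrable one_le_two) fun g hg hgc => ?_
  have hg' : ContDiff ℝ (⊤ : ℕ∞) (Complex.ofRealCLM ∘ g) := by fun_prop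
  have hgc' : HasCompactSupport (Complex.ofRealCLM ∘ g) := hgc.comp_left rfl
  let G : 𝓢(V, ℂ) := hgc'.toSchwartzMap hg'
  have hdistr := congrArg (· G) (Lp.fourier_toTemperedDistribution_eq (h₂.toLp f))
  simp only [TemperedDistribution.fourier_apply, Lp.toTemperedDistribution_apply] at hdistr
  calc ∫ x, g x • 𝓕 f x = ∫ x, G x • 𝓕 f x := rfl
    _ = ∫ x, 𝓕 G x • f x := by
      simpa using! (VectorFourier.integral_fourierIntegral_smul_eq_flip (L := innerₗ V)
        Real.continuous_fourierChar continuous_inner (G.integrable (μ := volume)) h₁).symm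
    _ = ∫ x, 𝓕 G x • h₂.toLp f x := integral_congr_ae <| by
      filter_upwards [h₂.coeFn_toLp] with x hx
      rw [hx]
    _ = ∫ x, g x • (𝓕 (h₂.toLp f) : Lp F 2 (volume : Measure V)) x := hdistr

lemma eLpNorm_fourier_eq {f : V → F} (h₁ : Integrable f) (h₂ : MemLp f 2) :
    eLpNorm (𝓕 f) 2 volume = eLpNorm f 2 volume := by
  rw [eLpNorm_congr_ae (fourier_ae_eq_coeFn_fourier_toLp h₁ h₂), ← Lp.enorm_def,
    ← eLpNorm_congr_ae h₂.coeFn_toLp, ← Lp.enorm_def, ← ofReal_norm, ← ofReal_norm,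
    Lp.norm_fourier_eq]

lemma eLpNorm_fourierInv_eq {f : V → F} (h₁ : Integrable f) (h₂ : MemLp f 2) :
    eLpNorm (𝓕⁻ f) 2 volume = eLpNorm f 2 volume := by
  have h : 𝓕⁻ f = 𝓕 f ∘ Neg.neg := funext fun x => Real.fourierInv_eq_fourier_neg f x
  rw [h, ← eLpNorm_fourier_eq h₁ h₂]
  exact eLpNorm_comp_measurePreserving (continuous_fourier_of_integrable h₁).aestronglyMeasurable
    (Measure.measurePreserving_neg volume)

end Fourier

/-! ### Interpolation between `L¹ → L^∞` and `L² → L²` -/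

section Interpolation

variable {X Y E F : Type*} [MeasurableSpace X] [MeasurableSpace Y] {ν : Measure X} {m : Measure Y}
  [NormedAddCommGroup E] [NormedAddCommGroup F]

lemma setLIntegral_Ioc_ofReal_rpow {s b : ℝ} (hs : -1 < s) (hb : 0 ≤ b) :
    ∫⁻ t in Set.Ioc 0 b, ENNReal.ofReal (t ^ s) = ENNReal.ofReal (b ^ (s + 1) / (s + 1)) := by
  have hi := (intervalIntegral.intervalIntegrable_rpow' (a := 0) (b := b) hs)
  rw [intervalIntegrable_iff_integrableOn_Ioc_of_le hb] at hi
  rw [← ofReal_integral_eq_lintegral_ofReal hi, ← intervalIntegral.integral_of_le hb,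
    integral_rpow (Or.inl hs), Real.zero_rpow (by linarith), sub_zero]
  filter_upwards [ae_restrict_mem measurableSet_Ioc] with t ht
  exact Real.rpow_nonneg ht.1.le _

lemma measurableSet_mul_norm_rpow_le {f : Y → E} (hf : StronglyMeasurable f) (t A κ : ℝ) :
    MeasurableSet {y | t * ‖f y‖ ^ κ ≤ A} :=
  measurableSet_le ((hf.norm.measurable.pow_const κ).const_mul t) measurable_const

lemma mul_eLpNorm_one_indicator_compl_le {f : Y → E} (hf : StronglyMeasurable f) {p t A : ℝ}
    {B : ℝ≥0∞} (hp : 1 < p) (ht : 0 ≤ t) (hA : 0 < A)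
    (hBA : B * ∫⁻ y, ‖f y‖ₑ ^ p ∂m ≤ ENNReal.ofReal A) :
    B * eLpNorm ({y | t * ‖f y‖ ^ (p - 1) ≤ A}ᶜ.indicator f) 1 m ≤ ENNReal.ofReal t := by
  have hS := (measurableSet_mul_norm_rpow_le hf t A (p - 1)).compl
  have hle : ∀ y ∈ {y | t * ‖f y‖ ^ (p - 1) ≤ A}ᶜ,
      ‖f y‖ₑ ≤ ENNReal.ofReal (t / A) * ‖f y‖ₑ ^ p := fun y hy => by
    have hlarge : A < t * ‖f y‖ ^ (p - 1) := not_le.1 hy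
    rw [← ofReal_norm, ENNReal.ofReal_rpow_of_nonneg (norm_nonneg _) (by linarith),
      ← ENNReal.ofReal_mul (by positivity)]
    refine ENNReal.ofReal_le_ofReal ?_
    calc ‖f y‖ ≤ (t * ‖f y‖ ^ (p - 1) / A) * ‖f y‖ :=
          le_mul_of_one_le_left (norm_nonneg _) ((one_le_div hA).2 hlarge.le)
      _ = t / A * (‖f y‖ ^ (p - 1) * ‖f y‖ ^ (1 : ℝ)) := by rw [Real.rpow_one]; ring
      _ = t / A * ‖f y‖ ^ p := by
          rw [← Real.rpow_add_of_nonneg (norm_nonneg _) (by linarith) zero_le_one, sub_add_cancel]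
  rw [eLpNorm_indicator_eq_eLpNorm_restrict hS, eLpNorm_one_eq_lintegral_enorm]
  calc B * ∫⁻ y in {y | t * ‖f y‖ ^ (p - 1) ≤ A}ᶜ, ‖f y‖ₑ ∂m
      ≤ B * ∫⁻ y, ENNReal.ofReal (t / A) * ‖f y‖ₑ ^ p ∂m := by
        gcongr B * ?_
        exact (setLIntegral_mono' hS hle).trans (setLIntegral_le_lintegral _ _)
    _ = ENNReal.ofReal (t / A) * (B * ∫⁻ y, ‖f y‖ₑ ^ p ∂m) := by
        rw [lintegral_const_mul' _ _ ENNReal.ofReal_ne_top, mul_left_comm]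
    _ ≤ ENNReal.ofReal (t / A) * ENNReal.ofReal A := by gcongr
    _ = ENNReal.ofReal t := by rw [← ENNReal.ofReal_mul (by positivity), div_mul_cancel₀ _ hA.ne']

lemma setLIntegral_Ioi_indicator_le {r p a A : ℝ} (hrp : r.HolderConjugate p) (hr : 2 < r)
    (hA : 0 < A) (ha : 0 ≤ a) :
    ∫⁻ t in Set.Ioi 0, {t : ℝ | t * a ^ (p - 1) ≤ A}.indicator
        (fun t => ENNReal.ofReal (t ^ (r - 3)) * ENNReal.ofReal a ^ (2 : ℝ)) t ≤
      ENNReal.ofReal (A ^ (r - 2) / (r - 2)) * ENNReal.ofReal a ^ p := by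
  rcases ha.eq_or_lt with rfl | ha
  · simp [Set.indicator_apply]
  have hc : 0 < a ^ (p - 1) := Real.rpow_pos_of_pos ha _
  have hset : {t : ℝ | t * a ^ (p - 1) ≤ A} ∩ Set.Ioi 0 = Set.Ioc 0 (A / a ^ (p - 1)) := by
    ext t
    simp [le_div_iff₀ hc, and_comm]
  have hexp : (a ^ (p - 1)) ^ (r - 2) * a ^ p = a ^ (2 : ℝ) := by
    rw [← Real.rpow_mul ha.le, ← Real.rpow_add ha]
    congr 1
    linarith [hrp.mul_eq_add]
  have : 0 < r - 2 := by linarith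
  rw [setLIntegral_indicator (measurableSet_le (by fun_prop) measurable_const), hset,
    lintegral_mul_const _ (by fun_prop), setLIntegral_Ioc_ofReal_rpow (by linarith) (by positivity),
    ENNReal.ofReal_rpow_of_pos ha, ENNReal.ofReal_rpow_of_pos ha, ← hexp,
    ← ENNReal.ofReal_mul (by rw [show r - 3 + 1 = r - 2 by ring]; positivity),
    ← ENNReal.ofReal_mul (by positivity), Real.div_rpow hA.le hc.le,
    show r - 3 + 1 = r - 2 by ring]
  refine ENNReal.ofReal_le_ofReal (le_of_eq ?_)
  field_simp

/-- `IsRestrictedType T f B ν m` says that the operator `T`, restricted to the truncations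
`S.indicator f` of the single function `f`, is subadditive, bounded from `L¹(m)` to the bounded
functions with norm `B`, and contracts `L²(m)` into `L²(ν)`. This is all that real interpolation
needs to know about `T`. -/
structure IsRestrictedType (T : (Y → E) → X → F) (f : Y → E) (B : ℝ≥0∞) (ν : Measure X)
    (m : Measure Y) : Prop where
  aestronglyMeasurable : ∀ S, MeasurableSet S → AEStronglyMeasurable (T (S.indicator f)) ν
  enorm_le_add : ∀ S, MeasurableSet S → ∀ x,
    ‖T f x‖ₑ ≤ ‖T (Sᶜ.indicator f) x‖ₑ + ‖T (S.indicator f) x‖ₑ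
  enorm_le : ∀ S, MeasurableSet S → ∀ x,
    ‖T (S.indicator f) x‖ₑ ≤ B * eLpNorm (S.indicator f) 1 m
  eLpNorm_two_le : ∀ S, MeasurableSet S →
    eLpNorm (T (S.indicator f)) 2 ν ≤ eLpNorm (S.indicator f) 2 m

namespace IsRestrictedType

variable {T : (Y → E) → X → F} {f : Y → E} {B : ℝ≥0∞} {r p : ℝ}

/-- The large part of `f` contributes at most `t` to `T f`, so where `2 t < ‖T f‖` the small part
contributes at least `t`, and Chebyshev's inequality in `L²` applies to it. -/
lemma measure_lt_half_norm_le (h : IsRestrictedType T f B ν m) (hf : StronglyMeasurable f)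
    {t A : ℝ} (hp : 1 < p) (ht : 0 < t) (hA : 0 < A)
    (hBA : B * ∫⁻ y, ‖f y‖ₑ ^ p ∂m ≤ ENNReal.ofReal A) :
    ν {x | t < ‖T f x‖ / 2} ≤ ENNReal.ofReal (t ^ (-2 : ℝ)) *
      ∫⁻ y in {y | t * ‖f y‖ ^ (p - 1) ≤ A}, ‖f y‖ₑ ^ (2 : ℝ) ∂m := by
  set S : Set Y := {y | t * ‖f y‖ ^ (p - 1) ≤ A}
  have hS : MeasurableSet S := measurableSet_mul_norm_rpow_le hf t A (p - 1)
  have hlarge (x : X) : ‖T (Sᶜ.indicator f) x‖ₑ ≤ ENNReal.ofReal t :=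
    (h.enorm_le _ hS.compl x).trans (mul_eLpNorm_one_indicator_compl_le hf hp ht.le hA hBA)
  have hsmall (x : X) (hx : t < ‖T f x‖ / 2) : ENNReal.ofReal t ≤ ‖T (S.indicator f) x‖ₑ := by
    refine (ENNReal.add_le_add_iff_left (ENNReal.ofReal_ne_top (r := t))).1 ?_
    calc ENNReal.ofReal t + ENNReal.ofReal t = ENNReal.ofReal (t + t) :=
          (ENNReal.ofReal_add ht.le ht.le).symm
      _ ≤ ‖T f x‖ₑ := by rw [← ofReal_norm]; exact ENNReal.ofReal_le_ofReal (by linarith)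
      _ ≤ _ := (h.enorm_le_add S hS x).trans (by gcongr; exact hlarge x)
  calc ν {x | t < ‖T f x‖ / 2} ≤ ν {x | ENNReal.ofReal t ≤ ‖T (S.indicator f) x‖ₑ} :=
        measure_mono hsmall
    _ ≤ (ENNReal.ofReal t)⁻¹ ^ (2 : ℝ) * eLpNorm (T (S.indicator f)) 2 ν ^ (2 : ℝ) :=
        meas_ge_le_mul_pow_eLpNorm_enorm ν two_ne_zero ENNReal.ofNat_ne_top
          (h.aestronglyMeasurable S hS) (by simpa using ht) (by simp)
    _ ≤ (ENNReal.ofReal t)⁻¹ ^ (2 : ℝ) * eLpNorm (S.indicator f) 2 m ^ (2 : ℝ) := by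
        gcongr
        exact h.eLpNorm_two_le S hS
    _ = _ := by
        rw [ENNReal.inv_rpow, ENNReal.ofReal_rpow_of_pos ht, ← ENNReal.ofReal_inv_of_pos
          (by positivity), ← Real.rpow_neg ht.le, eLpNorm_indicator_eq_eLpNorm_restrict hS,
          eLpNorm_eq_lintegral_rpow_enorm_toReal two_ne_zero ENNReal.ofNat_ne_top,
          ENNReal.toReal_ofNat, ← ENNReal.rpow_mul]
        norm_num

/-- The layer-cake integral of the weak-type bound, with the order of integration exchanged. -/
lemma lintegral_half_norm_rpow_le [SFinite m] (h : IsRestrictedType T f B ν m)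
    (hf : StronglyMeasurable f) {A : ℝ} (hrp : r.HolderConjugate p) (hr : 2 < r) (hA : 0 < A)
    (hBA : B * ∫⁻ y, ‖f y‖ₑ ^ p ∂m ≤ ENNReal.ofReal A) :
    ∫⁻ t in Set.Ioi (0 : ℝ), ν {x | t < ‖T f x‖ / 2} * ENNReal.ofReal (t ^ (r - 1)) ≤
      ENNReal.ofReal (A ^ (r - 2) / (r - 2)) * ∫⁻ y, ‖f y‖ₑ ^ p ∂m := by
  let Q (t : ℝ) (y : Y) : ℝ≥0∞ := {z : ℝ × Y | z.1 * ‖f z.2‖ ^ (p - 1) ≤ A}.indicator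
    (fun z => ENNReal.ofReal (z.1 ^ (r - 3)) * ENNReal.ofReal ‖f z.2‖ ^ (2 : ℝ)) (t, y)
  have hQ : Measurable (Function.uncurry Q) := by
    have hn : Measurable fun z : ℝ × Y => ‖f z.2‖ := hf.norm.measurable.comp measurable_snd
    exact Measurable.indicator (by fun_prop)
      (measurableSet_le (measurable_fst.mul (hn.pow_const _)) measurable_const)
  calc ∫⁻ t in Set.Ioi (0 : ℝ), ν {x | t < ‖T f x‖ / 2} * ENNReal.ofReal (t ^ (r - 1))
      ≤ ∫⁻ t in Set.Ioi (0 : ℝ), ∫⁻ y, Q t y ∂m := by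
        refine setLIntegral_mono' measurableSet_Ioi fun t (ht : 0 < t) => ?_
        refine (mul_le_mul_left
          (h.measure_lt_half_norm_le hf hrp.symm.lt ht hA hBA) _).trans_eq ?_
        rw [mul_right_comm, ← ENNReal.ofReal_mul (by positivity), ← Real.rpow_add ht,
          ← lintegral_const_mul' _ _ ENNReal.ofReal_ne_top,
          ← lintegral_indicator (measurableSet_mul_norm_rpow_le hf t A _)]
        refine lintegral_congr fun y => ?_
        simp only [Q, Set.indicator_apply, Set.mem_ofPred_eq, ofReal_norm]
        ring_nf
    _ = ∫⁻ y, (∫⁻ t in Set.Ioi (0 : ℝ), Q t y) ∂m := lintegral_lintegral_swap hQ.aemeasurable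
    _ ≤ ∫⁻ y, ENNReal.ofReal (A ^ (r - 2) / (r - 2)) * ‖f y‖ₑ ^ p ∂m :=
        lintegral_mono fun y => by
          rw [← ofReal_norm]
          exact setLIntegral_Ioi_indicator_le hrp hr hA (norm_nonneg (f y))
    _ = _ := lintegral_const_mul' _ _ ENNReal.ofReal_ne_top

lemma lintegral_enorm_rpow_le [SFinite m] (h : IsRestrictedType T f B ν m)
    (hf : StronglyMeasurable f) {A : ℝ} (hrp : r.HolderConjugate p) (hr : 2 < r) (hA : 0 < A)
    (hBA : B * ∫⁻ y, ‖f y‖ₑ ^ p ∂m ≤ ENNReal.ofReal A) :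
    ∫⁻ x, ‖T f x‖ₑ ^ r ∂ν ≤
      ENNReal.ofReal (2 ^ r * (r / (r - 2)) * A ^ (r - 2)) * ∫⁻ y, ‖f y‖ₑ ^ p ∂m := by
  have hT : AEStronglyMeasurable (T f) ν := by
    simpa using h.aestronglyMeasurable Set.univ MeasurableSet.univ
  have hhalf (x : X) : ‖T f x‖ₑ ^ r =
      ENNReal.ofReal (2 ^ r) * ENNReal.ofReal ((‖T f x‖ / 2) ^ r) := by
    rw [← ofReal_norm, ENNReal.ofReal_rpow_of_nonneg (norm_nonneg _) (by linarith),
      ← ENNReal.ofReal_mul (by positivity), ← Real.mul_rpow two_pos.le (by positivity),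
      mul_div_cancel₀ _ two_ne_zero]
  have : 0 < r - 2 := by linarith
  simp_rw [hhalf]
  rw [lintegral_const_mul' _ _ ENNReal.ofReal_ne_top, lintegral_rpow_eq_lintegral_meas_lt_mul ν
    (.of_forall fun x => by positivity) (hT.norm.aemeasurable.div_const 2) (by linarith)]
  calc _ ≤ ENNReal.ofReal (2 ^ r) * (ENNReal.ofReal r *
        (ENNReal.ofReal (A ^ (r - 2) / (r - 2)) * ∫⁻ y, ‖f y‖ₑ ^ p ∂m)) := by
        gcongr
        exact h.lintegral_half_norm_rpow_le hf hrp hr hA hBA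
    _ = _ := by
        rw [← mul_assoc, ← mul_assoc, ← ENNReal.ofReal_mul (by positivity),
          ← ENNReal.ofReal_mul (by positivity)]
        congr 2
        ring

/-- The truncation level `A` of the real interpolation argument may decrease to `B ∫ ‖f‖ᵖ`. -/
lemma lintegral_enorm_rpow_le_mul [SFinite m] (h : IsRestrictedType T f B ν m)
    (hf : StronglyMeasurable f) (hrp : r.HolderConjugate p) (hr : 2 < r) (hB : B ≠ ∞)
    (hfin : ∫⁻ y, ‖f y‖ₑ ^ p ∂m ≠ ∞) :
    ∫⁻ x, ‖T f x‖ₑ ^ r ∂ν ≤ ENNReal.ofReal (2 ^ r * (r / (r - 2))) *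
      (B * ∫⁻ y, ‖f y‖ₑ ^ p ∂m) ^ (r - 2) * ∫⁻ y, ‖f y‖ₑ ^ p ∂m := by
  have hC : 0 ≤ 2 ^ r * (r / (r - 2)) := by
    have : 0 < r - 2 := by linarith
    positivity
  set P := ∫⁻ y, ‖f y‖ₑ ^ p ∂m
  obtain ⟨A₀, hA₀⟩ : ∃ A₀ : NNReal, B * P = A₀ :=
    ⟨_, (ENNReal.coe_toNNReal (ENNReal.mul_ne_top hB hfin)).symm⟩
  have hlim : Filter.Tendsto
      (fun A : ℝ => ENNReal.ofReal (2 ^ r * (r / (r - 2)) * A ^ (r - 2)) * P)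
      (nhdsWithin (A₀ : ℝ) (Set.Ioi (A₀ : ℝ)))
      (nhds (ENNReal.ofReal (2 ^ r * (r / (r - 2)) * (A₀ : ℝ) ^ (r - 2)) * P)) := by
    refine (ENNReal.Tendsto.mul_const (ENNReal.tendsto_ofReal ?_) (.inr hfin)).mono_left
      nhdsWithin_le_nhds
    exact ((Real.continuous_rpow_const (by linarith)).const_mul _).tendsto _
  have hev : ∀ᶠ A in nhdsWithin (A₀ : ℝ) (Set.Ioi (A₀ : ℝ)), ∫⁻ x, ‖T f x‖ₑ ^ r ∂ν ≤
      ENNReal.ofReal (2 ^ r * (r / (r - 2)) * A ^ (r - 2)) * P := by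
    filter_upwards [self_mem_nhdsWithin] with A (hA : (A₀ : ℝ) < A)
    refine h.lintegral_enorm_rpow_le hf hrp hr (A₀.coe_nonneg.trans_lt hA) ?_
    rw [← ENNReal.ofReal_coe_nnreal] at hA₀
    exact hA₀.trans_le (ENNReal.ofReal_le_ofReal hA.le)
  refine (ge_of_tendsto hlim hev).trans_eq ?_
  rw [ENNReal.ofReal_mul hC, hA₀, ← ENNReal.ofReal_rpow_of_nonneg A₀.coe_nonneg (by linarith),
    ENNReal.ofReal_coe_nnreal]

end IsRestrictedType

/-- The constant in the interpolation inequality `‖T‖_{p → r} ≤ C ‖T‖_{1 → ∞}^{1 - 2/r}`. -/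
def interpolationConst (r : ℝ) : ℝ := (2 ^ r * (r / (r - 2))) ^ (1 / r)

lemma interpolationConst_pos {r : ℝ} (hr : 2 < r) : 0 < interpolationConst r := by
  have : 0 < r - 2 := sub_pos.2 hr
  exact Real.rpow_pos_of_pos (by positivity) _

theorem IsRestrictedType.lintegral_rpow_le [SFinite m] {T : (Y → E) → X → F} {f : Y → E}
    {B : ℝ≥0∞} {r p : ℝ} (h : IsRestrictedType T f B ν m) (hf : StronglyMeasurable f)
    (hrp : r.HolderConjugate p) (hr : 2 < r) (hB : B ≠ ∞) (hfin : ∫⁻ y, ‖f y‖ₑ ^ p ∂m ≠ ∞) :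
    (∫⁻ x, ‖T f x‖ₑ ^ r ∂ν) ^ (1 / r) ≤ ENNReal.ofReal (interpolationConst r) *
      B ^ (1 - 2 / r) * (∫⁻ y, ‖f y‖ₑ ^ p ∂m) ^ (1 / p) := by
  have : 0 < r - 2 := by linarith
  have hr0 : r ≠ 0 := by linarith
  have hP : (1 - 2 / r) + 1 / r = 1 / p := by
    have := hrp.inv_add_inv_eq_one
    simp only [div_eq_mul_inv]
    linarith
  refine (ENNReal.rpow_le_rpow (h.lintegral_enorm_rpow_le_mul hf hrp hr hB hfin)
    (by positivity)).trans_eq ?_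
  rw [ENNReal.mul_rpow_of_nonneg _ _ (by positivity),
    ENNReal.mul_rpow_of_nonneg _ _ (by positivity),
    ENNReal.ofReal_rpow_of_nonneg (by positivity) (by positivity), ← ENNReal.rpow_mul,
    show (r - 2) * (1 / r) = 1 - 2 / r by field_simp, ENNReal.mul_rpow_of_nonneg _ _
      (by rw [sub_nonneg, div_le_one] <;> linarith), mul_assoc, mul_assoc, ← hP,
    ENNReal.rpow_add_of_nonneg _ _ (by rw [sub_nonneg, div_le_one] <;> linarith) (by positivity),
    mul_assoc]
  rfl

end Interpolation

/-! ### The Hardy–Littlewood–Sobolev inequality on the line -/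

section HardyLittlewoodSobolev

lemma lintegral_comp_abs (g : ℝ → ℝ≥0∞) : ∫⁻ u, g |u| = 2 * ∫⁻ u in Set.Ioi 0, g u := by
  have hpos : ∫⁻ u in Set.Ioi 0, g |u| = ∫⁻ u in Set.Ioi 0, g u :=
    setLIntegral_congr_fun measurableSet_Ioi fun u (hu : 0 < u) => by simp only [abs_of_pos hu]
  have hneg : ∫⁻ u in Set.Iic 0, g |u| = ∫⁻ u in Set.Ioi 0, g |u| := by
    rw [← (Measure.measurePreserving_neg volume).setLIntegral_comp_preimage_emb
      (MeasurableEquiv.neg ℝ).measurableEmbedding]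
    simp [setLIntegral_congr Ioi_ae_eq_Ici.symm]
  rw [← lintegral_add_compl _ (measurableSet_Ioi (a := (0 : ℝ))), Set.compl_Ioi, hneg, hpos,
    two_mul]

lemma setLIntegral_abs_le_rpow {a δ : ℝ} (ha : a < 1) (hδ : 0 ≤ δ) :
    ∫⁻ u in {u | |u| ≤ δ}, ENNReal.ofReal (|u| ^ (-a)) =
      ENNReal.ofReal (2 * (δ ^ (1 - a) / (1 - a))) := by
  have hinter : Set.Iic δ ∩ Set.Ioi 0 = Set.Ioc 0 δ := by ext; simp [and_comm]
  calc ∫⁻ u in {u | |u| ≤ δ}, ENNReal.ofReal (|u| ^ (-a))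
      = ∫⁻ u, (Set.Iic δ).indicator (fun v => ENNReal.ofReal (v ^ (-a))) |u| := by
        rw [← lintegral_indicator (measurableSet_le continuous_abs.measurable measurable_const)]
        rfl
    _ = 2 * ENNReal.ofReal (δ ^ (-a + 1) / (-a + 1)) := by
        rw [lintegral_comp_abs, setLIntegral_indicator measurableSet_Iic, hinter,
          setLIntegral_Ioc_ofReal_rpow (by linarith) hδ]
    _ = _ := by rw [ENNReal.ofReal_mul two_pos.le, ENNReal.ofReal_ofNat, neg_add_eq_sub]

lemma setLIntegral_abs_gt_rpow_neg_two {δ : ℝ} (hδ : 0 < δ) :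
    ∫⁻ u in {u | |u| ≤ δ}ᶜ, ENNReal.ofReal (|u| ^ (-2 : ℝ)) = ENNReal.ofReal (2 * δ⁻¹) := by
  have hinter : Set.Ioi δ ∩ Set.Ioi 0 = Set.Ioi δ :=
    Set.inter_eq_self_of_subset_left (Set.Ioi_subset_Ioi hδ.le)
  have hexp : (-2 : ℝ) < -1 := by norm_num
  calc ∫⁻ u in {u | |u| ≤ δ}ᶜ, ENNReal.ofReal (|u| ^ (-2 : ℝ))
      = ∫⁻ u, (Set.Ioi δ).indicator (fun v => ENNReal.ofReal (v ^ (-2 : ℝ))) |u| := by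
        rw [← lintegral_indicator
          (measurableSet_le continuous_abs.measurable measurable_const).compl]
        simp [Set.indicator_apply]
    _ = 2 * ENNReal.ofReal (∫ v in Set.Ioi δ, v ^ (-2 : ℝ)) := by
        rw [lintegral_comp_abs, setLIntegral_indicator measurableSet_Ioi, hinter,
          ofReal_integral_eq_lintegral_ofReal (integrableOn_Ioi_rpow_of_lt hexp hδ)]
        filter_upwards [ae_restrict_mem measurableSet_Ioi] with t ht
        exact Real.rpow_nonneg (hδ.trans ht).le _
    _ = _ := by
        rw [integral_Ioi_rpow_of_lt hexp hδ, ENNReal.ofReal_mul two_pos.le, ENNReal.ofReal_ofNat]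
        norm_num [Real.rpow_neg_one]

/-- The constant in the symmetric Hardy–Littlewood–Sobolev inequality with kernel
`|t - s| ^ (-2 / q)`. -/
def hlsConst (q : ℝ) : ℝ := 2 * (2 / (1 - 2 / q) + 2)

lemma hlsConst_pos {q : ℝ} (hq : 2 < q) : 0 < hlsConst q := by
  have : 0 < 1 - 2 / q := by rw [sub_pos, div_lt_one] <;> linarith
  unfold hlsConst
  positivity

variable {p q : ℝ}

lemma setLIntegral_mul_abs_rpow_le {G : ℝ → ℝ≥0∞} (hG : Measurable G) (hp : p.HolderConjugate q)
    {δ : ℝ} (hδ : 0 < δ) :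
    ∫⁻ u in {u | |u| ≤ δ}ᶜ, G u * ENNReal.ofReal (|u| ^ (-(2 / q))) ≤
      (∫⁻ u, G u ^ p) ^ (1 / p) * ENNReal.ofReal (2 * δ⁻¹) ^ (1 / q) := by
  have hq0 : 0 < q := hp.symm.pos
  have hK (u : ℝ) :
      ENNReal.ofReal (|u| ^ (-(2 / q))) ^ q = ENNReal.ofReal (|u| ^ (-2 : ℝ)) := by
    rw [ENNReal.ofReal_rpow_of_nonneg (by positivity) hq0.le, ← Real.rpow_mul (abs_nonneg u)]
    congr 2
    field_simp
  refine (ENNReal.lintegral_mul_le_Lp_mul_Lq _ hp hG.aemeasurable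
    (by fun_prop : Measurable fun u : ℝ => ENNReal.ofReal (|u| ^ (-(2 / q)))).aemeasurable).trans ?_
  simp_rw [hK]
  rw [setLIntegral_abs_gt_rpow_neg_two hδ]
  gcongr
  exacts [hp.one_div_nonneg, Measure.restrict_le_self]

lemma setLIntegral_const_mul_abs_rpow_near {P α : ℝ} (hp : p.HolderConjugate q) (hq : 2 < q)
    (hP : 0 < P) (hα : 0 < α) :
    ∫⁻ u in {u | |u| ≤ P * α ^ (-p)}, ENNReal.ofReal α * ENNReal.ofReal (|u| ^ (-(2 / q))) =
      ENNReal.ofReal (2 / (1 - 2 / q) * (P ^ (1 - 2 / q) * α ^ (p - 1))) := by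
  have hexp : -1 < -(2 / q) := by rw [neg_lt_neg_iff, div_lt_one (by linarith)]; exact hq
  rw [lintegral_const_mul' _ _ ENNReal.ofReal_ne_top,
    setLIntegral_abs_le_rpow (by linarith) (by positivity), ← ENNReal.ofReal_mul hα.le,
    Real.mul_rpow hP.le (by positivity), ← Real.rpow_mul hα.le,
    show p - 1 = 1 + -p * (1 - 2 / q) by linear_combination -2 * hp.div_conj_eq_sub_one,
    Real.rpow_add hα, Real.rpow_one]
  ring_nf

lemma setLIntegral_mul_abs_rpow_far_le {G : ℝ → ℝ≥0∞} (hG : Measurable G) {P α : ℝ}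
    (hp : p.HolderConjugate q) (hP : 0 < P) (hα : 0 < α)
    (hfin : ∫⁻ u, G u ^ p ≤ ENNReal.ofReal P) :
    ∫⁻ u in {u | |u| ≤ P * α ^ (-p)}ᶜ, G u * ENNReal.ofReal (|u| ^ (-(2 / q))) ≤
      ENNReal.ofReal (2 * (P ^ (1 - 2 / q) * α ^ (p - 1))) := by
  have hδ : 0 < P * α ^ (-p) := by positivity
  calc _ ≤ ENNReal.ofReal P ^ (1 / p) * ENNReal.ofReal (2 * (P * α ^ (-p))⁻¹) ^ (1 / q) :=
        (setLIntegral_mul_abs_rpow_le hG hp hδ).trans (by gcongr; exact hp.one_div_nonneg)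
    _ = ENNReal.ofReal (2 ^ (1 / q) * (P ^ (1 - 2 / q) * α ^ (p - 1))) := by
        rw [ENNReal.ofReal_rpow_of_pos hP, ENNReal.ofReal_rpow_of_pos (by positivity),
          ← ENNReal.ofReal_mul (by positivity), Real.mul_rpow two_pos.le (by positivity),
          mul_inv, ← Real.rpow_neg hα.le, neg_neg, Real.mul_rpow (by positivity) (by positivity),
          ← Real.rpow_mul hα.le, ← Real.rpow_neg_one, ← Real.rpow_mul hP.le,
          ← hp.div_conj_eq_sub_one, mul_one_div,
          show 1 - 2 / q = 1 / p + -1 * (1 / q) by linear_combination -hp.inv_add_inv_eq_one,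
          Real.rpow_add hP]
        ring_nf
    _ ≤ _ := by
        gcongr
        exact (Real.rpow_le_rpow_of_exponent_le one_le_two
          ((div_le_one hp.symm.pos).2 hp.symm.lt.le)).trans_eq (Real.rpow_one 2)

/-- Splitting the integral at `|u| = δ` with `δ = P α⁻ᵖ` balances the bound `α` on the near part
against Hölder's inequality on the far part. -/
lemma lintegral_min_mul_abs_rpow_le {G : ℝ → ℝ≥0∞} (hG : Measurable G) {P α : ℝ}
    (hp : p.HolderConjugate q) (hq : 2 < q) (hP : 0 < P) (hα : 0 < α)
    (hfin : ∫⁻ u, G u ^ p ≤ ENNReal.ofReal P) :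
    ∫⁻ u, min (G u) (ENNReal.ofReal α) * ENNReal.ofReal (|u| ^ (-(2 / q))) ≤
      ENNReal.ofReal ((2 / (1 - 2 / q) + 2) * (P ^ (1 - 2 / q) * α ^ (p - 1))) := by
  have ha : 0 < 1 - 2 / q := by rw [sub_pos, div_lt_one (by linarith)]; exact hq
  rw [← lintegral_add_compl _
    (measurableSet_le continuous_abs.measurable (measurable_const (a := P * α ^ (-p)))), add_mul,
    ENNReal.ofReal_add (by positivity) (by positivity),
    ← setLIntegral_const_mul_abs_rpow_near hp hq hP hα]
  refine add_le_add ?_ ((lintegral_mono fun u => ?_).trans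
    (setLIntegral_mul_abs_rpow_far_le hG hp hP hα hfin))
  · gcongr
    exact min_le_right _ _
  · gcongr
    exact min_le_left _ _

/-- Half of the double integral: the part of the kernel where `F s ≤ F t`. -/
lemma lintegral_lintegral_min_mul_abs_rpow_le {F : ℝ → ℝ≥0∞} (hF : Measurable F)
    (hp : p.HolderConjugate q) (hq : 2 < q) (hfin : ∫⁻ t, F t ^ p ≠ ∞) (hpos : ∫⁻ t, F t ^ p ≠ 0) :
    ∫⁻ t, ∫⁻ s, F t * (min (F s) (F t) * ENNReal.ofReal (|t - s| ^ (-(2 / q)))) ≤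
      ENNReal.ofReal (2 / (1 - 2 / q) + 2) * (∫⁻ t, F t ^ p) ^ (2 / p) := by
  obtain ⟨P, hP⟩ : ∃ P : ℝ, ENNReal.ofReal P = ∫⁻ t, F t ^ p := ⟨_, ENNReal.ofReal_toReal hfin⟩
  have hP0 : 0 < P := ENNReal.ofReal_pos.1 (hP ▸ pos_iff_ne_zero.2 hpos)
  have hC : 0 ≤ 2 / (1 - 2 / q) + 2 := by
    have : 0 ≤ 1 - 2 / q := by rw [sub_nonneg, div_le_one (by linarith)]; exact hq.le
    positivity
  have hinner : ∀ᵐ t, ∫⁻ s, F t * (min (F s) (F t) * ENNReal.ofReal (|t - s| ^ (-(2 / q)))) ≤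
      ENNReal.ofReal ((2 / (1 - 2 / q) + 2) * P ^ (1 - 2 / q)) * F t ^ p := by
    filter_upwards [ae_lt_top (hF.pow_const p) hfin] with t ht
    rcases eq_or_ne (F t) 0 with h0 | h0
    · simp [h0]
    obtain ⟨α, hα⟩ : ∃ α : ℝ, ENNReal.ofReal α = F t :=
      ⟨_, ENNReal.ofReal_toReal fun h => by simp [h, hp.pos] at ht⟩
    have hα0 : 0 < α := ENNReal.ofReal_pos.1 (hα ▸ pos_iff_ne_zero.2 h0)
    rw [lintegral_const_mul _ (by fun_prop), ← lintegral_sub_left_eq_self _ t, ← hα]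
    simp only [sub_sub_cancel]
    refine (mul_le_mul_right (lintegral_min_mul_abs_rpow_le (by fun_prop) hp hq hP0 hα0
      ((lintegral_sub_left_eq_self (fun u => F u ^ p) t).trans hP.symm).le) _).trans_eq ?_
    rw [ENNReal.ofReal_rpow_of_pos hα0, ← ENNReal.ofReal_mul hα0.le,
      ← ENNReal.ofReal_mul (by positivity), Real.rpow_sub_one hα0.ne']
    congr 1
    field_simp
  refine (lintegral_mono_ae hinner).trans_eq ?_
  rw [lintegral_const_mul' _ _ ENNReal.ofReal_ne_top, ← hP, ENNReal.ofReal_rpow_of_pos hP0,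
    ← ENNReal.ofReal_mul (by positivity), ← ENNReal.ofReal_mul hC, mul_assoc,
    show 2 / p = 1 - 2 / q + 1 by linear_combination 2 * hp.inv_add_inv_eq_one, Real.rpow_add hP0,
    Real.rpow_one]

theorem lintegral_lintegral_mul_abs_rpow_le {F : ℝ → ℝ≥0∞} (hF : Measurable F)
    (hp : p.HolderConjugate q) (hq : 2 < q) (hfin : ∫⁻ t, F t ^ p ≠ ∞) :
    ∫⁻ t, ∫⁻ s, F t * F s * ENNReal.ofReal (|t - s| ^ (-(2 / q))) ≤
      ENNReal.ofReal (hlsConst q) * (∫⁻ t, F t ^ p) ^ (2 / p) := by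
  rcases eq_or_ne (∫⁻ t, F t ^ p) 0 with hzero | hpos
  · have hF0 : ∀ᵐ s, F s = 0 := by
      filter_upwards [(lintegral_eq_zero_iff (hF.pow_const p)).1 hzero] with s hs
      simpa [hp.pos, hp.pos.not_gt] using hs
    have hinner (t : ℝ) : ∫⁻ s, F t * F s * ENNReal.ofReal (|t - s| ^ (-(2 / q))) = 0 :=
      lintegral_eq_zero_of_ae_eq_zero (by filter_upwards [hF0] with s hs; simp [hs])
    simp [hinner]
  set Q : ℝ → ℝ → ℝ≥0∞ := fun t s =>
    F t * (min (F s) (F t) * ENNReal.ofReal (|t - s| ^ (-(2 / q)))) with hQ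
  have hQm : Measurable (Function.uncurry Q) := by fun_prop
  have hsplit (t s : ℝ) : F t * F s * ENNReal.ofReal (|t - s| ^ (-(2 / q))) ≤ Q t s + Q s t := by
    rcases le_total (F s) (F t) with h | h
    · exact (by simp [hQ, h, mul_assoc] : _ = Q t s).trans_le le_self_add
    · refine (?_ : _ = Q s t).trans_le le_add_self
      simp [hQ, h, abs_sub_comm s t, mul_assoc, mul_left_comm]
  calc _ ≤ ∫⁻ t, ∫⁻ s, (Q t s + Q s t) := lintegral_mono fun t => lintegral_mono (hsplit t)
    _ = (∫⁻ t, ∫⁻ s, Q t s) + ∫⁻ t, ∫⁻ s, Q s t := by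
        rw [← lintegral_add_left hQm.lintegral_prod_right]
        exact lintegral_congr fun t => lintegral_add_left (hQm.comp measurable_prodMk_left) _
    _ = 2 * ∫⁻ t, ∫⁻ s, Q t s := by
        rw [two_mul, lintegral_lintegral_swap (f := fun t s => Q s t)
          (hQm.comp measurable_swap).aemeasurable]
    _ ≤ _ := by
        rw [hlsConst, ENNReal.ofReal_mul two_pos.le, ENNReal.ofReal_ofNat, mul_assoc]
        gcongr
        exact lintegral_lintegral_min_mul_abs_rpow_le hF hp hq hfin hpos

end HardyLittlewoodSobolev

/-! ### Duality for mixed Lebesgue norms -/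

section MixedNorm

open Filter Topology
open scoped ComplexConjugate

variable {α β E : Type*} [MeasurableSpace α] [MeasurableSpace β] [NormedAddCommGroup E]
  {μ : Measure α} {ν : Measure β}

/-- The mixed Lebesgue norm `‖u‖_{L^q_t(μ; L^r_x(ν))}` for finite exponents `q` and `r`. -/
def mixedNorm (q r : ℝ) (μ : Measure α) (ν : Measure β) (u : α → β → E) : ℝ≥0∞ :=
  (∫⁻ t, (∫⁻ x, ‖u t x‖ₑ ^ r ∂ν) ^ (q / r) ∂μ) ^ (1 / q)

/-- Bounded measurable functions of two variables supported in a rectangle of finite measure: the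
functions against which a mixed norm is tested by duality. -/
structure IsMixedTest (μ : Measure α) (ν : Measure β) (v : α → β → E) : Prop where
  stronglyMeasurable : StronglyMeasurable (Function.uncurry v)
  exists_norm_le : ∃ M, ∀ t x, ‖v t x‖ ≤ M
  exists_support : ∃ A B, MeasurableSet A ∧ MeasurableSet B ∧ μ A ≠ ∞ ∧ ν B ≠ ∞ ∧
    ∀ t x, v t x ≠ 0 → t ∈ A ∧ x ∈ B

lemma memLp_of_norm_le_of_support {f : β → E} (hf : AEStronglyMeasurable f ν) {M : ℝ}
    (hM : ∀ x, ‖f x‖ ≤ M) {B : Set β} (hB : MeasurableSet B) (hνB : ν B ≠ ∞)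
    (hsupp : ∀ x, f x ≠ 0 → x ∈ B) (p : ℝ≥0∞) : MemLp f p ν := by
  have : IsFiniteMeasure (ν.restrict B) := isFiniteMeasure_restrict.2 hνB
  rw [← Set.indicator_eq_self.2 hsupp, memLp_indicator_iff_restrict hB]
  exact .of_bound hf.restrict M (.of_forall hM)

namespace IsMixedTest

variable {v : α → β → E} {q r : ℝ}

lemma stronglyMeasurable_slice (hv : IsMixedTest μ ν v) (t : α) : StronglyMeasurable (v t) :=
  hv.stronglyMeasurable.comp_measurable measurable_prodMk_left

lemma memLp_slice (hv : IsMixedTest μ ν v) (t : α) (p : ℝ≥0∞) : MemLp (v t) p ν := by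
  obtain ⟨M, hM⟩ := hv.exists_norm_le
  obtain ⟨A, B, -, hB, -, hνB, hsupp⟩ := hv.exists_support
  exact memLp_of_norm_le_of_support (hv.stronglyMeasurable_slice t).aestronglyMeasurable (hM t)
    hB hνB (fun x hx => (hsupp t x hx).2) p

lemma integrable_slice (hv : IsMixedTest μ ν v) (t : α) : Integrable (v t) ν :=
  memLp_one_iff_integrable.1 (hv.memLp_slice t 1)

lemma integrable_slice_norm_rpow (hv : IsMixedTest μ ν v) (hr : 0 < r) (t : α) :
    Integrable (fun x => ‖v t x‖ ^ r) ν := by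
  simpa only [ENNReal.toReal_ofReal hr.le] using
    (hv.memLp_slice t (ENNReal.ofReal r)).integrable_norm_rpow (by simpa using hr)
      ENNReal.ofReal_ne_top

end IsMixedTest

/-- The `r`-th power `∫ ‖v t x‖ ^ r dν(x)` of the norm of a slice. -/
def sliceIntegral (r : ℝ) (ν : Measure β) (v : α → β → E) (t : α) : ℝ := ∫ x, ‖v t x‖ ^ r ∂ν

omit [MeasurableSpace α] in
lemma sliceIntegral_nonneg (r : ℝ) (v : α → β → E) (t : α) : 0 ≤ sliceIntegral r ν v t :=
  integral_nonneg fun _ => by positivity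

namespace IsMixedTest

variable {v : α → β → E} {q r : ℝ}

lemma ofReal_sliceIntegral (hv : IsMixedTest μ ν v) (hr : 0 < r) (t : α) :
    ENNReal.ofReal (sliceIntegral r ν v t) = ∫⁻ x, ‖v t x‖ₑ ^ r ∂ν := by
  rw [sliceIntegral, ofReal_integral_eq_lintegral_ofReal (hv.integrable_slice_norm_rpow hr t)
    (.of_forall fun _ => by positivity)]
  simp_rw [← ofReal_norm, ENNReal.ofReal_rpow_of_nonneg (norm_nonneg _) hr.le]

lemma measurable_sliceIntegral [SFinite ν] (hv : IsMixedTest μ ν v) (r : ℝ) :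
    Measurable (sliceIntegral r ν v) :=
  (StronglyMeasurable.integral_prod_right
    (hv.stronglyMeasurable.norm.measurable.pow_const r).stronglyMeasurable).measurable

lemma exists_sliceIntegral_le (hv : IsMixedTest μ ν v) (hr : 0 < r) :
    ∃ C, ∀ t, sliceIntegral r ν v t ≤ C := by
  obtain ⟨M, hM⟩ := hv.exists_norm_le
  obtain ⟨A, B, -, -, -, hB, hsupp⟩ := hv.exists_support
  refine ⟨M ^ r * ν.real B, fun t => ?_⟩
  have hB' : sliceIntegral r ν v t = ∫ x in B, ‖v t x‖ ^ r ∂ν :=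
    (setIntegral_eq_integral_of_forall_compl_eq_zero fun x hx => by
      rw [not_not.1 fun h => hx (hsupp t x h).2, norm_zero, Real.zero_rpow hr.ne']).symm
  rw [hB']
  refine (Real.le_norm_self _).trans (norm_setIntegral_le_of_norm_le_const hB.lt_top fun x _ => ?_)
  rw [Real.norm_of_nonneg (by positivity)]
  exact Real.rpow_le_rpow (norm_nonneg _) (hM t x) hr.le

lemma integrable_sliceIntegral_rpow [SFinite ν] (hv : IsMixedTest μ ν v) (hq : 0 < q)
    (hr : 0 < r) : Integrable (fun t => sliceIntegral r ν v t ^ q) μ := by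
  obtain ⟨C, hC⟩ := hv.exists_sliceIntegral_le hr
  obtain ⟨A, B, hA, -, hμA, -, hsupp⟩ := hv.exists_support
  refine memLp_one_iff_integrable.1 (memLp_of_norm_le_of_support (M := C ^ q)
    ((hv.measurable_sliceIntegral r).pow_const q).aestronglyMeasurable (fun t => ?_) hA hμA
    (fun t ht => ?_) 1)
  · rw [Real.norm_of_nonneg (Real.rpow_nonneg (sliceIntegral_nonneg r v t) _)]
    exact Real.rpow_le_rpow (sliceIntegral_nonneg r v t) (hC t) hq.le
  · by_contra htA
    have hzero (x : β) : v t x = 0 := not_not.1 fun h => htA (hsupp t x h).1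
    exact ht (by simp [sliceIntegral, hzero, hr.ne', hq.ne'])

lemma integrable_integral_norm [SFinite ν] (hv : IsMixedTest μ ν v) :
    Integrable (fun t => ∫ x, ‖v t x‖ ∂ν) μ := by
  simpa [sliceIntegral] using hv.integrable_sliceIntegral_rpow one_pos one_pos

lemma mixedNorm_eq (hv : IsMixedTest μ ν v) (hq : 0 < q) (hr : 0 < r) :
    mixedNorm q r μ ν v =
      (∫⁻ t, ENNReal.ofReal (sliceIntegral r ν v t ^ (q / r)) ∂μ) ^ (1 / q) := by
  simp_rw [mixedNorm, ← hv.ofReal_sliceIntegral hr,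
    ENNReal.ofReal_rpow_of_nonneg (sliceIntegral_nonneg r v _) (div_pos hq hr).le]

lemma mixedNorm_ne_top [SFinite ν] (hv : IsMixedTest μ ν v) (hq : 0 < q) (hr : 0 < r) :
    mixedNorm q r μ ν v ≠ ∞ := by
  rw [hv.mixedNorm_eq hq hr]
  exact ENNReal.rpow_ne_top_of_nonneg (by positivity)
    (hv.integrable_sliceIntegral_rpow (div_pos hq hr) hr).lintegral_lt_top.ne

end IsMixedTest

/-- The function dual to `v` in `L^q_t L^r_x`: up to normalisation it is the extremiser of the
pairing with `v` in the dual mixed norm. -/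
def mixedDual (q r : ℝ) (ν : Measure β) (v : α → β → ℂ) (t : α) (x : β) : ℂ :=
  (sliceIntegral r ν v t ^ (q / r - 1) * ‖v t x‖ ^ (r - 2) : ℝ) * v t x

section Dual

variable {v : α → β → ℂ} {q r q' r' : ℝ}

omit [MeasurableSpace α] in
lemma norm_mixedDual (hr : 1 < r) (t : α) (x : β) :
    ‖mixedDual q r ν v t x‖ = sliceIntegral r ν v t ^ (q / r - 1) * ‖v t x‖ ^ (r - 1) := by
  have hI := Real.rpow_nonneg (sliceIntegral_nonneg (ν := ν) r v t) (q / r - 1)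
  rw [mixedDual, norm_mul, Complex.norm_of_nonneg (by positivity), mul_assoc]
  rcases (norm_nonneg (v t x)).eq_or_lt with h | h
  · simp [← h, (sub_pos.2 hr).ne']
  · rw [← Real.rpow_add_one h.ne']
    ring_nf

lemma IsMixedTest.mixedDual [SFinite ν] (hv : IsMixedTest μ ν v) (hr : 1 < r) {ε : ℝ} (hε : 0 < ε)
    (hlow : ∀ t, sliceIntegral r ν v t = 0 ∨ ε ≤ sliceIntegral r ν v t) :
    IsMixedTest μ ν (mixedDual q r ν v) := by
  obtain ⟨M, hM⟩ := hv.exists_norm_le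
  obtain ⟨C, hC⟩ := hv.exists_sliceIntegral_le (r := r) (by linarith)
  obtain ⟨A, B, hA, hB, hμA, hνB, hsupp⟩ := hv.exists_support
  refine ⟨?_, ⟨(1 + (ε ^ (q / r - 1) + C ^ (q / r - 1))) * M ^ (r - 1), fun t x => ?_⟩,
    A, B, hA, hB, hμA, hνB, fun t x h => hsupp t x fun h0 => h (by simp [_root_.mixedDual, h0])⟩
  · have hI : Measurable fun z : α × β => sliceIntegral r ν v z.1 :=
      (hv.measurable_sliceIntegral r).comp measurable_fst
    exact ((Complex.measurable_ofReal.comp ((hI.pow_const _).mul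
      (hv.stronglyMeasurable.norm.measurable.pow_const _))).mul
      hv.stronglyMeasurable.measurable).stronglyMeasurable
  · have hweight : sliceIntegral r ν v t ^ (q / r - 1) ≤
        1 + (ε ^ (q / r - 1) + C ^ (q / r - 1)) := by
      have hC0 : 0 ≤ C := (sliceIntegral_nonneg r v t).trans (hC t)
      have : 0 ≤ ε ^ (q / r - 1) := by positivity
      have : 0 ≤ C ^ (q / r - 1) := by positivity
      rcases hlow t with h0 | h
      · rw [h0]
        linarith [Real.zero_rpow_le_one (q / r - 1)]
      · rcases le_total 0 (q / r - 1) with hs | hs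
        · linarith [Real.rpow_le_rpow (sliceIntegral_nonneg r v t) (hC t) hs]
        · linarith [Real.rpow_le_rpow_of_nonpos hε h hs]
    rw [norm_mixedDual hr]
    exact mul_le_mul hweight (Real.rpow_le_rpow (norm_nonneg _) (hM t x) (by linarith))
      (by positivity) ((Real.rpow_nonneg (sliceIntegral_nonneg r v t) _).trans hweight)

lemma mixedNorm_mixedDual (hv : IsMixedTest μ ν v) (hq : q.HolderConjugate q')
    (hr : r.HolderConjugate r') :
    mixedNorm q' r' μ ν (mixedDual q r ν v) =
      (∫⁻ t, ENNReal.ofReal (sliceIntegral r ν v t ^ (q / r)) ∂μ) ^ (1 / q') := by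
  rw [mixedNorm]
  congr 1
  refine lintegral_congr fun t => ?_
  have hI := sliceIntegral_nonneg (ν := ν) r v t
  have hslice (x : β) : ‖mixedDual q r ν v t x‖ₑ ^ r' =
      ENNReal.ofReal (sliceIntegral r ν v t ^ ((q / r - 1) * r')) * ‖v t x‖ₑ ^ r := by
    rw [← ofReal_norm, norm_mixedDual hr.lt, ← ofReal_norm,
      ENNReal.ofReal_rpow_of_nonneg (by positivity) hr.symm.nonneg,
      ENNReal.ofReal_rpow_of_nonneg (norm_nonneg _) hr.nonneg,
      ← ENNReal.ofReal_mul (by positivity), Real.mul_rpow (by positivity) (by positivity),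
      ← Real.rpow_mul hI, ← Real.rpow_mul (norm_nonneg _), hr.sub_one_mul_conj]
  simp_rw [hslice]
  rw [lintegral_const_mul' _ _ ENNReal.ofReal_ne_top, ← hv.ofReal_sliceIntegral hr.pos,
    ← ENNReal.ofReal_mul (by positivity), ENNReal.ofReal_rpow_of_nonneg (by positivity)
      (div_nonneg hq.symm.nonneg hr.symm.nonneg)]
  congr 1
  rcases hI.eq_or_lt with h | h
  · rw [← h, mul_zero, Real.zero_rpow (div_pos hq.symm.pos hr.symm.pos).ne',
      Real.zero_rpow (div_pos hq.pos hr.pos).ne']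
  · rw [← Real.rpow_add_one h.ne', ← Real.rpow_mul hI]
    congr 1
    have hr0 : r ≠ 0 := hr.ne_zero
    have hr1 : r - 1 ≠ 0 := hr.sub_one_ne_zero
    have hq1 : q - 1 ≠ 0 := hq.sub_one_ne_zero
    rw [hr.conjugate_eq, hq.conjugate_eq]
    field_simp
    ring

lemma integral_mul_conj_mixedDual [SFinite ν] (hv : IsMixedTest μ ν v) (hq : 0 < q) (hr : 1 < r)
    {u : α → β → ℂ} (huv : ∀ t x, v t x ≠ 0 → u t x = v t x) :
    ‖∫ t, ∫ x, u t x * conj (mixedDual q r ν v t x) ∂ν ∂μ‖ₑ =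
      ∫⁻ t, ENNReal.ofReal (sliceIntegral r ν v t ^ (q / r)) ∂μ := by
  have hpoint (t : α) (x : β) : u t x * conj (mixedDual q r ν v t x) =
      (sliceIntegral r ν v t ^ (q / r - 1) * ‖v t x‖ ^ r : ℝ) := by
    rcases eq_or_ne (v t x) 0 with h | h
    · simp [mixedDual, h, (zero_lt_one.trans hr).ne']
    · rw [huv t x h, mixedDual, map_mul, Complex.conj_ofReal, mul_left_comm, Complex.mul_conj',
        show r = r - 2 + 2 by ring, Real.rpow_add (norm_pos_iff.2 h)]
      push_cast
      norm_cast
      ring_nf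
  have hslice (t : α) : ∫ x, u t x * conj (mixedDual q r ν v t x) ∂ν =
      (sliceIntegral r ν v t ^ (q / r) : ℝ) := by
    simp_rw [hpoint]
    rw [integral_complex_ofReal, integral_const_mul]
    congr 1
    change _ * sliceIntegral r ν v t = _
    rcases (sliceIntegral_nonneg (ν := ν) r v t).eq_or_lt with h | h
    · rw [← h, mul_zero, Real.zero_rpow (div_pos hq (by linarith)).ne']
    · rw [← Real.rpow_add_one h.ne', sub_add_cancel]
  simp_rw [hslice]
  have hnonneg (t : α) : 0 ≤ sliceIntegral r ν v t ^ (q / r) :=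
    Real.rpow_nonneg (sliceIntegral_nonneg r v t) _
  rw [integral_complex_ofReal, ← ofReal_norm, Complex.norm_of_nonneg (integral_nonneg hnonneg),
    ofReal_integral_eq_lintegral_ofReal
      (hv.integrable_sliceIntegral_rpow (div_pos hq (by linarith)) (by linarith))
      (.of_forall hnonneg)]

lemma IsMixedTest.mixedNorm_le_of_pairing_le [SFinite ν] (hv : IsMixedTest μ ν v)
    (hq : q.HolderConjugate q') (hr : r.HolderConjugate r') {ε : ℝ} (hε : 0 < ε)
    (hlow : ∀ t, sliceIntegral r ν v t = 0 ∨ ε ≤ sliceIntegral r ν v t)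
    {u : α → β → ℂ} (huv : ∀ t x, v t x ≠ 0 → u t x = v t x) {K : ℝ≥0∞}
    (hK : ∀ G, IsMixedTest μ ν G →
      ‖∫ t, ∫ x, u t x * conj (G t x) ∂ν ∂μ‖ₑ ≤ K * mixedNorm q' r' μ ν G) :
    mixedNorm q r μ ν v ≤ K := by
  have hpair := hK _ (hv.mixedDual (q := q) hr.lt hε hlow)
  rw [integral_mul_conj_mixedDual hv hq.pos hr.lt huv, mixedNorm_mixedDual hv hq hr] at hpair
  rw [hv.mixedNorm_eq hq.pos hr.pos]
  have hfin : ∫⁻ t, ENNReal.ofReal (sliceIntegral r ν v t ^ (q / r)) ∂μ ≠ ∞ :=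
    (hv.integrable_sliceIntegral_rpow (div_pos hq.pos hr.pos) hr.pos).lintegral_lt_top.ne
  generalize ∫⁻ t, ENNReal.ofReal (sliceIntegral r ν v t ^ (q / r)) ∂μ = J at hpair hfin ⊢
  rcases eq_or_ne J 0 with rfl | hJ
  · simp [hq.pos]
  calc J ^ (1 / q) = J * J ^ (-(1 / q')) := by
        rw [one_div, one_div, ← hq.symm.one_sub_inv, sub_eq_add_neg,
          ENNReal.rpow_add _ _ hJ hfin, ENNReal.rpow_one]
    _ ≤ K * J ^ (1 / q') * J ^ (-(1 / q')) := by gcongr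
    _ = K := by
        rw [mul_assoc, ← ENNReal.rpow_add _ _ hJ hfin, add_neg_cancel, ENNReal.rpow_zero, mul_one]

end Dual

section Truncation

variable [SigmaFinite μ] [SigmaFinite ν] {u : α → β → E} {r : ℝ}

/-- The part of the `n`-th rectangle of an exhaustion where `‖u‖ ≤ n`. -/
def truncSet (μ : Measure α) (ν : Measure β) [SigmaFinite μ] [SigmaFinite ν] (u : α → β → E)
    (n : ℕ) : Set (α × β) :=
  spanningSets μ n ×ˢ spanningSets ν n ∩ {z | ‖Function.uncurry u z‖ ≤ n}

/-- The restriction of `u` to `truncSet μ ν u n`, extended by zero. -/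
def mixedTrunc (μ : Measure α) (ν : Measure β) [SigmaFinite μ] [SigmaFinite ν] (u : α → β → E)
    (n : ℕ) (t : α) (x : β) : E :=
  (truncSet μ ν u n).indicator (Function.uncurry u) (t, x)

lemma isMixedTest_mixedTrunc (hu : StronglyMeasurable (Function.uncurry u)) (n : ℕ) :
    IsMixedTest μ ν (mixedTrunc μ ν u n) where
  stronglyMeasurable := hu.indicator <|
    ((measurableSet_spanningSets μ n).prod (measurableSet_spanningSets ν n)).inter
      (hu.norm.measurable measurableSet_Iic)
  exists_norm_le := ⟨n, fun t x => by
    by_cases h : (t, x) ∈ truncSet μ ν u n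
    · rw [mixedTrunc, Set.indicator_of_mem h]
      exact h.2
    · simp [mixedTrunc, Set.indicator_of_notMem h]⟩
  exists_support := ⟨spanningSets μ n, spanningSets ν n, measurableSet_spanningSets μ n,
    measurableSet_spanningSets ν n, (measure_spanningSets_lt_top μ n).ne,
    (measure_spanningSets_lt_top ν n).ne, fun _ _ h => (Set.mem_of_indicator_ne_zero h).1⟩

lemma tendsto_lintegral_mixedTrunc (hu : StronglyMeasurable (Function.uncurry u)) (hr : 0 < r)
    (t : α) :
    Tendsto (fun n => ∫⁻ x, ‖mixedTrunc μ ν u n t x‖ₑ ^ r ∂ν) atTop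
      (𝓝 (∫⁻ x, ‖u t x‖ₑ ^ r ∂ν)) := by
  refine lintegral_tendsto_of_tendsto_of_monotone
    (fun n => (((isMixedTest_mixedTrunc hu n).stronglyMeasurable_slice t).enorm.pow_const
      r).aemeasurable) (.of_forall fun x n m hnm => ?_) (.of_forall fun x => ?_)
  · refine ENNReal.rpow_le_rpow (enorm_indicator_le_of_subset (fun z hz => ?_) _ _) hr.le
    exact ⟨⟨monotone_spanningSets μ hnm hz.1.1, monotone_spanningSets ν hnm hz.1.2⟩,
      le_trans (b := (n : ℝ)) hz.2 (Nat.cast_le.2 hnm)⟩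
  · refine tendsto_const_nhds.congr' ?_
    filter_upwards [eventually_ge_atTop (spanningSetsIndex μ t),
      eventually_ge_atTop (spanningSetsIndex ν x), eventually_ge_atTop ⌈‖u t x‖⌉₊] with n h₁ h₂ h₃
    rw [mixedTrunc, Set.indicator_of_mem]
    · rfl
    · exact ⟨⟨mem_spanningSets_of_index_le μ t h₁, mem_spanningSets_of_index_le ν x h₂⟩,
        le_trans (b := (⌈‖u t x‖⌉₊ : ℝ)) (Nat.le_ceil _) (Nat.cast_le.2 h₃)⟩

/-- The truncation `mixedTrunc μ ν u n` restricted to those `t` where its slice is not too small.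
The cutoff makes the negative powers of the slice norm in `mixedDual` bounded. -/
def mixedCutoff (r : ℝ) (μ : Measure α) (ν : Measure β) [SigmaFinite μ] [SigmaFinite ν]
    (u : α → β → E) (n : ℕ) : α → β → E :=
  {t | (1 : ℝ) / (n + 1) < sliceIntegral r ν (mixedTrunc μ ν u n) t}.indicator (mixedTrunc μ ν u n)

lemma mixedCutoff_of_lt {n : ℕ} {t : α}
    (h : (1 : ℝ) / (n + 1) < sliceIntegral r ν (mixedTrunc μ ν u n) t) :
    mixedCutoff r μ ν u n t = mixedTrunc μ ν u n t :=
  Set.indicator_of_mem (by exact h) _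

lemma mixedCutoff_of_not_lt {n : ℕ} {t : α}
    (h : ¬ (1 : ℝ) / (n + 1) < sliceIntegral r ν (mixedTrunc μ ν u n) t) :
    mixedCutoff r μ ν u n t = 0 :=
  Set.indicator_of_notMem (by exact h) _

lemma eq_mixedCutoff_of_ne_zero {n : ℕ} {t : α} {x : β} (h : mixedCutoff r μ ν u n t x ≠ 0) :
    u t x = mixedCutoff r μ ν u n t x := by
  by_cases ht : (1 : ℝ) / (n + 1) < sliceIntegral r ν (mixedTrunc μ ν u n) t
  · rw [mixedCutoff_of_lt ht] at h ⊢
    exact (Set.indicator_of_mem (Set.mem_of_indicator_ne_zero h) (Function.uncurry u)).symm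
  · exact absurd (congrFun (mixedCutoff_of_not_lt ht) x) h

lemma isMixedTest_mixedCutoff (hu : StronglyMeasurable (Function.uncurry u)) (n : ℕ) :
    IsMixedTest μ ν (mixedCutoff r μ ν u n) := by
  have hn := isMixedTest_mixedTrunc (μ := μ) (ν := ν) hu n
  obtain ⟨M, hM⟩ := hn.exists_norm_le
  obtain ⟨A, B, hA, hB, hμA, hνB, hsupp⟩ := hn.exists_support
  have hset : MeasurableSet {t | (1 : ℝ) / (n + 1) < sliceIntegral r ν (mixedTrunc μ ν u n) t} :=
    hn.measurable_sliceIntegral r measurableSet_Ioi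
  have huncurry : Function.uncurry (mixedCutoff r μ ν u n) =
      (Prod.fst ⁻¹' {t | (1 : ℝ) / (n + 1) < sliceIntegral r ν (mixedTrunc μ ν u n) t}).indicator
        (Function.uncurry (mixedTrunc μ ν u n)) := by
    ext ⟨t, x⟩
    by_cases ht : (1 : ℝ) / (n + 1) < sliceIntegral r ν (mixedTrunc μ ν u n) t
    · rw [Set.indicator_of_mem (by exact ht), Function.uncurry_apply_pair, mixedCutoff_of_lt ht]
      rfl
    · rw [Set.indicator_of_notMem (by exact ht), Function.uncurry_apply_pair,
        mixedCutoff_of_not_lt ht]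
      rfl
  refine ⟨huncurry ▸ hn.stronglyMeasurable.indicator (hset.preimage measurable_fst),
    ⟨M, fun t x => ?_⟩, A, B, hA, hB, hμA, hνB, fun t x h => hsupp t x ?_⟩
  · by_cases ht : (1 : ℝ) / (n + 1) < sliceIntegral r ν (mixedTrunc μ ν u n) t
    · simpa only [mixedCutoff_of_lt ht] using hM t x
    · simpa [mixedCutoff_of_not_lt ht] using (norm_nonneg _).trans (hM t x)
  · by_cases ht : (1 : ℝ) / (n + 1) < sliceIntegral r ν (mixedTrunc μ ν u n) t
    · rwa [mixedCutoff_of_lt ht] at h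
    · exact absurd (congrFun (mixedCutoff_of_not_lt ht) x) h

lemma sliceIntegral_mixedCutoff_eq_zero_or_le (hr : 0 < r) (n : ℕ) (t : α) :
    sliceIntegral r ν (mixedCutoff r μ ν u n) t = 0 ∨
      (1 : ℝ) / (n + 1) ≤ sliceIntegral r ν (mixedCutoff r μ ν u n) t := by
  by_cases ht : (1 : ℝ) / (n + 1) < sliceIntegral r ν (mixedTrunc μ ν u n) t
  · right
    simpa only [sliceIntegral, mixedCutoff_of_lt ht] using ht.le
  · left
    simp [sliceIntegral, mixedCutoff_of_not_lt ht, hr.ne']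

lemma tendsto_lintegral_mixedCutoff (hu : StronglyMeasurable (Function.uncurry u)) (hr : 0 < r)
    (t : α) :
    Tendsto (fun n => ∫⁻ x, ‖mixedCutoff r μ ν u n t x‖ₑ ^ r ∂ν) atTop
      (𝓝 (∫⁻ x, ‖u t x‖ₑ ^ r ∂ν)) := by
  have htrunc := tendsto_lintegral_mixedTrunc (μ := μ) (ν := ν) hu hr t
  rcases eq_zero_or_pos (∫⁻ x, ‖u t x‖ₑ ^ r ∂ν) with h0 | hpos
  · rw [h0] at htrunc ⊢
    refine tendsto_of_tendsto_of_tendsto_of_le_of_le tendsto_const_nhds htrunc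
      (fun _ => zero_le) fun n => lintegral_mono fun x => ?_
    by_cases ht : (1 : ℝ) / (n + 1) < sliceIntegral r ν (mixedTrunc μ ν u n) t
    · simp only [mixedCutoff_of_lt ht, le_refl]
    · simp [mixedCutoff_of_not_lt ht, hr]
  · refine htrunc.congr' ?_
    have hsmall : Tendsto (fun n : ℕ => ENNReal.ofReal (1 / (n + 1))) atTop (𝓝 0) := by
      simpa using ENNReal.tendsto_ofReal (tendsto_one_div_add_atTop_nhds_zero_nat (𝕜 := ℝ))
    filter_upwards [hsmall.eventually_lt htrunc hpos] with n hn
    rw [← (isMixedTest_mixedTrunc hu n).ofReal_sliceIntegral hr] at hn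
    rw [mixedCutoff_of_lt (ENNReal.ofReal_lt_ofReal_iff_of_nonneg (by positivity) |>.1 hn)]

end Truncation

/-- Duality for mixed norms: a bound for the pairings with test functions bounds the norm. That the
norm is finite is part of the conclusion, so it is applied to truncations of `u`. -/
theorem mixedNorm_le_of_pairing_le [SigmaFinite μ] [SigmaFinite ν] {u : α → β → ℂ}
    (hu : StronglyMeasurable (Function.uncurry u)) {q r q' r' : ℝ} (hq : q.HolderConjugate q')
    (hr : r.HolderConjugate r') {K : ℝ≥0∞}
    (hK : ∀ G, IsMixedTest μ ν G →
      ‖∫ t, ∫ x, u t x * conj (G t x) ∂ν ∂μ‖ₑ ≤ K * mixedNorm q' r' μ ν G) :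
    mixedNorm q r μ ν u ≤ K := by
  have hbound (n : ℕ) : mixedNorm q r μ ν (mixedCutoff r μ ν u n) ≤ K :=
    (isMixedTest_mixedCutoff hu n).mixedNorm_le_of_pairing_le hq hr Nat.one_div_pos_of_nat
      (sliceIntegral_mixedCutoff_eq_zero_or_le hr.pos n) (fun _ _ => eq_mixedCutoff_of_ne_zero) hK
  simp only [mixedNorm, one_div, ENNReal.rpow_inv_le_iff hq.pos] at hbound ⊢
  have hlim (t : α) := ((ENNReal.continuous_rpow_const (y := q / r)).tendsto _).comp
    (tendsto_lintegral_mixedCutoff (μ := μ) (ν := ν) hu hr.pos t)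
  calc ∫⁻ t, (∫⁻ x, ‖u t x‖ₑ ^ r ∂ν) ^ (q / r) ∂μ
      = ∫⁻ t, liminf (fun n => (∫⁻ x, ‖mixedCutoff r μ ν u n t x‖ₑ ^ r ∂ν) ^ (q / r)) atTop ∂μ :=
        lintegral_congr fun t => (hlim t).liminf_eq.symm
    _ ≤ liminf (fun n => ∫⁻ t, (∫⁻ x, ‖mixedCutoff r μ ν u n t x‖ₑ ^ r ∂ν) ^ (q / r) ∂μ) atTop :=
        lintegral_liminf_le fun n => (Measurable.lintegral_prod_right
          ((isMixedTest_mixedCutoff hu n).stronglyMeasurable.enorm.pow_const r)).pow_const _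
    _ ≤ K ^ q := liminf_le_of_le (by isBoundedDefault) fun b hb => by
        obtain ⟨n, hn⟩ := hb.exists
        exact hn.trans (hbound n)

end MixedNorm

/-! ### Dispersive evolutions -/

section Evolution

variable {V : Type*} [NormedAddCommGroup V] [InnerProductSpace ℝ V] [FiniteDimensional ℝ V]
  [MeasurableSpace V] [BorelSpace V] {φ : V → ℝ} {Ω : Set V}

/-- The free evolution `e^{itφ(D)}`, started from the function whose Fourier transform is `h`. -/
def evolution (φ : V → ℝ) (h : V → ℂ) (t : ℝ) : V → ℂ :=
  𝓕⁻ (fun ξ => Complex.exp ((t * φ ξ : ℝ) * Complex.I) * h ξ)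

lemma norm_exp_phase_mul (a : ℝ) (z : ℂ) : ‖Complex.exp (a * Complex.I) * z‖ = ‖z‖ := by
  rw [norm_mul, Complex.norm_exp_ofReal_mul_I, one_mul]

lemma memLp_exp_phase_mul (hφ : Continuous φ) {h : V → ℂ} {p : ℝ≥0∞} (hh : MemLp h p) (t : ℝ) :
    MemLp (fun ξ => Complex.exp ((t * φ ξ : ℝ) * Complex.I) * h ξ) p := by
  have hphase : Continuous fun ξ => Complex.exp ((t * φ ξ : ℝ) * Complex.I) := by fun_prop
  exact hh.of_le (hphase.aestronglyMeasurable.mul hh.aestronglyMeasurable)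
    (.of_forall fun ξ => (norm_exp_phase_mul _ _).le)

lemma integrable_exp_phase_mul (hφ : Continuous φ) {h : V → ℂ} (hh : Integrable h) (t : ℝ) :
    Integrable (fun ξ => Complex.exp ((t * φ ξ : ℝ) * Complex.I) * h ξ) :=
  memLp_one_iff_integrable.1 (memLp_exp_phase_mul hφ (memLp_one_iff_integrable.2 hh) t)

lemma continuous_evolution (hφ : Continuous φ) {h : V → ℂ} (hh : Integrable h) (t : ℝ) :
    Continuous (evolution φ h t) :=
  continuous_fourierInv_of_integrable (integrable_exp_phase_mul hφ hh t)

lemma eLpNorm_evolution (hφ : Continuous φ) {h : V → ℂ} (hh : Integrable h) (hh2 : MemLp h 2)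
    (t : ℝ) : eLpNorm (evolution φ h t) 2 volume = eLpNorm h 2 volume := by
  rw [evolution, eLpNorm_fourierInv_eq (integrable_exp_phase_mul hφ hh t)
    (memLp_exp_phase_mul hφ hh2 t)]
  exact eLpNorm_congr_norm_ae (.of_forall fun ξ => norm_exp_phase_mul _ _)

lemma evolution_add (hφ : Continuous φ) {g h : V → ℂ} (hg : Integrable g) (hh : Integrable h)
    (t : ℝ) : evolution φ (g + h) t = evolution φ g t + evolution φ h t := by
  rw [evolution, evolution, evolution, ← fourierInv_add_of_integrable
    (integrable_exp_phase_mul hφ hg t) (integrable_exp_phase_mul hφ hh t)]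
  congr 1
  ext ξ
  exact mul_add _ _ _

/-- The phase `φ` is dispersive on the set `Ω` of frequencies, with rate `σ`: the kernel of
`e^{iτφ(D)}` localised to `Ω` is bounded by `D |τ| ^ (-σ)`. -/
structure IsDispersive (φ : V → ℝ) (Ω : Set V) (σ D : ℝ) : Prop where
  continuous : Continuous φ
  measurableSet : MeasurableSet Ω
  volume_ne_top : volume Ω ≠ ∞
  norm_kernel_le : ∀ τ : ℝ, τ ≠ 0 → ∀ x : V,
    ‖∫ ξ in Ω, Complex.exp ((2 * Real.pi * inner ℝ ξ x : ℝ) * Complex.I) *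
      Complex.exp ((τ * φ ξ : ℝ) * Complex.I)‖ ≤ D * |τ| ^ (-σ)

/-- The operator `1_Ω(D) e^{iτφ(D)}`. With `τ = s - t` it is the kernel of the operator `T T^*` of
the localised evolution. -/
def localizedEvolution (φ : V → ℝ) (Ω : Set V) (τ : ℝ) (f : V → ℂ) : V → ℂ :=
  evolution φ (Ω.indicator (𝓕 f)) τ

namespace IsDispersive

variable {σ D τ r p : ℝ} {f : V → ℂ}

lemma memLp_indicator_of_bound (h : IsDispersive φ Ω σ D) {g : V → ℂ} (hg : Continuous g) {M : ℝ}
    (hM : ∀ ξ, ‖g ξ‖ ≤ M) (p : ℝ≥0∞) : MemLp (Ω.indicator g) p := by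
  rw [memLp_indicator_iff_restrict h.measurableSet]
  have : IsFiniteMeasure (volume.restrict Ω) := isFiniteMeasure_restrict.2 h.volume_ne_top
  exact MemLp.of_bound hg.aestronglyMeasurable M (.of_forall hM)

lemma memLp_indicator_fourier (h : IsDispersive φ Ω σ D) (hf : Integrable f) (p : ℝ≥0∞) :
    MemLp (Ω.indicator (𝓕 f)) p :=
  h.memLp_indicator_of_bound (continuous_fourier_of_integrable hf)
    (norm_fourier_le_integral_norm f) p

lemma integrable_indicator_fourier (h : IsDispersive φ Ω σ D) (hf : Integrable f) :
    Integrable (Ω.indicator (𝓕 f)) :=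
  memLp_one_iff_integrable.1 (h.memLp_indicator_fourier hf 1)

lemma localizedEvolution_add (h : IsDispersive φ Ω σ D) {g : V → ℂ} (hf : Integrable f)
    (hg : Integrable g) :
    localizedEvolution φ Ω τ (f + g) =
      localizedEvolution φ Ω τ f + localizedEvolution φ Ω τ g := by
  rw [localizedEvolution, localizedEvolution, localizedEvolution,
    ← evolution_add h.continuous (h.integrable_indicator_fourier hf)
      (h.integrable_indicator_fourier hg), ← Set.indicator_add']
  congr 2
  exact VectorFourier.fourierIntegral_add Real.continuous_fourierChar continuous_inner hf hg

lemma eLpNorm_two_localizedEvolution_le (h : IsDispersive φ Ω σ D) (hf : Integrable f)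
    (hf2 : MemLp f 2) : eLpNorm (localizedEvolution φ Ω τ f) 2 volume ≤ eLpNorm f 2 volume := by
  rw [localizedEvolution, eLpNorm_evolution h.continuous (h.integrable_indicator_fourier hf)
    (h.memLp_indicator_fourier hf 2), ← eLpNorm_fourier_eq hf hf2]
  exact eLpNorm_indicator_le _

lemma localizedEvolution_eq_integral (h : IsDispersive φ Ω σ D) (hf : Integrable f) (x : V) :
    localizedEvolution φ Ω τ f x =
      ∫ y, (∫ ξ in Ω, Complex.exp ((2 * Real.pi * inner ℝ ξ (x - y) : ℝ) * Complex.I) *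
        Complex.exp ((τ * φ ξ : ℝ) * Complex.I)) * f y := by
  let k : V → ℂ := fun ξ => Complex.exp ((2 * Real.pi * inner ℝ ξ x : ℝ) * Complex.I) *
    Complex.exp ((τ * φ ξ : ℝ) * Complex.I)
  have hk : Integrable (Ω.indicator k) := by
    have := h.continuous
    refine memLp_one_iff_integrable.1 (h.memLp_indicator_of_bound (M := 1) (by fun_prop)
      (fun ξ => ?_) 1)
    rw [norm_exp_phase_mul, Complex.norm_exp_ofReal_mul_I]
  have hflip : ∫ y, 𝓕 (Ω.indicator k) y * f y = ∫ ξ, Ω.indicator k ξ * 𝓕 f ξ := by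
    simpa using! VectorFourier.integral_fourierIntegral_smul_eq_flip (L := innerₗ V)
      Real.continuous_fourierChar continuous_inner hk hf
  have hkernel (y : V) : 𝓕 (Ω.indicator k) y =
      ∫ ξ in Ω, Complex.exp ((2 * Real.pi * inner ℝ ξ (x - y) : ℝ) * Complex.I) *
        Complex.exp ((τ * φ ξ : ℝ) * Complex.I) := by
    rw [Real.fourier_eq', ← integral_indicator h.measurableSet]
    congr 1
    ext ξ
    by_cases hξ : ξ ∈ Ω
    · simp only [Set.indicator_of_mem hξ, k, smul_eq_mul, ← Complex.exp_add,
        inner_sub_right]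
      push_cast
      ring_nf
    · simp only [Set.indicator_of_notMem hξ, smul_zero]
  simp_rw [← hkernel]
  rw [hflip, localizedEvolution, evolution, Real.fourierInv_eq']
  congr 1
  ext ξ
  by_cases hξ : ξ ∈ Ω
  · simp only [Set.indicator_of_mem hξ, k, smul_eq_mul, mul_assoc]
  · simp only [Set.indicator_of_notMem hξ, mul_zero, zero_mul, smul_zero]

lemma enorm_localizedEvolution_le (h : IsDispersive φ Ω σ D) (hτ : τ ≠ 0) (hf : Integrable f)
    (x : V) :
    ‖localizedEvolution φ Ω τ f x‖ₑ ≤ ENNReal.ofReal (D * |τ| ^ (-σ)) * eLpNorm f 1 volume := by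
  rw [h.localizedEvolution_eq_integral hf, eLpNorm_one_eq_lintegral_enorm,
    ← lintegral_const_mul' _ _ ENNReal.ofReal_ne_top]
  refine (enorm_integral_le_lintegral_enorm _).trans (lintegral_mono fun y => ?_)
  rw [enorm_mul, ← ofReal_norm]
  gcongr
  exact h.norm_kernel_le τ hτ (x - y)

lemma isRestrictedType_localizedEvolution (h : IsDispersive φ Ω σ D) (hτ : τ ≠ 0)
    (hf : Integrable f) (hf2 : MemLp f 2) :
    IsRestrictedType (localizedEvolution φ Ω τ) f (ENNReal.ofReal (D * |τ| ^ (-σ)))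
      volume volume where
  aestronglyMeasurable _ hS := (continuous_evolution h.continuous
    (h.integrable_indicator_fourier (hf.indicator hS)) τ).aestronglyMeasurable
  enorm_le_add S hS x := by
    conv_lhs => rw [← Set.indicator_compl_add_self S f,
      h.localizedEvolution_add (hf.indicator hS.compl) (hf.indicator hS)]
    exact enorm_add_le _ _
  enorm_le _ hS := h.enorm_localizedEvolution_le hτ (hf.indicator hS)
  eLpNorm_two_le _ hS :=
    h.eLpNorm_two_localizedEvolution_le (hf.indicator hS) (hf2.indicator hS)

theorem lintegral_localizedEvolution_rpow_le (h : IsDispersive φ Ω σ D) (hτ : τ ≠ 0)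
    (hfm : StronglyMeasurable f) (hf : Integrable f) (hf2 : MemLp f 2)
    (hrp : r.HolderConjugate p) (hr : 2 < r) (hfin : ∫⁻ x, ‖f x‖ₑ ^ p ≠ ∞) :
    (∫⁻ x, ‖localizedEvolution φ Ω τ f x‖ₑ ^ r) ^ (1 / r) ≤
      ENNReal.ofReal (interpolationConst r) * ENNReal.ofReal (D * |τ| ^ (-σ)) ^ (1 - 2 / r) *
        (∫⁻ x, ‖f x‖ₑ ^ p) ^ (1 / p) :=
  (h.isRestrictedType_localizedEvolution hτ hf hf2).lintegral_rpow_le hfm hrp hr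
    ENNReal.ofReal_ne_top hfin

end IsDispersive

end Evolution

/-! ### The `T T^*` argument -/

section TTStar

open scoped ComplexConjugate

section Energy

variable {α β : Type*} [MeasurableSpace α] [MeasurableSpace β] {μ : Measure α} {ν : Measure β}

/-- Expand the square of the integral and exchange the order of integration. -/
lemma lintegral_enorm_integral_sq_le [SFinite μ] [IsFiniteMeasure ν] {a : α → β → ℂ}
    (ha : StronglyMeasurable (Function.uncurry a)) {k : α → ℝ} (hk : Integrable k μ)
    (hak : ∀ t ξ, ‖a t ξ‖ ≤ k t) :
    ∫⁻ ξ, ‖∫ t, a t ξ ∂μ‖ₑ ^ (2 : ℝ) ∂ν ≤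
      ∫⁻ t, ∫⁻ s, ‖∫ ξ, a t ξ * conj (a s ξ) ∂ν‖ₑ ∂μ ∂μ := by
  let b (ξ : β) (p : α × α) : ℂ := a p.1 ξ * conj (a p.2 ξ)
  have hb : Integrable (Function.uncurry b) (ν.prod (μ.prod μ)) := by
    refine ((integrable_const (1 : ℝ)).mul_prod (hk.mul_prod hk)).mono' ?_
      (.of_forall fun z => ?_)
    · have hfst : Measurable fun z : β × α × α => (z.2.1, z.1) := by fun_prop
      have hsnd : Measurable fun z : β × α × α => (z.2.2, z.1) := by fun_prop
      exact ((ha.comp_measurable hfst).mul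
        (Complex.continuous_conj.comp_stronglyMeasurable
          (ha.comp_measurable hsnd))).aestronglyMeasurable
    · rw [Function.uncurry, norm_mul, RCLike.norm_conj, one_mul]
      exact mul_le_mul (hak _ _) (hak _ _) (norm_nonneg _) ((norm_nonneg _).trans (hak _ z.1))
  have hsq (ξ : β) : ∫ p, b ξ p ∂(μ.prod μ) = ((‖∫ t, a t ξ ∂μ‖ ^ 2 : ℝ) : ℂ) := by
    rw [integral_prod_mul (fun t => a t ξ) (fun s => conj (a s ξ)), integral_conj,
      Complex.mul_conj', Complex.ofReal_pow]
  have hsq_int : Integrable (fun ξ => ‖∫ t, a t ξ ∂μ‖ ^ 2) ν := by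
    have h := hb.integral_prod_left.re
    simpa only [Function.uncurry, hsq, RCLike.re_to_complex, Complex.ofReal_re] using! h
  calc ∫⁻ ξ, ‖∫ t, a t ξ ∂μ‖ₑ ^ (2 : ℝ) ∂ν
      = ‖∫ ξ, ∫ p, b ξ p ∂(μ.prod μ) ∂ν‖ₑ := by
        simp_rw [hsq]
        rw [integral_complex_ofReal, ← ofReal_norm,
          Complex.norm_of_nonneg (integral_nonneg fun _ => by positivity),
          ofReal_integral_eq_lintegral_ofReal hsq_int (.of_forall fun _ => by positivity)]
        simp_rw [ENNReal.rpow_two, ENNReal.ofReal_pow (norm_nonneg _), ofReal_norm]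
    _ = ‖∫ p, ∫ ξ, b ξ p ∂ν ∂(μ.prod μ)‖ₑ := by rw [integral_integral_swap hb]
    _ ≤ ∫⁻ p, ‖∫ ξ, b ξ p ∂ν‖ₑ ∂(μ.prod μ) := enorm_integral_le_lintegral_enorm _
    _ = ∫⁻ t, ∫⁻ s, ‖∫ ξ, a t ξ * conj (a s ξ) ∂ν‖ₑ ∂μ ∂μ :=
        lintegral_prod _ hb.integral_prod_right.aestronglyMeasurable.enorm

end Energy

variable {V : Type*} [NormedAddCommGroup V] [InnerProductSpace ℝ V] [FiniteDimensional ℝ V]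
  [MeasurableSpace V] [BorelSpace V] {φ : V → ℝ} {Ω : Set V} {G : ℝ → V → ℂ}

/-- The Fourier transform of `e^{-itφ(D)} G(t)`. Its integral over `t` is the Fourier transform of
the adjoint of the evolution, applied to `G`. -/
def adjointSlice (φ : V → ℝ) (G : ℝ → V → ℂ) (t : ℝ) (ξ : V) : ℂ :=
  Complex.exp ((-t * φ ξ : ℝ) * Complex.I) * 𝓕 (G t) ξ

lemma norm_adjointSlice_le (φ : V → ℝ) (G : ℝ → V → ℂ) (t : ℝ) (ξ : V) :
    ‖adjointSlice φ G t ξ‖ ≤ ∫ x, ‖G t x‖ := by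
  rw [adjointSlice, norm_exp_phase_mul]
  exact norm_fourier_le_integral_norm _ _

lemma stronglyMeasurable_adjointSlice (hφ : Continuous φ)
    (hG : StronglyMeasurable (Function.uncurry G)) :
    StronglyMeasurable (Function.uncurry (adjointSlice φ G)) := by
  have hphase : Continuous fun z : ℝ × V =>
      Complex.exp ((-z.1 * φ z.2 : ℝ) * Complex.I) := by fun_prop
  refine hphase.stronglyMeasurable.mul ?_
  have hG' : StronglyMeasurable fun z : (ℝ × V) × V => G z.1.1 z.2 :=
    hG.comp_measurable (g := fun z : (ℝ × V) × V => (z.1.1, z.2)) (by fun_prop)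
  have hchar : Continuous fun z : (ℝ × V) × V =>
      Complex.exp ((-2 * Real.pi * inner ℝ z.2 z.1.2 : ℝ) * Complex.I) := by fun_prop
  simp_rw [Real.fourier_eq']
  exact (hchar.stronglyMeasurable.smul hG').integral_prod_right'

lemma integral_evolution_mul_conj (hφ : Continuous φ) {h g : V → ℂ} (hh : Integrable h)
    (hg : Integrable g) (τ : ℝ) :
    ∫ x, evolution φ h τ x * conj (g x) =
      ∫ ξ, Complex.exp ((τ * φ ξ : ℝ) * Complex.I) * h ξ * conj (𝓕 g ξ) :=
  integral_fourierInv_mul_conj (integrable_exp_phase_mul hφ hh τ) hg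

lemma conj_exp_phase (a : ℝ) :
    conj (Complex.exp (a * Complex.I)) = Complex.exp ((-a : ℝ) * Complex.I) := by
  rw [← Complex.exp_conj, map_mul, Complex.conj_I, Complex.conj_ofReal]
  push_cast
  ring_nf

lemma integral_evolution_mul_conj_eq_adjointSlice (hφ : Continuous φ) {h : V → ℂ}
    (hh : Integrable h) {t : ℝ} (hG : Integrable (G t)) :
    ∫ x, evolution φ h t x * conj (G t x) = ∫ ξ, h ξ * conj (adjointSlice φ G t ξ) := by
  rw [integral_evolution_mul_conj hφ hh hG]
  congr 1
  ext ξ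
  rw [adjointSlice, map_mul, conj_exp_phase, neg_mul, neg_neg]
  ring

lemma IsDispersive.integral_adjointSlice_mul_conj {σ D : ℝ} (h : IsDispersive φ Ω σ D) {t s : ℝ}
    (ht : Integrable (G t)) (hs : Integrable (G s)) :
    ∫ ξ in Ω, adjointSlice φ G t ξ * conj (adjointSlice φ G s ξ) =
      ∫ x, localizedEvolution φ Ω (s - t) (G t) x * conj (G s x) := by
  rw [localizedEvolution,
    integral_evolution_mul_conj h.continuous (h.integrable_indicator_fourier ht) hs,
    ← integral_indicator h.measurableSet]
  congr 1
  ext ξ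
  by_cases hξ : ξ ∈ Ω
  · rw [Set.indicator_of_mem hξ, Set.indicator_of_mem hξ, adjointSlice, adjointSlice, map_mul,
      conj_exp_phase, show (s - t) * φ ξ = -t * φ ξ + -(-s * φ ξ) by ring, Complex.ofReal_add,
      add_mul, Complex.exp_add]
    ring
  · simp only [Set.indicator_of_notMem hξ, mul_zero, zero_mul]

end TTStar

/-! ### The abstract Strichartz estimate -/

section Strichartz

open scoped ComplexConjugate

variable {V : Type*} [NormedAddCommGroup V] [InnerProductSpace ℝ V] [FiniteDimensional ℝ V]
  [MeasurableSpace V] [BorelSpace V] {φ : V → ℝ} {Ω : Set V} {G : ℝ → V → ℂ} {h : V → ℂ}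
  {σ D q r q' r' : ℝ}

lemma stronglyMeasurable_evolution (hφ : Continuous φ) (hh : Integrable h) :
    StronglyMeasurable (Function.uncurry (evolution φ h)) := by
  have : Continuous (Function.uncurry (evolution φ h)) := by
    have heq : Function.uncurry (evolution φ h) = fun z : ℝ × V => ∫ ξ, Complex.exp
        ((2 * Real.pi * inner ℝ ξ z.2 : ℝ) * Complex.I) *
          (Complex.exp ((z.1 * φ ξ : ℝ) * Complex.I) * h ξ) :=
      funext fun z => Real.fourierInv_eq' _ _
    rw [heq]
    refine continuous_of_dominated (bound := fun ξ => ‖h ξ‖) (fun z => ?_)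
      (fun z => .of_forall fun ξ => ?_) hh.norm (.of_forall fun ξ => by fun_prop)
    · have hphase : Continuous fun ξ : V =>
          Complex.exp ((2 * Real.pi * inner ℝ ξ z.2 : ℝ) * Complex.I) := by fun_prop
      exact hphase.aestronglyMeasurable.mul
        (integrable_exp_phase_mul hφ hh z.1).aestronglyMeasurable
    · rw [norm_exp_phase_mul, norm_exp_phase_mul]
  exact this.stronglyMeasurable

namespace IsDispersive

lemma nonneg (hd : IsDispersive φ Ω σ D) : 0 ≤ D := by
  simpa using (norm_nonneg _).trans (hd.norm_kernel_le 1 one_ne_zero 0)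

lemma enorm_integral_adjointSlice_mul_conj_le (hd : IsDispersive φ Ω σ D)
    (hG : IsMixedTest volume volume G) (hr : 2 < r) (hrr : r.HolderConjugate r')
    (hadm : σ * (1 - 2 / r) = 2 / q) {t s : ℝ} (hts : s ≠ t) :
    ‖∫ ξ in Ω, adjointSlice φ G t ξ * conj (adjointSlice φ G s ξ)‖ₑ ≤
      ENNReal.ofReal (interpolationConst r * D ^ (1 - 2 / r)) *
        ((∫⁻ x, ‖G t x‖ₑ ^ r') ^ (1 / r') * (∫⁻ x, ‖G s x‖ₑ ^ r') ^ (1 / r') *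
          ENNReal.ofReal (|t - s| ^ (-(2 / q)))) := by
  have hτ : s - t ≠ 0 := sub_ne_zero.2 hts
  have h2r : 0 ≤ 1 - 2 / r := by rw [sub_nonneg, div_le_one] <;> linarith
  have hfin : ∫⁻ x, ‖G t x‖ₑ ^ r' ≠ ∞ := by
    rw [← hG.ofReal_sliceIntegral hrr.symm.pos]
    exact ENNReal.ofReal_ne_top
  have hpow : ENNReal.ofReal (D * |s - t| ^ (-σ)) ^ (1 - 2 / r) =
      ENNReal.ofReal (D ^ (1 - 2 / r)) * ENNReal.ofReal (|t - s| ^ (-(2 / q))) := by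
    have := hd.nonneg
    rw [ENNReal.ofReal_rpow_of_nonneg (by positivity) h2r,
      Real.mul_rpow hd.nonneg (by positivity), ← Real.rpow_mul (abs_nonneg _), neg_mul, hadm,
      abs_sub_comm, ENNReal.ofReal_mul (by positivity)]
  rw [hd.integral_adjointSlice_mul_conj (hG.integrable_slice t) (hG.integrable_slice s)]
  calc ‖∫ x, localizedEvolution φ Ω (s - t) (G t) x * conj (G s x)‖ₑ
      ≤ ∫⁻ x, ‖localizedEvolution φ Ω (s - t) (G t) x‖ₑ * ‖G s x‖ₑ := by
        refine (enorm_integral_le_lintegral_enorm _).trans_eq (lintegral_congr fun x => ?_)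
        rw [enorm_mul, RCLike.enorm_conj]
    _ ≤ (∫⁻ x, ‖localizedEvolution φ Ω (s - t) (G t) x‖ₑ ^ r) ^ (1 / r) *
          (∫⁻ x, ‖G s x‖ₑ ^ r') ^ (1 / r') :=
        ENNReal.lintegral_mul_le_Lp_mul_Lq _ hrr
          (continuous_evolution hd.continuous (hd.integrable_indicator_fourier
            (hG.integrable_slice t)) _).aestronglyMeasurable.enorm
          (hG.stronglyMeasurable_slice s).aestronglyMeasurable.enorm
    _ ≤ ENNReal.ofReal (interpolationConst r) * ENNReal.ofReal (D * |s - t| ^ (-σ)) ^ (1 - 2 / r) *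
          (∫⁻ x, ‖G t x‖ₑ ^ r') ^ (1 / r') * (∫⁻ x, ‖G s x‖ₑ ^ r') ^ (1 / r') := by
        gcongr
        exact hd.lintegral_localizedEvolution_rpow_le hτ (hG.stronglyMeasurable_slice t)
          (hG.integrable_slice t) (hG.memLp_slice t 2) hrr hr hfin
    _ = _ := by
        rw [hpow, ENNReal.ofReal_mul (interpolationConst_pos hr).le]
        ring

lemma lintegral_adjointSlice_sq_le (hd : IsDispersive φ Ω σ D) (hG : IsMixedTest volume volume G)
    (hq : 2 < q) (hqq : q.HolderConjugate q') (hr : 2 < r) (hrr : r.HolderConjugate r')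
    (hadm : σ * (1 - 2 / r) = 2 / q) :
    ∫⁻ ξ in Ω, ‖∫ t, adjointSlice φ G t ξ‖ₑ ^ (2 : ℝ) ≤
      ENNReal.ofReal (interpolationConst r * hlsConst q * D ^ (1 - 2 / r)) *
        mixedNorm q' r' volume volume G ^ (2 : ℝ) := by
  have : IsFiniteMeasure (volume.restrict Ω) := isFiniteMeasure_restrict.2 hd.volume_ne_top
  let F (t : ℝ) : ℝ≥0∞ := (∫⁻ x, ‖G t x‖ₑ ^ r') ^ (1 / r')
  have hF : Measurable F := (Measurable.lintegral_prod_right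
    (hG.stronglyMeasurable.enorm.pow_const r')).pow_const _
  have hnorm (e : ℝ) : (∫⁻ t, F t ^ q') ^ (e / q') = mixedNorm q' r' volume volume G ^ e := by
    simp_rw [F, mixedNorm, ← ENNReal.rpow_mul, one_div_mul_eq_div]
  have hfin : ∫⁻ t, F t ^ q' ≠ ∞ := by
    have h := hnorm q'
    rw [div_self hqq.symm.ne_zero, ENNReal.rpow_one] at h
    rw [h]
    exact ENNReal.rpow_ne_top_of_nonneg hqq.symm.nonneg
      (hG.mixedNorm_ne_top hqq.symm.pos hrr.symm.pos)
  have hne (t : ℝ) : ∀ᵐ s : ℝ, s ≠ t := by simp [ae_iff]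
  calc ∫⁻ ξ in Ω, ‖∫ t, adjointSlice φ G t ξ‖ₑ ^ (2 : ℝ)
      ≤ ∫⁻ t, ∫⁻ s, ‖∫ ξ in Ω, adjointSlice φ G t ξ * conj (adjointSlice φ G s ξ)‖ₑ :=
        lintegral_enorm_integral_sq_le
          (stronglyMeasurable_adjointSlice hd.continuous hG.stronglyMeasurable)
          hG.integrable_integral_norm (norm_adjointSlice_le φ G)
    _ ≤ ∫⁻ t, ∫⁻ s, ENNReal.ofReal (interpolationConst r * D ^ (1 - 2 / r)) *
          (F t * F s * ENNReal.ofReal (|t - s| ^ (-(2 / q)))) :=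
        lintegral_mono fun t => lintegral_mono_ae <| (hne t).mono fun _ hs =>
          hd.enorm_integral_adjointSlice_mul_conj_le hG hr hrr hadm hs
    _ = ENNReal.ofReal (interpolationConst r * D ^ (1 - 2 / r)) *
          ∫⁻ t, ∫⁻ s, F t * F s * ENNReal.ofReal (|t - s| ^ (-(2 / q))) := by
        simp_rw [lintegral_const_mul' _ _ ENNReal.ofReal_ne_top]
    _ ≤ ENNReal.ofReal (interpolationConst r * D ^ (1 - 2 / r)) *
          (ENNReal.ofReal (hlsConst q) * (∫⁻ t, F t ^ q') ^ (2 / q')) := by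
        gcongr
        exact lintegral_lintegral_mul_abs_rpow_le hF hqq.symm hq hfin
    _ = _ := by
        rw [hnorm, ← mul_assoc, ← ENNReal.ofReal_mul
          (mul_nonneg (interpolationConst_pos hr).le (Real.rpow_nonneg hd.nonneg _)),
          mul_right_comm]

lemma enorm_integral_evolution_mul_conj_le (hd : IsDispersive φ Ω σ D)
    (hG : IsMixedTest volume volume G) (hh : Integrable h) (hsupp : Function.support h ⊆ Ω) :
    ‖∫ t, ∫ x, evolution φ h t x * conj (G t x)‖ₑ ≤
      eLpNorm h 2 volume *
        (∫⁻ ξ in Ω, ‖∫ t, adjointSlice φ G t ξ‖ₑ ^ (2 : ℝ)) ^ ((1 : ℝ) / 2) := by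
  have hmeas := stronglyMeasurable_adjointSlice hd.continuous hG.stronglyMeasurable
  have hint : Integrable (Function.uncurry fun (t : ℝ) (ξ : V) =>
      h ξ * conj (adjointSlice φ G t ξ)) (volume.prod volume) := by
    refine (hG.integrable_integral_norm.mul_prod hh.norm).mono' ?_ (.of_forall fun z => ?_)
    · exact hh.aestronglyMeasurable.comp_snd.mul
        (Complex.continuous_conj.comp_stronglyMeasurable hmeas).aestronglyMeasurable
    · rw [Function.uncurry, norm_mul, RCLike.norm_conj, mul_comm]
      gcongr
      exact norm_adjointSlice_le φ G _ _
  calc ‖∫ t, ∫ x, evolution φ h t x * conj (G t x)‖ₑ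
      = ‖∫ ξ, h ξ * conj (∫ t, adjointSlice φ G t ξ)‖ₑ := by
        simp_rw [integral_evolution_mul_conj_eq_adjointSlice hd.continuous hh
          (hG.integrable_slice _)]
        rw [integral_integral_swap hint]
        simp_rw [integral_const_mul, integral_conj]
    _ = ‖∫ ξ in Ω, h ξ * conj (∫ t, adjointSlice φ G t ξ)‖ₑ := by
        rw [setIntegral_eq_integral_of_forall_compl_eq_zero fun ξ hξ => ?_]
        rw [Function.notMem_support.1 fun hξ' => hξ (hsupp hξ'), zero_mul]
    _ ≤ ∫⁻ ξ in Ω, ‖h ξ‖ₑ * ‖∫ t, adjointSlice φ G t ξ‖ₑ := by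
        refine (enorm_integral_le_lintegral_enorm _).trans_eq (lintegral_congr fun ξ => ?_)
        rw [enorm_mul, RCLike.enorm_conj]
    _ ≤ (∫⁻ ξ in Ω, ‖h ξ‖ₑ ^ (2 : ℝ)) ^ ((1 : ℝ) / 2) *
          (∫⁻ ξ in Ω, ‖∫ t, adjointSlice φ G t ξ‖ₑ ^ (2 : ℝ)) ^ ((1 : ℝ) / 2) :=
        ENNReal.lintegral_mul_le_Lp_mul_Lq _ Real.HolderConjugate.two_two
          hh.aestronglyMeasurable.restrict.enorm
          hmeas.integral_prod_left.aestronglyMeasurable.enorm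
    _ ≤ _ := by
        rw [eLpNorm_eq_lintegral_rpow_enorm_toReal two_ne_zero ENNReal.ofNat_ne_top,
          ENNReal.toReal_ofNat]
        gcongr
        exact Measure.restrict_le_self

theorem mixedNorm_evolution_le (hd : IsDispersive φ Ω σ D) (hq : 2 < q) (hr : 2 < r)
    (hadm : σ * (1 - 2 / r) = 2 / q) (hh : Integrable h) (hsupp : Function.support h ⊆ Ω) :
    mixedNorm q r volume volume (evolution φ h) ≤
      ENNReal.ofReal (√(interpolationConst r * hlsConst q) * D ^ (1 / 2 - 1 / r)) *
        eLpNorm h 2 volume := by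
  have hqq : q.HolderConjugate q.conjExponent := .conjExponent (by linarith)
  have hrr : r.HolderConjugate r.conjExponent := .conjExponent (by linarith)
  have hc : 0 ≤ interpolationConst r * hlsConst q :=
    mul_nonneg (interpolationConst_pos hr).le (hlsConst_pos hq).le
  refine mixedNorm_le_of_pairing_le (stronglyMeasurable_evolution hd.continuous hh) hqq hrr
    fun G hG => (hd.enorm_integral_evolution_mul_conj_le hG hh hsupp).trans ?_
  calc eLpNorm h 2 volume *
        (∫⁻ ξ in Ω, ‖∫ t, adjointSlice φ G t ξ‖ₑ ^ (2 : ℝ)) ^ ((1 : ℝ) / 2)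
      ≤ eLpNorm h 2 volume *
        (ENNReal.ofReal (interpolationConst r * hlsConst q * D ^ (1 - 2 / r)) *
          mixedNorm q.conjExponent r.conjExponent volume volume G ^ (2 : ℝ)) ^ ((1 : ℝ) / 2) := by
        gcongr
        exact hd.lintegral_adjointSlice_sq_le hG hq hqq hr hrr hadm
    _ = _ := by
        rw [ENNReal.mul_rpow_of_nonneg _ _ (by positivity), ← ENNReal.rpow_mul,
          mul_one_div_cancel two_ne_zero, ENNReal.rpow_one, ENNReal.ofReal_rpow_of_nonneg
            (mul_nonneg hc (Real.rpow_nonneg hd.nonneg _)) (by positivity),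
          Real.mul_rpow hc (Real.rpow_nonneg hd.nonneg _), ← Real.rpow_mul hd.nonneg,
          ← Real.sqrt_eq_rpow, show (1 - 2 / r) * (1 / 2) = 1 / 2 - 1 / r by ring, mul_left_comm,
          mul_assoc]

end IsDispersive

end Strichartz

/-! ### Littlewood–Paley pieces -/

section LittlewoodPaley

open Set

variable {χ : ℝ → ℝ} {lam : ℝ}

lemma sub_comp_two_mul_eq_zero (hsupp : Function.support χ ⊆ Ioo (-2) 2)
    (hone : ∀ s ∈ Icc (-1 : ℝ) 1, χ s = 1) {s : ℝ} (hs : 0 ≤ s) (hs' : s ∉ Icc (1 / 2) 2) :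
    χ s - χ (2 * s) = 0 := by
  have hzero {u : ℝ} (hu : 2 ≤ u) : χ u = 0 :=
    Function.notMem_support.1 fun h => hu.not_gt (hsupp h).2
  rcases lt_or_ge s (1 / 2) with hlt | hge
  · rw [hone s ⟨by linarith, by linarith⟩, hone (2 * s) ⟨by linarith, by linarith⟩, sub_self]
  · have hgt : 2 < s := not_le.1 fun hle => hs' ⟨hge, hle⟩
    rw [hzero hgt.le, hzero (by linarith), sub_self]

lemma littlewoodPaley_eq_zero (hsupp : Function.support χ ⊆ Ioo (-2) 2)
    (hone : ∀ s ∈ Icc (-1 : ℝ) 1, χ s = 1) (hlam : 0 < lam) {ξ : E2}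
    (hξ : ξ ∉ annulus (lam / 2) (2 * lam)) : χ (‖ξ‖ / lam) - χ (2 * ‖ξ‖ / lam) = 0 := by
  rw [mul_div_assoc]
  refine sub_comp_two_mul_eq_zero hsupp hone (by positivity) fun h => hξ ⟨?_, ?_⟩
  · linarith [(le_div_iff₀ hlam).1 h.1]
  · exact (div_le_iff₀ hlam).1 h.2

lemma contDiff_littlewoodPaley (hχ : ContDiff ℝ (⊤ : ℕ∞) χ)
    (hsupp : Function.support χ ⊆ Ioo (-2) 2) (hone : ∀ s ∈ Icc (-1 : ℝ) 1, χ s = 1)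
    (hlam : 0 < lam) :
    ContDiff ℝ (⊤ : ℕ∞) fun ξ : E2 => χ (‖ξ‖ / lam) - χ (2 * ‖ξ‖ / lam) := by
  refine contDiff_iff_contDiffAt.2 fun ξ => ?_
  rcases eq_or_ne ξ 0 with rfl | hξ
  · refine (contDiffAt_const (c := (0 : ℝ))).congr_of_eventuallyEq ?_
    filter_upwards [Metric.ball_mem_nhds (0 : E2) (half_pos hlam)] with ξ hξ
    exact littlewoodPaley_eq_zero hsupp hone hlam fun h =>
      h.1.not_gt (mem_ball_zero_iff.1 hξ)
  · have hnorm : ContDiffAt ℝ (⊤ : ℕ∞) (fun ξ : E2 => ‖ξ‖) ξ := contDiffAt_norm ℝ hξ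
    exact (hχ.contDiffAt.comp ξ (hnorm.div_const _)).sub
      (hχ.contDiffAt.comp ξ ((contDiffAt_const.mul hnorm).div_const _))

lemma exists_schwartzMap_eq_proj2 (hχ : ContDiff ℝ (⊤ : ℕ∞) χ)
    (hsupp : Function.support χ ⊆ Ioo (-2) 2) (hone : ∀ s ∈ Icc (-1 : ℝ) 1, χ s = 1)
    (hlam : 0 < lam) (f : 𝓢(E2, ℂ)) :
    ∃ g : 𝓢(E2, ℂ), ⇑g = proj2 χ lam f ∧
      Function.support (𝓕 (g : E2 → ℂ)) ⊆ annulus (lam / 2) (2 * lam) := by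
  let h (ξ : E2) : ℂ := (χ (‖ξ‖ / lam) - χ (2 * ‖ξ‖ / lam) : ℝ) * 𝓕 (f : E2 → ℂ) ξ
  have hsub : Function.support h ⊆ annulus (lam / 2) (2 * lam) :=
    Function.support_subset_iff'.2 fun ξ hξ => by
      simp only [h, littlewoodPaley_eq_zero hsupp hone hlam hξ, Complex.ofReal_zero, zero_mul]
  have hcompact : HasCompactSupport h :=
    .of_support_subset_isCompact (isCompact_closedBall (0 : E2) (2 * lam)) fun ξ hξ =>
      mem_closedBall_zero_iff.2 (hsub hξ).2
  have hsmooth : ContDiff ℝ (⊤ : ℕ∞) h := by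
    refine (Complex.ofRealCLM.contDiff.comp (contDiff_littlewoodPaley hχ hsupp hone hlam)).mul ?_
    rw [← SchwartzMap.fourier_coe]
    exact (𝓕 f).smooth _
  refine ⟨𝓕⁻ (hcompact.toSchwartzMap hsmooth), SchwartzMap.fourierInv_coe _, ?_⟩
  rw [← SchwartzMap.fourier_coe, FourierTransform.fourier_fourierInv_eq]
  exact hsub

end LittlewoodPaley

/-! ### The Strichartz estimate in dimension two -/

section Strichartz2D

variable {q r : ℝ≥0∞} {μ lam : ℝ} {g : E2 → ℂ}

lemma prop2_eq_evolution (μ t : ℝ) (g : E2 → ℂ) :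
    prop2 μ t g = evolution (wavePhase μ) (𝓕 g) t := by
  unfold prop2 evolution wavePhase
  congr with ξ
  rw [m2_eq_waveSymbol, norm_smul, Real.norm_of_nonneg (Real.sqrt_nonneg μ), mul_comm Complex.I,
    div_mul_eq_mul_div, mul_div_assoc]

lemma timeNorm_eLpNorm_eq_mixedNorm (hq : q ≠ ∞) (hr₀ : r ≠ 0) (hr : r ≠ ∞) (u : ℝ → E2 → ℂ) :
    timeNorm q (fun t => eLpNorm (u t) r volume) =
      mixedNorm q.toReal r.toReal volume volume u := by
  simp_rw [timeNorm, if_neg hq, mixedNorm, eLpNorm_eq_lintegral_rpow_enorm_toReal hr₀ hr,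
    ← ENNReal.rpow_mul, one_div_mul_eq_div]

lemma isDispersive_wavePhase (hμ : 0 < μ) (hlam : 0 < lam) :
    IsDispersive (wavePhase μ) (annulus (lam / 2) (2 * lam)) 1
      (4356000 * dispersiveConst μ lam) where
  continuous := continuous_wavePhase μ
  measurableSet := measurableSet_annulus _ _
  volume_ne_top := volume_annulus_ne_top _ _
  norm_kernel_le τ hτ x := by
    rw [Real.rpow_neg_one, ← div_eq_mul_inv]
    exact norm_waveKernel_le hμ hlam hτ x

lemma eq_two_of_admissible_top (hr : 2 ≤ r) (hadm : 2 / ∞ = 2 * (1 / 2 - 1 / r)) : r = 2 := by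
  rw [ENNReal.div_top, eq_comm, mul_eq_zero_iff_left two_ne_zero, tsub_eq_zero_iff_le, one_div,
    one_div, ENNReal.inv_le_inv] at hadm
  exact hadm.antisymm hr

lemma toReal_of_admissible (hq : 2 < q) (hq' : q ≠ ∞) (hr : 2 ≤ r)
    (hadm : 2 / q = 2 * (1 / 2 - 1 / r)) :
    r ≠ ∞ ∧ 2 < q.toReal ∧ 2 < r.toReal ∧ 1 * (1 - 2 / r.toReal) = 2 / q.toReal := by
  have hq2 : 2 < q.toReal := by
    simpa using (ENNReal.toReal_lt_toReal ENNReal.ofNat_ne_top hq').2 hq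
  have hle : 1 / r ≤ 1 / 2 := by simpa using hr
  have hreal : 2 / q.toReal = 1 - 2 / r.toReal := by
    have h := congrArg ENNReal.toReal hadm
    rw [ENNReal.toReal_div, ENNReal.toReal_mul, ENNReal.toReal_sub_of_le hle (by simp),
      ENNReal.toReal_div, ENNReal.toReal_div, ENNReal.toReal_ofNat, ENNReal.toReal_one] at h
    linear_combination h
  have hpos : 0 < 2 / q.toReal := by positivity
  have hr' : r ≠ ∞ := by
    rintro rfl
    rw [ENNReal.toReal_top, div_zero, sub_zero, div_eq_one_iff_eq (by positivity)] at hreal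
    exact hq2.ne hreal
  have hr2 : 2 ≤ r.toReal := by
    simpa using (ENNReal.toReal_le_toReal ENNReal.ofNat_ne_top hr').2 hr
  refine ⟨hr', hq2, hr2.lt_of_ne' fun h => ?_, by rw [hreal, one_mul]⟩
  rw [h, div_self two_ne_zero, sub_self] at hreal
  exact hpos.ne' hreal

lemma integrable_fourier_of_support_subset_annulus {a b : ℝ} (hg : Integrable g)
    (hsupp : Function.support (𝓕 g) ⊆ annulus a b) : Integrable (𝓕 g) :=
  (continuous_fourier_of_integrable hg).integrable_of_hasCompactSupport <|
    .of_support_subset_isCompact (isCompact_closedBall (0 : E2) b) fun _ hξ =>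
      mem_closedBall_zero_iff.2 (hsupp hξ).2

lemma timeNorm_prop2_le_of_ne_top (hq : 2 < q) (hq' : q ≠ ∞) (hr : 2 ≤ r)
    (hadm : 2 / q = 2 * (1 / 2 - 1 / r)) (hμ : 0 < μ) (hlam : 0 < lam) (hg : Integrable g)
    (hg2 : MemLp g 2) (hsupp : Function.support (𝓕 g) ⊆ annulus (lam / 2) (2 * lam)) :
    timeNorm q (fun t => eLpNorm (prop2 μ t g) r volume) ≤
      ENNReal.ofReal (√(interpolationConst r.toReal * hlsConst q.toReal) *
        4356000 ^ (1 / 2 - 1 / r.toReal) * dispersiveConst μ lam ^ (1 / 2 - 1 / r.toReal)) *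
      eLpNorm g 2 volume := by
  obtain ⟨hr', hq2, hr2, hreal⟩ := toReal_of_admissible hq hq' hr hadm
  rw [timeNorm_eLpNorm_eq_mixedNorm hq' (two_pos.trans_le hr).ne' hr', ← eLpNorm_fourier_eq hg hg2,
    mul_assoc, ← Real.mul_rpow (by norm_num) (dispersiveConst_pos hμ lam).le]
  simp_rw [prop2_eq_evolution]
  exact (isDispersive_wavePhase hμ hlam).mixedNorm_evolution_le hq2 hr2 hreal
    (integrable_fourier_of_support_subset_annulus hg hsupp) hsupp

lemma timeNorm_top_prop2_le {a b : ℝ} (hg : Integrable g) (hg2 : MemLp g 2)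
    (hsupp : Function.support (𝓕 g) ⊆ annulus a b) (μ : ℝ) :
    timeNorm ∞ (fun t => eLpNorm (prop2 μ t g) 2 volume) ≤ eLpNorm g 2 volume := by
  have hint := integrable_fourier_of_support_subset_annulus hg hsupp
  have hmem : MemLp (𝓕 g) 2 :=
    ⟨hint.aestronglyMeasurable, (eLpNorm_fourier_eq hg hg2).trans_lt hg2.2⟩
  rw [timeNorm, if_pos rfl]
  refine essSup_le_of_ae_le _ (.of_forall fun t => ?_)
  beta_reduce
  rw [prop2_eq_evolution, eLpNorm_evolution (continuous_wavePhase μ) hint hmem,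
    eLpNorm_fourier_eq hg hg2]

theorem strichartz_2d_general (hq : 2 < q) (hr2 : 2 ≤ r) (hadm : 2 / q = 2 * (1 / 2 - 1 / r)) :
    ∃ C : ℝ, 0 < C ∧ ∀ μ : ℝ, 0 < μ → ∀ lam : ℝ, 0 < lam → ∀ g : E2 → ℂ,
      Integrable g → MemLp g 2 → Function.support (𝓕 g) ⊆ annulus (lam / 2) (2 * lam) →
        timeNorm q (fun t => eLpNorm (prop2 μ t g) r volume) ≤
          ENNReal.ofReal (C * dispersiveConst μ lam ^ ((1 : ℝ) / 2 - 1 / r.toReal)) *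
            eLpNorm g 2 volume := by
  rcases eq_or_ne q ∞ with rfl | hq'
  · obtain rfl := eq_two_of_admissible_top hr2 hadm
    refine ⟨1, one_pos, fun μ _ lam _ g hg hg2 hsupp => ?_⟩
    simpa using timeNorm_top_prop2_le hg hg2 hsupp μ
  · obtain ⟨-, hq2, hr2', -⟩ := toReal_of_admissible hq hq' hr2 hadm
    have := interpolationConst_pos hr2'
    have := hlsConst_pos hq2
    exact ⟨√(interpolationConst r.toReal * hlsConst q.toReal) * 4356000 ^ (1 / 2 - 1 / r.toReal),
      by positivity, fun μ hμ lam hlam g hg hg2 hsupp =>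
        timeNorm_prop2_le_of_ne_top hq hq' hr2 hadm hμ hlam hg hg2 hsupp⟩

end Strichartz2D

/-- Frequency-localized Strichartz estimate in dimension two: for admissible
`(q,r)` with `2/q = 2(1/2 − 1/r)`, there is `C = C(q,r)`, independent of `μ ∈ (0,1]` and
`λ > 0`, such that `‖S_{μ,2}(t) P_λ f‖_{L^q_t L^r_x} ≤ C (μ^{-1/2} ⟨√μ λ⟩^{3/2})^{1/2−1/r}
‖P_λ f‖_{L^2}`. -/
theorem strichartz_2d (χ : ℝ → ℝ) (hχ : ContDiff ℝ (⊤ : ℕ∞) χ)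
    (hsupp : Function.support χ ⊆ Set.Ioo (-2 : ℝ) 2)
    (hone : ∀ s ∈ Set.Icc (-1 : ℝ) 1, χ s = 1)
    (q r : ℝ≥0∞) (hq : 2 < q) (hr2 : 2 ≤ r)
    (hadm : 2 / q = 2 * (1 / 2 - 1 / r)) :
    ∃ C : ℝ, 0 < C ∧
      ∀ μ : ℝ, 0 < μ → μ ≤ 1 → ∀ lam : ℝ, 0 < lam → ∀ f : 𝓢(E2, ℂ),
        timeNorm q (fun t => eLpNorm (prop2 μ t (proj2 χ lam ⇑f)) r volume)
          ≤ ENNReal.ofReal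
              (C * (μ ^ (-(1 : ℝ) / 2) *
                  jap (Real.sqrt μ * lam) ^ ((3 : ℝ) / 2)) ^ ((1 : ℝ) / 2 - 1 / r.toReal)) *
            eLpNorm (proj2 χ lam ⇑f) 2 volume := by
  obtain ⟨C, hC, hle⟩ := strichartz_2d_general hq hr2 hadm
  refine ⟨C, hC, fun μ hμ _ lam hlam f => ?_⟩
  obtain ⟨g, hg, hfreq⟩ := exists_schwartzMap_eq_proj2 hχ hsupp hone hlam f
  exact hg ▸ hle μ hμ lam hlam g g.integrable (g.memLp 2) hfreq
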